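/- arXiv:1803.11324 — 2 statements merged into one kernel-verified Lean document; each statement's English description precedes it below -/
import Mathlib

section
/- Let α > -1 and β > -1 be real numbers. For each N ∈ ℕ, let H_N be the (N+1)×(N+1) real symmetric Hankel matrix whose (m,n)-entry (0 ≤ m,n ≤ N) is Γ(α+m+n+1)·Γ(β+1)/Γ(α+β+m+n+2), and let λ_N be the smallest eigenvalue of H_N. Then as N → ∞, λ_N / [ 2^(15/4) · π^(3/2) · (1+√2)^(−2α) · (1+1/√2)^(−2β) · N^(1/2) · (1+√2)^(−4(N+1)) ] tends to 1. -/
/-!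
Let `B` be the lower triangular matrix whose rows are the coefficients of the orthonormal Jacobi
polynomials on `[0,1]`. Orthonormality says `B H Bᵀ = 1`, so `H⁻¹ = Bᵀ B`, and `1 / λ_N` is the
largest eigenvalue of `Bᵀ B`. By `eigen_bounds` it is at most the trace `∑ |row j|²`, and at least
`∑ ⟨row j, row N⟩² / |row N|²`. The two bounds agree to leading order because, asymptotically, `B`
is a matrix of rank one.

Indeed, the coefficients alternate in sign, and their moduli are the Legendre coefficients
`C(n,m) C(n+m,m)` times Gamma quotients of power growth (`coeffAbs_eq`). By Stirling they have the
size `exp (n * ent (m / n))`, where `ent` has a quadratic maximum `log ρ`, `ρ = (1+√2)²`, at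
`1/√2`. The method of Laplace (`laplace`) gives `|row n|² ~ D ρ^{2n} / √n` (`rowSq_tendsto`), all of
it carried by the indices `m` with `m / n` close to `1/√2`. For such `m` the rows `n - i` and `n` are
proportional with factor `ρ^{-i}` (`coeffAbs_sub_tendsto`), so that
`⟨row (N-i), row N⟩ ~ D ρ^{2N-i} / √N`, of which only the lower bound is needed (`cross_lower`). Both
bounds are then geometric sums with ratio `ρ^{-2}`, and `λ_N ~ (1 - ρ^{-2}) / D * √N ρ^{-2N}`
(`trace_tendsto`, `lam_tendsto`). The value of `D` comes from the Stirling and Gauss constants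
(`dlim_eq`, `const_eq`).
-/

open Filter

namespace JacobiHankel

/-! ### Eigenvalue bounds from orthonormal polynomials -/

open Matrix in
/-- Two-sided control of the smallest eigenvalue `lam` of a Hankel matrix `H` of a sequence `h`,
given the coefficients `b n m` of orthonormal polynomials for `h` (orthonormality is stated against
monomials). With `B = (b n m)` one has `B H Bᵀ = 1`, hence `H⁻¹ = Bᵀ B`. The first bound says that
the trace of `Bᵀ B` dominates its largest eigenvalue `lam⁻¹`; the second is the Rayleigh quotient
of `H` at `Bᵀ B u`, where `u` is the last row of `B`. -/
theorem eigen_bounds (h : ℕ → ℝ) (b : ℕ → ℕ → ℝ) (N : ℕ)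
    (hb0 : ∀ n m, n < m → b n m = 0)
    (horth : ∀ n k, k < n → ∑ m ∈ Finset.range (n + 1), b n m * h (m + k) = 0)
    (hnorm : ∀ n, b n n * ∑ m ∈ Finset.range (n + 1), b n m * h (m + n) = 1)
    (H : Matrix (Fin (N + 1)) (Fin (N + 1)) ℝ)
    (hH : ∀ m n : Fin (N + 1), H m n = h ((m : ℕ) + (n : ℕ)))
    (lam : ℝ) (hmem : lam ∈ spectrum ℝ H) (hmin : ∀ μ ∈ spectrum ℝ H, lam ≤ μ) :
    1 ≤ lam * ∑ j ∈ Finset.range (N + 1), ∑ m ∈ Finset.range (N + 1), b j m ^ 2 ∧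
    lam * ∑ j ∈ Finset.range (N + 1), (∑ m ∈ Finset.range (N + 1), b j m * b N m) ^ 2 ≤
      ∑ m ∈ Finset.range (N + 1), b N m ^ 2 := by
  set B : Matrix (Fin (N + 1)) (Fin (N + 1)) ℝ := Matrix.of fun i j => b i j with hB
  have hsymm : Hᵀ = H := by
    ext i j; rw [Matrix.transpose_apply, hH, hH, add_comm]
  have hBH : ∀ n k : Fin (N + 1), (B * H) n k
      = ∑ m ∈ Finset.range ((n : ℕ) + 1), b n m * h (m + k) := by
    intro n k
    rw [Matrix.mul_apply]
    have : ∑ j : Fin (N + 1), B n j * H j k = ∑ j : Fin (N + 1), b n j * h ((j : ℕ) + k) := by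
      refine Finset.sum_congr rfl fun j _ => ?_
      rw [hH]; rfl
    rw [this, Fin.sum_univ_eq_sum_range (fun j => b n j * h (j + k)) (N + 1)]
    symm
    apply Finset.sum_subset
    · intro x hx; simp only [Finset.mem_range] at *; omega
    · intro x _ hx
      rw [hb0 n x (by simp only [Finset.mem_range] at hx; omega), zero_mul]
  -- `B * H` is upper triangular by orthogonality and so is `Bᵀ`: the product is `0` below the
  -- diagonal and only one term survives on it. Symmetry takes care of the rest.
  have hlow : ∀ n j : Fin (N + 1), j < n → (B * H * Bᵀ) n j = 0 := by
    intro n j hjn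
    rw [Matrix.mul_apply]
    refine Finset.sum_eq_zero fun k _ => ?_
    rw [hBH, Matrix.transpose_apply]
    rcases lt_or_ge (j : ℕ) (k : ℕ) with hk | hk
    · have : B j k = 0 := hb0 _ _ hk
      rw [this, mul_zero]
    · rw [horth n k (lt_of_le_of_lt hk hjn), zero_mul]
  have hdiag : ∀ n : Fin (N + 1), (B * H * Bᵀ) n n = 1 := by
    intro n
    rw [Matrix.mul_apply, Finset.sum_eq_single n]
    · rw [hBH, Matrix.transpose_apply, mul_comm]; exact hnorm n
    · intro k _ hk
      rw [hBH, Matrix.transpose_apply]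
      rcases lt_or_gt_of_ne (fun h => hk (Fin.ext h) : (k : ℕ) ≠ n) with h1 | h1
      · rw [horth n k h1, zero_mul]
      · have : B n k = 0 := hb0 _ _ h1
        rw [this, mul_zero]
    · simp
  have hsym2 : (B * H * Bᵀ)ᵀ = B * H * Bᵀ := by
    rw [Matrix.transpose_mul, Matrix.transpose_mul, Matrix.transpose_transpose, hsymm,
      Matrix.mul_assoc]
  have hone : B * H * Bᵀ = 1 := by
    ext i j
    rcases lt_trichotomy i j with h1 | h1 | h1
    · rw [← hsym2, Matrix.transpose_apply, hlow j i h1, Matrix.one_apply_ne h1.ne]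
    · subst h1; rw [hdiag, Matrix.one_apply_eq]
    · rw [hlow i j h1, Matrix.one_apply_ne h1.ne']
  have hHM : H * (Bᵀ * B) = 1 := by
    rw [Matrix.mul_assoc] at hone
    have := mul_eq_one_comm.mp hone
    rwa [Matrix.mul_assoc] at this
  have hMH : (Bᵀ * B) * H = 1 := mul_eq_one_comm.mp hHM
  have hMq : ∀ v : Fin (N + 1) → ℝ, v ⬝ᵥ ((Bᵀ * B) *ᵥ v) = (B *ᵥ v) ⬝ᵥ (B *ᵥ v) := by
    intro v
    rw [← Matrix.mulVec_mulVec, Matrix.dotProduct_mulVec, Matrix.vecMul_transpose]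
  have hBsq : ∀ v : Fin (N + 1) → ℝ, (B *ᵥ v) ⬝ᵥ (B *ᵥ v)
      = ∑ j : Fin (N + 1), (∑ m : Fin (N + 1), b j m * v m) ^ 2 := by
    intro v
    simp only [dotProduct, Matrix.mulVec, hB, Matrix.of_apply, sq]
  -- `lam` is a lower bound of the Rayleigh quotient, as `H - lam` has nonnegative spectrum.
  have hray : ∀ v : Fin (N + 1) → ℝ, lam * (v ⬝ᵥ v) ≤ v ⬝ᵥ (H *ᵥ v) := by
    have hHherm : H.IsHermitian := by
      rw [Matrix.IsHermitian, Matrix.conjTranspose_eq_transpose_of_trivial, hsymm]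
    have hps : (H - algebraMap ℝ _ lam).PosSemidef := by
      rw [Matrix.posSemidef_iff_isHermitian_and_spectrum_nonneg]
      refine ⟨?_, ?_⟩
      · apply hHherm.sub
        rw [Matrix.IsHermitian, Matrix.conjTranspose_eq_transpose_of_trivial,
          Matrix.algebraMap_eq_diagonal, Matrix.diagonal_transpose]
      · intro μ hμ
        have hμ' : μ + lam ∈ spectrum ℝ H := by
          have := (spectrum.add_mem_add_iff (s := lam)).mpr hμ
          rwa [add_sub_cancel] at this
        have := hmin _ hμ'
        simp only [Set.mem_ofPred_eq]
        linarith
    intro v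
    have := hps.dotProduct_mulVec_nonneg v
    rw [Matrix.sub_mulVec, dotProduct_sub, Algebra.algebraMap_eq_smul_one, Matrix.smul_mulVec,
      Matrix.one_mulVec, dotProduct_smul, smul_eq_mul, star_trivial] at this
    linarith
  obtain ⟨v, hv0, hv⟩ : ∃ v : Fin (N + 1) → ℝ, v ≠ 0 ∧ H *ᵥ v = lam • v := by
    rw [← Matrix.spectrum_toLin', ← Module.End.hasEigenvalue_iff_mem_spectrum] at hmem
    obtain ⟨v, hv⟩ := hmem.exists_hasEigenvector
    exact ⟨v, hv.2, by simpa using hv.apply_eq_smul⟩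
  have hvpos : 0 < v ⬝ᵥ v := by
    rcases (Finset.sum_nonneg fun i _ => mul_self_nonneg (v i) : 0 ≤ v ⬝ᵥ v).lt_or_eq with h1 | h1
    · exact h1
    · exact absurd (dotProduct_self_eq_zero.mp h1.symm) hv0
  -- The eigenvector equation read as `v = lam • (Bᵀ B v)` and paired with `v`.
  have hvq : v ⬝ᵥ v = lam * ((B *ᵥ v) ⬝ᵥ (B *ᵥ v)) := by
    rw [← hMq]
    have : v = lam • ((Bᵀ * B) *ᵥ v) := by
      rw [← Matrix.mulVec_smul, ← hv, Matrix.mulVec_mulVec, hMH, Matrix.one_mulVec]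
    calc v ⬝ᵥ v = v ⬝ᵥ (lam • ((Bᵀ * B) *ᵥ v)) := by rw [← this]
      _ = _ := by rw [dotProduct_smul, smul_eq_mul]
  have hqnn : 0 ≤ (B *ᵥ v) ⬝ᵥ (B *ᵥ v) := Finset.sum_nonneg fun i _ => mul_self_nonneg _
  have hlam : 0 < lam := by
    by_contra hcon
    push Not at hcon
    nlinarith [mul_nonneg_of_nonpos_of_nonpos hcon (neg_nonpos.mpr hqnn)]
  constructor
  · have hCS : (B *ᵥ v) ⬝ᵥ (B *ᵥ v) ≤
        (∑ j ∈ Finset.range (N + 1), ∑ m ∈ Finset.range (N + 1), b j m ^ 2) * (v ⬝ᵥ v) := by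
      rw [hBsq, ← Fin.sum_univ_eq_sum_range (fun j => ∑ m ∈ Finset.range (N + 1), b j m ^ 2),
        Finset.sum_mul]
      refine Finset.sum_le_sum fun j _ => ?_
      rw [← Fin.sum_univ_eq_sum_range (fun m => b j m ^ 2)]
      refine (Finset.sum_mul_sq_le_sq_mul_sq _ _ _).trans_eq ?_
      simp only [dotProduct, sq]
    have h2 : v ⬝ᵥ v ≤ (lam * ∑ j ∈ Finset.range (N + 1), ∑ m ∈ Finset.range (N + 1), b j m ^ 2)
        * (v ⬝ᵥ v) := by
      calc v ⬝ᵥ v = lam * ((B *ᵥ v) ⬝ᵥ (B *ᵥ v)) := hvq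
        _ ≤ lam * ((∑ j ∈ Finset.range (N + 1), ∑ m ∈ Finset.range (N + 1), b j m ^ 2) *
              (v ⬝ᵥ v)) := by gcongr
        _ = _ := by ring
    exact le_of_mul_le_mul_right (by rwa [one_mul]) hvpos
  · set u : Fin (N + 1) → ℝ := fun m => b N m with hu
    set w := (Bᵀ * B) *ᵥ u with hw
    have hq : (B *ᵥ u) ⬝ᵥ (B *ᵥ u)
        = ∑ j ∈ Finset.range (N + 1), (∑ m ∈ Finset.range (N + 1), b j m * b N m) ^ 2 := by
      rw [hBsq, ← Fin.sum_univ_eq_sum_range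
        (fun j => (∑ m ∈ Finset.range (N + 1), b j m * b N m) ^ 2)]
      refine Finset.sum_congr rfl fun j _ => ?_
      rw [← Fin.sum_univ_eq_sum_range (fun m => b j m * b N m)]
    have huu : u ⬝ᵥ u = ∑ m ∈ Finset.range (N + 1), b N m ^ 2 := by
      rw [← Fin.sum_univ_eq_sum_range (fun m => b N m ^ 2)]
      simp only [dotProduct, sq, hu]
    -- Since `H w = u`, the Rayleigh quotient of `w` is `(u ⬝ w) / (w ⬝ w) = q / (w ⬝ w)`, and
    -- Cauchy–Schwarz bounds `w ⬝ w` from below by `q ^ 2 / (u ⬝ u)`.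
    rw [← hq, ← huu]
    set q := (B *ᵥ u) ⬝ᵥ (B *ᵥ u) with hqdef
    have hq0 : 0 ≤ q := Finset.sum_nonneg fun i _ => mul_self_nonneg _
    have huu0 : 0 ≤ u ⬝ᵥ u := Finset.sum_nonneg fun i _ => mul_self_nonneg _
    have huw : u ⬝ᵥ w = q := hMq u
    have hwH : w ⬝ᵥ (H *ᵥ w) = q := by
      rw [hw, Matrix.mulVec_mulVec, hHM, Matrix.one_mulVec, dotProduct_comm]; exact huw
    have h1 : lam * (w ⬝ᵥ w) ≤ q := hwH ▸ hray w
    have h2 : q ^ 2 ≤ (u ⬝ᵥ u) * (w ⬝ᵥ w) := by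
      rw [← huw]
      refine (Finset.sum_mul_sq_le_sq_mul_sq _ _ _).trans_eq ?_
      simp only [dotProduct, sq]
    rcases hq0.eq_or_lt with h0 | h0
    · rw [← h0, mul_zero]; exact huu0
    · refine le_of_mul_le_mul_right ?_ h0
      calc lam * q * q = lam * q ^ 2 := by ring
        _ ≤ lam * ((u ⬝ᵥ u) * (w ⬝ᵥ w)) := by gcongr
        _ = (u ⬝ᵥ u) * (lam * (w ⬝ᵥ w)) := by ring
        _ ≤ (u ⬝ᵥ u) * q := by gcongr

end JacobiHankel

namespace JacobiHankel

/-! ### Orthonormal Jacobi polynomials on `[0,1]` -/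

theorem gamma_add_nat {x : ℝ} (hx : 0 < x) (n : ℕ) :
    Real.Gamma (x + n) = (ascPochhammer ℝ n).eval x * Real.Gamma x := by
  induction n with
  | zero => simp
  | succ n ih =>
    rw [ascPochhammer_succ_eval, Nat.cast_succ, ← add_assoc,
      Real.Gamma_add_one (by positivity), ih]
    ring

/-- An alternating binomial sum is an `n`-th forward difference. -/
theorem alt_sum_eq (g : ℝ → ℝ) (n : ℕ) (y : ℝ) :
    ∑ m ∈ Finset.range (n + 1), (-1 : ℝ) ^ m * (n.choose m : ℝ) * g (y + m)
      = (-1) ^ n * (fwdDiff (1 : ℝ))^[n] g y := by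
  rw [fwdDiff_iter_eq_sum_shift, Finset.mul_sum]
  refine Finset.sum_congr rfl fun m hm => ?_
  have hm' : m ≤ n := by simpa [Nat.lt_succ_iff] using hm
  have : (-1 : ℝ) ^ n * (-1) ^ (n - m) = (-1) ^ m := by
    rw [← pow_add, show n + (n - m) = 2 * (n - m) + m by omega, pow_add, pow_mul]
    simp
  rw [zsmul_eq_mul, nsmul_eq_mul, mul_one]
  push_cast
  rw [← this]
  ring

/-- The `n`-th forward difference kills polynomials of degree below `n`. -/
theorem alt_sum_poly {P : Polynomial ℝ} {n : ℕ} (hP : P.natDegree < n) :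
    ∑ m ∈ Finset.range (n + 1), (-1 : ℝ) ^ m * (n.choose m : ℝ) * P.eval (m : ℝ) = 0 := by
  have := alt_sum_eq P.eval n 0
  simp only [zero_add] at this
  rw [this, Polynomial.fwdDiff_iter_eq_zero_of_degree_lt hP]
  simp

theorem fwdDiff_inv (n : ℕ) : ∀ s : ℝ, 0 < s → (fwdDiff (1 : ℝ))^[n] (fun x : ℝ => x⁻¹) s
    = (-1) ^ n * (n.factorial * Real.Gamma s / Real.Gamma (s + n + 1)) := by
  induction n with
  | zero =>
    intro s hs
    have := (Real.Gamma_pos_of_pos hs).ne'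
    simp only [Function.iterate_zero, id_eq, pow_zero, Nat.factorial_zero, Nat.cast_one,
      Nat.cast_zero, add_zero, Real.Gamma_add_one hs.ne']
    field_simp
  | succ n ih =>
    intro s hs
    rw [Function.iterate_succ_apply', fwdDiff, ih s hs, ih (s + 1) (by positivity),
      Real.Gamma_add_one hs.ne']
    have h1 : Real.Gamma (s + 1 + n + 1) = (s + n + 1) * Real.Gamma (s + n + 1) := by
      rw [← Real.Gamma_add_one (by positivity)]; ring_nf
    have h2 : Real.Gamma (s + (n + 1 : ℕ) + 1) = (s + n + 1) * Real.Gamma (s + n + 1) := by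
      rw [← h1]; push_cast; ring_nf
    have h3 : Real.Gamma (s + n + 1) ≠ 0 := (Real.Gamma_pos_of_pos (by positivity)).ne'
    have h4 : s + n + 1 ≠ 0 := by positivity
    rw [h1, h2, Nat.factorial_succ]
    push_cast
    field_simp
    ring

theorem alt_sum_inv (n : ℕ) {s : ℝ} (hs : 0 < s) :
    ∑ m ∈ Finset.range (n + 1), (-1 : ℝ) ^ m * (n.choose m : ℝ) * (s + m)⁻¹
      = n.factorial * Real.Gamma s / Real.Gamma (s + n + 1) := by
  rw [alt_sum_eq (fun x => x⁻¹) n s, fwdDiff_inv n s hs, ← mul_assoc, ← mul_pow]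
  simp

theorem ascPochhammer_neg (n : ℕ) (β : ℝ) :
    (ascPochhammer ℝ n).eval (-β - n) = (-1) ^ n * (ascPochhammer ℝ n).eval (β + 1) := by
  have h1 := ascPochhammer_eval_neg_eq_descPochhammer (R := ℝ) (β + n) n
  have h2 := descPochhammer_eval_eq_ascPochhammer (R := ℝ) (β + n) n
  rw [show -β - (n : ℝ) = -(β + n) by ring, h1, h2]
  congr 2
  ring

/-- The `k`-th moment of the weight `x^α (1-x)^β` on `[0,1]`. -/
noncomputable def moment (α β : ℝ) (k : ℕ) : ℝ :=
  Real.Gamma (α + k + 1) * Real.Gamma (β + 1) / Real.Gamma (α + β + k + 2)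

/-- The square of the normalising constant of the degree `n ≥ 1` Jacobi polynomial, relative to the
unnormalised coefficients `(-1)^m C(n,m) Γ(n+m+α+β+1) / Γ(m+α+1)`. -/
noncomputable def normSq (α β : ℝ) (n : ℕ) : ℝ :=
  Real.Gamma (n + α + 1) * (2 * n + α + β + 1) /
    (Real.Gamma (n + β + 1) * n.factorial * Real.Gamma (n + α + β + 1))

/-- The modulus of the coefficient of `x^m` in the orthonormal Jacobi polynomial of degree `n`.
Degree `0` is treated apart because `Γ(α+β+1)` may hit a pole there. -/
noncomputable def coeffAbs (α β : ℝ) (n m : ℕ) : ℝ :=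
  if n = 0 then (if m = 0 then (√(moment α β 0))⁻¹ else 0)
  else √(normSq α β n) * (n.choose m * (Real.Gamma (n + m + α + β + 1) / Real.Gamma (m + α + 1)))

variable {α β : ℝ}

theorem moment_pos (hα : -1 < α) (hβ : -1 < β) (k : ℕ) : 0 < moment α β k := by
  have h1 : 0 < Real.Gamma (α + k + 1) := Real.Gamma_pos_of_pos (by
    have : (0 : ℝ) ≤ k := by positivity
    linarith)
  have h2 : 0 < Real.Gamma (β + 1) := Real.Gamma_pos_of_pos (by linarith)
  have h3 : 0 < Real.Gamma (α + β + k + 2) := Real.Gamma_pos_of_pos (by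
    have : (0 : ℝ) ≤ k := by positivity
    linarith)
  unfold moment
  positivity

theorem normSq_pos (hα : -1 < α) (hβ : -1 < β) {n : ℕ} (hn : 1 ≤ n) : 0 < normSq α β n := by
  have hn' : (1 : ℝ) ≤ n := by exact_mod_cast hn
  have h1 : 0 < Real.Gamma (n + α + 1) := Real.Gamma_pos_of_pos (by linarith)
  have h2 : 0 < Real.Gamma (n + β + 1) := Real.Gamma_pos_of_pos (by linarith)
  have h3 : 0 < Real.Gamma (n + α + β + 1) := Real.Gamma_pos_of_pos (by linarith)
  have h4 : 0 < 2 * n + α + β + 1 := by linarith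
  unfold normSq
  positivity

theorem coeffAbs_zero_of_lt {n m : ℕ} (h : n < m) : coeffAbs α β n m = 0 := by
  unfold coeffAbs
  split_ifs with h1 h2
  · omega
  · rfl
  · rw [Nat.choose_eq_zero_of_lt h]; simp

theorem coeffAbs_of_pos {n : ℕ} (hn : 1 ≤ n) (m : ℕ) : coeffAbs α β n m =
    √(normSq α β n) * (n.choose m * (Real.Gamma (n + m + α + β + 1) / Real.Gamma (m + α + 1))) := by
  rw [coeffAbs, if_neg (by omega)]

/-- Orthogonality before normalisation: after cancelling Gamma factors the sum is an `n`-th finite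
difference of a polynomial of degree `n - 1`. -/
theorem orth_aux (hα : -1 < α) (hβ : -1 < β) {n k : ℕ} (hk : k < n) :
    ∑ m ∈ Finset.range (n + 1), (-1 : ℝ) ^ m * (n.choose m : ℝ) *
      (Real.Gamma (n + m + α + β + 1) / Real.Gamma (m + α + 1)) * moment α β (m + k) = 0 := by
  set P : Polynomial ℝ := ((ascPochhammer ℝ k).comp (Polynomial.X + Polynomial.C (α + 1))) *
    ((ascPochhammer ℝ (n - k - 1)).comp (Polynomial.X + Polynomial.C (α + β + k + 2))) with hP
  have hdeg : P.natDegree < n := by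
    refine (Polynomial.natDegree_mul_le).trans_lt ?_
    rw [Polynomial.natDegree_comp, Polynomial.natDegree_comp, ascPochhammer_natDegree,
      ascPochhammer_natDegree, Polynomial.natDegree_X_add_C, Polynomial.natDegree_X_add_C]
    omega
  have := alt_sum_poly hdeg
  rw [← mul_zero (Real.Gamma (β + 1)), ← this, Finset.mul_sum]
  refine Finset.sum_congr rfl fun m _ => ?_
  have hm : (0 : ℝ) ≤ m := by positivity
  have hk0 : (0 : ℝ) ≤ k := by positivity
  have e1 : Real.Gamma (α + (m + k : ℕ) + 1)
      = (ascPochhammer ℝ k).eval (m + (α + 1)) * Real.Gamma (m + α + 1) := by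
    have := gamma_add_nat (x := m + (α + 1)) (by linarith) k
    rw [show (α + (m + k : ℕ) + 1 : ℝ) = m + (α + 1) + k by push_cast; ring, this,
      show (m + α + 1 : ℝ) = m + (α + 1) by ring]
  have e2 : Real.Gamma (n + m + α + β + 1) = (ascPochhammer ℝ (n - k - 1)).eval
      (m + (α + β + k + 2)) * Real.Gamma (α + β + (m + k : ℕ) + 2) := by
    have := gamma_add_nat (x := m + (α + β + k + 2)) (by linarith) (n - k - 1)
    have hc : ((n - k - 1 : ℕ) : ℝ) = n - k - 1 := by
      rw [Nat.cast_sub (by omega), Nat.cast_sub hk.le]; simp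
    rw [hc] at this
    rw [show (n + m + α + β + 1 : ℝ) = m + (α + β + k + 2) + (n - k - 1) by ring, this]
    congr 2
    push_cast; ring
  have g1 : Real.Gamma (m + α + 1) ≠ 0 := (Real.Gamma_pos_of_pos (by linarith)).ne'
  have g2 : Real.Gamma (α + β + (m + k : ℕ) + 2) ≠ 0 :=
    (Real.Gamma_pos_of_pos (by push_cast; linarith)).ne'
  rw [moment, e1, e2, hP, Polynomial.eval_mul, Polynomial.eval_comp, Polynomial.eval_comp]
  simp only [Polynomial.eval_add, Polynomial.eval_X, Polynomial.eval_C]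
  field_simp

/-- The diagonal case: the polynomial is now divided by the linear factor `X + n + α + β + 1`, and
only the remainder of this division contributes. -/
theorem norm_aux (hα : -1 < α) (hβ : -1 < β) {n : ℕ} (hn : 1 ≤ n) :
    ∑ m ∈ Finset.range (n + 1), (-1 : ℝ) ^ m * (n.choose m : ℝ) *
      (Real.Gamma (n + m + α + β + 1) / Real.Gamma (m + α + 1)) * moment α β (m + n) =
      (-1) ^ n * Real.Gamma (n + β + 1) * n.factorial * Real.Gamma (n + α + β + 1)
        / Real.Gamma (2 * n + α + β + 2) := by
  have hn' : (1 : ℝ) ≤ n := by exact_mod_cast hn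
  set s : ℝ := n + α + β + 1 with hs
  have hs0 : 0 < s := by rw [hs]; linarith
  set Q : Polynomial ℝ := (ascPochhammer ℝ n).comp (Polynomial.X + Polynomial.C (α + 1)) with hQ
  obtain ⟨Q1, hQ1⟩ := Polynomial.X_sub_C_dvd_sub_C_eval (a := -s) (p := Q)
  have hQd : Q.natDegree = n := by
    rw [hQ, Polynomial.natDegree_comp, ascPochhammer_natDegree, Polynomial.natDegree_X_add_C,
      mul_one]
  have hdeg : Q1.natDegree < n := by
    rcases eq_or_ne Q1 0 with h0 | h0
    · rw [h0, Polynomial.natDegree_zero]; omega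
    · have h2 := congrArg Polynomial.natDegree hQ1
      rw [Polynomial.natDegree_sub_C, hQd, Polynomial.natDegree_mul (Polynomial.X_sub_C_ne_zero _) h0,
        Polynomial.natDegree_X_sub_C] at h2
      omega
  have hev : ∀ x : ℝ, Q.eval x = Q.eval (-s) + (s + x) * Q1.eval x := by
    intro x
    have := congrArg (Polynomial.eval x) hQ1
    simp only [Polynomial.eval_sub, Polynomial.eval_C, Polynomial.eval_mul, Polynomial.eval_X] at this
    linarith
  have hterm : ∀ m ∈ Finset.range (n + 1), (-1 : ℝ) ^ m * (n.choose m : ℝ) *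
      (Real.Gamma (s + m) / Real.Gamma (m + α + 1)) * moment α β (m + n) =
      Real.Gamma (β + 1) * (Q.eval (-s) * ((-1 : ℝ) ^ m * (n.choose m : ℝ) * (s + m)⁻¹)
        + (-1 : ℝ) ^ m * (n.choose m : ℝ) * Q1.eval (m : ℝ)) := by
    intro m _
    have hm : (0 : ℝ) ≤ m := by positivity
    have e1 : Real.Gamma (α + (m + n : ℕ) + 1) = Q.eval (m : ℝ) * Real.Gamma (m + α + 1) := by
      have := gamma_add_nat (x := m + (α + 1)) (by linarith) n
      rw [show (α + (m + n : ℕ) + 1 : ℝ) = m + (α + 1) + n by push_cast; ring, this,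
        show (m + α + 1 : ℝ) = m + (α + 1) by ring, hQ, Polynomial.eval_comp]
      simp
    have e2 : Real.Gamma (α + β + (m + n : ℕ) + 2) = (s + m) * Real.Gamma (s + m) := by
      rw [← Real.Gamma_add_one (by positivity), hs]; push_cast; ring_nf
    have g1 : Real.Gamma (m + α + 1) ≠ 0 := (Real.Gamma_pos_of_pos (by linarith)).ne'
    have g2 : Real.Gamma (s + m) ≠ 0 := (Real.Gamma_pos_of_pos (by positivity)).ne'
    have g3 : s + m ≠ 0 := by positivity
    rw [moment, e1, e2, hev]
    field_simp
  have hre : ∀ m : ℕ, (n + m + α + β + 1 : ℝ) = s + m := fun m => by rw [hs]; ring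
  simp only [hre]
  rw [Finset.sum_congr rfl hterm, ← Finset.mul_sum, Finset.sum_add_distrib, ← Finset.mul_sum,
    alt_sum_inv n hs0, alt_sum_poly hdeg, add_zero]
  have hQs : Q.eval (-s) = (-1) ^ n * (ascPochhammer ℝ n).eval (β + 1) := by
    rw [← ascPochhammer_neg, hQ, Polynomial.eval_comp]
    simp only [Polynomial.eval_add, Polynomial.eval_X, Polynomial.eval_C]
    congr 1
    rw [hs]; ring
  have hG := gamma_add_nat (x := β + 1) (by linarith) n
  rw [hQs, show (n + β + 1 : ℝ) = β + 1 + n by ring, hG,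
    show (2 * n + α + β + 2 : ℝ) = s + n + 1 by rw [hs]; ring]
  ring

/-- The coefficients of the orthonormal Jacobi polynomials on `[0,1]`, with the sign normalised so
that the constant coefficient is positive. -/
noncomputable def coeff (α β : ℝ) (n m : ℕ) : ℝ := (-1) ^ m * coeffAbs α β n m

theorem coeff_orth (hα : -1 < α) (hβ : -1 < β) {n k : ℕ} (hk : k < n) :
    ∑ m ∈ Finset.range (n + 1), coeff α β n m * moment α β (m + k) = 0 := by
  rw [← mul_zero √(normSq α β n), ← orth_aux hα hβ hk, Finset.mul_sum]
  refine Finset.sum_congr rfl fun m _ => ?_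
  rw [coeff, coeffAbs_of_pos (by omega)]
  ring

/-- Orthonormality on the diagonal: by `coeff_orth` only the leading monomial of the second factor
contributes to the norm. -/
theorem coeff_norm (hα : -1 < α) (hβ : -1 < β) (n : ℕ) :
    coeff α β n n * ∑ m ∈ Finset.range (n + 1), coeff α β n m * moment α β (m + n) = 1 := by
  rcases Nat.eq_zero_or_pos n with rfl | hn
  · have := moment_pos hα hβ 0
    simp only [zero_add, Finset.range_one, Finset.sum_singleton, coeff, coeffAbs, if_true,
      pow_zero, one_mul, add_zero]
    have h2 := Real.mul_self_sqrt this.le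
    have h3 : √(moment α β 0) ≠ 0 := (Real.sqrt_pos.mpr this).ne'
    field_simp
    rw [sq, h2]
  · have hn' : (1 : ℝ) ≤ n := by exact_mod_cast hn
    have hsum : ∑ m ∈ Finset.range (n + 1), coeff α β n m * moment α β (m + n)
        = √(normSq α β n) * ((-1) ^ n * Real.Gamma (n + β + 1) * n.factorial *
          Real.Gamma (n + α + β + 1) / Real.Gamma (2 * n + α + β + 2)) := by
      rw [← norm_aux hα hβ hn, Finset.mul_sum]
      refine Finset.sum_congr rfl fun m _ => ?_
      rw [coeff, coeffAbs_of_pos hn]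
      ring
    have hG : Real.Gamma (2 * n + α + β + 2)
        = (2 * n + α + β + 1) * Real.Gamma (n + n + α + β + 1) := by
      rw [show (n + n + α + β + 1 : ℝ) = 2 * n + α + β + 1 by ring,
        ← Real.Gamma_add_one (by linarith)]
      ring_nf
    rw [hsum, coeff, coeffAbs_of_pos hn, hG, Nat.choose_self]
    have h0 := normSq_pos hα hβ hn
    have h2 := Real.mul_self_sqrt h0.le
    have g1 : Real.Gamma (n + α + 1) ≠ 0 := (Real.Gamma_pos_of_pos (by linarith)).ne'
    have g2 : Real.Gamma (n + β + 1) ≠ 0 := (Real.Gamma_pos_of_pos (by linarith)).ne'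
    have g3 : Real.Gamma (n + α + β + 1) ≠ 0 := (Real.Gamma_pos_of_pos (by linarith)).ne'
    have g4 : Real.Gamma (n + n + α + β + 1) ≠ 0 := (Real.Gamma_pos_of_pos (by linarith)).ne'
    have g5 : (2 * n + α + β + 1 : ℝ) ≠ 0 := by linarith
    have g6 : (n.factorial : ℝ) ≠ 0 := by positivity
    have hsgn : ((-1 : ℝ) ^ n) * (-1) ^ n = 1 := by rw [← mul_pow]; simp
    calc _ = (((-1 : ℝ) ^ n) * (-1) ^ n) * (√(normSq α β n) * √(normSq α β n)) *
          (((1 : ℕ) : ℝ) * (Real.Gamma (n + n + α + β + 1) / Real.Gamma (n + α + 1)) *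
          (Real.Gamma (n + β + 1) * n.factorial * Real.Gamma (n + α + β + 1) /
            ((2 * n + α + β + 1) * Real.Gamma (n + n + α + β + 1)))) := by ring
      _ = 1 := by
        rw [hsgn, h2, normSq, Nat.cast_one]
        generalize Real.Gamma (n + n + α + β + 1) = g at *
        generalize (2 * n + α + β + 1 : ℝ) = x at *
        field_simp

end JacobiHankel

namespace JacobiHankel

open Topology Asymptotics

/-! ### The entropy function -/

/-- The location `1/√2` of the peak of `m/n`. -/
noncomputable def tz : ℝ := 1 / √2

/-- The exponential growth rate of the orthonormal polynomials at `-1`. -/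
noncomputable def rho : ℝ := (1 + √2) ^ 2

/-- The exponential rate of `C(n,m) C(n+m,m)` at `m = n t`. -/
noncomputable def ent (t : ℝ) : ℝ :=
  (1 + t) * Real.log (1 + t) - 2 * (t * Real.log t) - (1 - t) * Real.log (1 - t)

theorem sqrt2_sq : √2 ^ 2 = (2 : ℝ) := Real.sq_sqrt (by norm_num)

theorem sqrt2_pos : (0 : ℝ) < √2 := Real.sqrt_pos.mpr (by norm_num)

theorem tz_eq : tz = √2 / 2 := by
  rw [tz, div_eq_div_iff sqrt2_pos.ne' (by norm_num)]
  nlinarith [sqrt2_sq]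

theorem tz_sq : tz ^ 2 = 1 / 2 := by rw [tz_eq, div_pow, sqrt2_sq]; norm_num

theorem tz_gt : 7 / 10 < tz := by
  rw [tz_eq]; nlinarith [sqrt2_sq, sqrt2_pos]

theorem tz_lt : tz < 3 / 4 := by
  rw [tz_eq]; nlinarith [sqrt2_sq, sqrt2_pos]

theorem rho_gt : 1 < rho := by rw [rho]; nlinarith [sqrt2_sq, sqrt2_pos]

theorem rho_eq : rho = (1 + tz) / (1 - tz) := by
  have h1 : (1 - tz) ≠ 0 := by linarith [tz_lt]
  rw [eq_div_iff h1, rho, tz_eq]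
  nlinarith [sqrt2_sq, sqrt2_pos]

theorem ent_tz : ent tz = Real.log rho := by
  have h0 : 0 < tz := by linarith [tz_gt]
  have h1 : 0 < 1 - tz := by linarith [tz_lt]
  have h2 : 0 < 1 + tz := by linarith
  have h3 : 2 * Real.log tz = Real.log (1 + tz) + Real.log (1 - tz) := by
    rw [← Real.log_mul h2.ne' h1.ne', show (1 + tz) * (1 - tz) = tz ^ 2 by linarith [tz_sq],
      Real.log_pow]
    norm_num
  rw [rho_eq, Real.log_div h2.ne' h1.ne', ent]
  linear_combination (-tz) * h3

theorem continuous_ent : Continuous ent := by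
  unfold ent
  have h1 : Continuous fun t : ℝ => (1 + t) * Real.log (1 + t) :=
    Real.continuous_mul_log.comp (by fun_prop : Continuous fun t : ℝ => 1 + t)
  have h2 : Continuous fun t : ℝ => (1 - t) * Real.log (1 - t) :=
    Real.continuous_mul_log.comp (by fun_prop : Continuous fun t : ℝ => 1 - t)
  exact (h1.sub (continuous_const.mul Real.continuous_mul_log)).sub h2

theorem hasDerivAt_ent {t : ℝ} (h0 : 0 < t) (h1 : t < 1) :
    HasDerivAt ent (Real.log ((1 - t ^ 2) / t ^ 2)) t := by
  have e1 : HasDerivAt (fun t : ℝ => (1 + t) * Real.log (1 + t)) (Real.log (1 + t) + 1) t := by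
    have := (Real.hasDerivAt_mul_log (x := 1 + t) (by linarith)).comp t
      ((hasDerivAt_id t).const_add 1)
    simpa [Function.comp_def] using this
  have e2 : HasDerivAt (fun t : ℝ => (1 - t) * Real.log (1 - t)) (-(Real.log (1 - t) + 1)) t := by
    have := (Real.hasDerivAt_mul_log (x := 1 - t) (by linarith)).comp t
      ((hasDerivAt_id t).const_sub 1)
    simpa [Function.comp_def, add_comm] using this
  have e3 := Real.hasDerivAt_mul_log h0.ne'
  refine ((e1.sub (e3.const_mul 2)).sub e2).congr_deriv ?_
  rw [Real.log_div (by nlinarith) (by positivity), show 1 - t ^ 2 = (1 + t) * (1 - t) by ring,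
    Real.log_mul (by linarith) (by linarith), Real.log_pow]
  push_cast
  ring

/-- A global quadratic upper bound: `t ↦ ent t + (t - tz)² / 2` increases up to `tz` and decreases
after it, by elementary bounds on the logarithm in the derivative. -/
theorem ent_le {t : ℝ} (h0 : 0 ≤ t) (h1 : t ≤ 1) : ent t ≤ Real.log rho - (t - tz) ^ 2 / 2 := by
  set G : ℝ → ℝ := fun t => ent t + (t - tz) ^ 2 / 2 with hG
  have hGc : Continuous G := continuous_ent.add (by fun_prop)
  have hGd : ∀ t : ℝ, 0 < t → t < 1 →
      HasDerivAt G (Real.log ((1 - t ^ 2) / t ^ 2) + (t - tz)) t := by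
    intro t h0 h1
    have : HasDerivAt (fun t : ℝ => (t - tz) ^ 2 / 2) (t - tz) t := by
      refine ((((hasDerivAt_id t).sub_const tz).pow 2).div_const 2).congr_deriv ?_
      simp
    exact (hasDerivAt_ent h0 h1).add this
  have htz0 := tz_gt
  have htz1 := tz_lt
  have hGt : G tz = Real.log rho := by simp [hG, ent_tz]
  suffices h : G t ≤ G tz by
    rw [hGt] at h; simp only [hG] at h; linarith
  rcases le_total t tz with ht | ht
  · have : MonotoneOn G (Set.Icc 0 tz) := by
      apply monotoneOn_of_deriv_nonneg (convex_Icc _ _) hGc.continuousOn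
      · intro x hx
        rw [interior_Icc] at hx
        exact (hGd x hx.1 (by linarith [hx.2])).differentiableAt.differentiableWithinAt
      · intro x hx
        rw [interior_Icc] at hx
        have hx1 : x < 1 := by linarith [hx.2]
        have hx0 := hx.1
        rw [(hGd x hx.1 hx1).deriv]
        have hp : 0 < (1 - x ^ 2) / x ^ 2 := div_pos (by nlinarith) (by positivity)
        have hl := Real.one_sub_inv_le_log_of_pos hp
        have hq : 1 - ((1 - x ^ 2) / x ^ 2)⁻¹ = (1 - 2 * x ^ 2) / (1 - x ^ 2) := by
          have : (1 - x ^ 2) ≠ 0 := by nlinarith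
          field_simp
          ring
        have hr : 1 - 2 * x ^ 2 ≤ (1 - 2 * x ^ 2) / (1 - x ^ 2) := by
          rw [le_div_iff₀ (by nlinarith)]
          have : 0 ≤ 1 - 2 * x ^ 2 := by nlinarith [tz_sq, hx.2]
          nlinarith [sq_nonneg x]
        have hs : tz - x ≤ 1 - 2 * x ^ 2 := by nlinarith [tz_sq, hx.2]
        rw [hq] at hl
        linarith
    exact this ⟨h0, ht⟩ ⟨by linarith, le_rfl⟩ ht
  · have : AntitoneOn G (Set.Icc tz 1) := by
      apply antitoneOn_of_deriv_nonpos (convex_Icc _ _) hGc.continuousOn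
      · intro x hx
        rw [interior_Icc] at hx
        exact (hGd x (by linarith [hx.1]) hx.2).differentiableAt.differentiableWithinAt
      · intro x hx
        rw [interior_Icc] at hx
        have hx1 := hx.2
        have hx0 : 0 < x := by linarith [hx.1]
        rw [(hGd x hx0 hx1).deriv]
        have hp : 0 < (1 - x ^ 2) / x ^ 2 := div_pos (by nlinarith) (by positivity)
        have hl := Real.log_le_sub_one_of_pos hp
        have hq : (1 - x ^ 2) / x ^ 2 - 1 ≤ 1 - 2 * x ^ 2 := by
          rw [sub_le_iff_le_add, div_le_iff₀ (by positivity)]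
          have h3 : 0 ≤ 2 * x ^ 2 - 1 := by nlinarith [tz_sq, hx.1]
          have h4 : 0 ≤ 1 - x ^ 2 := by nlinarith
          nlinarith [mul_nonneg h3 h4]
        have hs : 1 - 2 * x ^ 2 ≤ tz - x := by nlinarith [tz_sq, hx.1]
        linarith
    exact this ⟨le_rfl, htz1.le.trans (by norm_num)⟩ ⟨ht, h1⟩ ht

/-- Second-order Taylor expansion of `x log x` at `a > 0`. -/
theorem mul_log_taylor {a : ℝ} (ha : 0 < a) :
    (fun d : ℝ => (a + d) * Real.log (a + d) - (a + d) * Real.log a - d - d ^ 2 / (2 * a))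
      =o[𝓝 0] fun d => d ^ 2 := by
  have hO : (fun d : ℝ => (a + d) * Real.log (a + d) - (a + d) * Real.log a - d - d ^ 2 / (2 * a))
      =O[𝓝 0] fun d => d ^ 3 := by
    refine IsBigO.of_bound (4 / a ^ 2) ?_
    have hev : ∀ᶠ d : ℝ in 𝓝 0, |d| < a / 2 := by
      have := Metric.ball_mem_nhds (0 : ℝ) (half_pos ha)
      filter_upwards [this] with d hd
      simpa using hd
    filter_upwards [hev] with d hd
    set u := d / a with hu
    have hdu : d = a * u := by rw [hu]; field_simp
    have hu1 : |u| < 1 / 2 := by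
      rw [hu, abs_div, abs_of_pos ha, div_lt_iff₀ ha]; linarith
    have hu2 := abs_lt.mp hu1
    have hlog := Real.abs_log_sub_add_sum_range_le (x := -u) (by rw [abs_neg]; linarith) 2
    simp only [Finset.sum_range_succ, Finset.sum_range_zero, abs_neg, sub_neg_eq_add] at hlog
    norm_num at hlog
    have hlog2 : |u| ^ 3 / (1 - |u|) ≤ 2 * |u| ^ 3 := by
      rw [div_le_iff₀ (by linarith)]
      nlinarith [pow_nonneg (abs_nonneg u) 3]
    set e := -u + u ^ 2 / 2 + Real.log (1 + u) with he
    have hE : |e| ≤ 2 * |u| ^ 3 := hlog.trans hlog2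
    have hla : Real.log (a + d) = Real.log a + Real.log (1 + u) := by
      rw [← Real.log_mul ha.ne' (by linarith), hdu]; ring_nf
    have hexp : (a + d) * Real.log (a + d) - (a + d) * Real.log a - d - d ^ 2 / (2 * a)
        = a * ((1 + u) * e - u ^ 3 / 2) := by
      rw [hla, show Real.log (1 + u) = e + u - u ^ 2 / 2 by rw [he]; ring, hdu]
      field_simp
      ring
    rw [hexp, Real.norm_eq_abs, Real.norm_eq_abs, abs_mul, abs_of_pos ha, hdu, abs_pow, abs_mul,
      abs_of_pos ha]
    have h3 : |(1 + u) * e - u ^ 3 / 2| ≤ 4 * |u| ^ 3 := by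
      refine (abs_sub _ _).trans ?_
      rw [abs_mul, abs_div, abs_pow, abs_of_pos (by linarith : (0 : ℝ) < 1 + u)]
      norm_num
      have : (1 + u) * |e| ≤ (3 / 2) * (2 * |u| ^ 3) := by gcongr; linarith
      nlinarith [pow_nonneg (abs_nonneg u) 3]
    calc a * |(1 + u) * e - u ^ 3 / 2| ≤ a * (4 * |u| ^ 3) := by gcongr
      _ = 4 / a ^ 2 * (a * |u|) ^ 3 := by field_simp
  exact hO.trans_isLittleO (isLittleO_pow_pow (by norm_num))

/-- Second-order Taylor expansion of `ent` at its maximum `tz`: the first derivative vanishes there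
and the second one is `-4√2`. -/
theorem ent_taylor :
    (fun d : ℝ => ent (tz + d) - Real.log rho + 2 * √2 * d ^ 2) =o[𝓝 0] fun d => d ^ 2 := by
  have h0 : 0 < tz := by linarith [tz_gt]
  have h1 : 0 < 1 - tz := by linarith [tz_lt]
  have h2 : 0 < 1 + tz := by linarith
  have k1 := mul_log_taylor h2
  have k2 := mul_log_taylor h0
  have k3 : (fun d : ℝ => (1 - tz + -d) * Real.log (1 - tz + -d) - (1 - tz + -d) * Real.log (1 - tz)
      - -d - (-d) ^ 2 / (2 * (1 - tz))) =o[𝓝 0] fun d => d ^ 2 := by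
    have hneg : Tendsto (fun d : ℝ => -d) (𝓝 0) (𝓝 0) := by
      simpa using (continuous_neg.tendsto (0 : ℝ))
    have := (mul_log_taylor h1).comp_tendsto hneg
    simpa [Function.comp_def] using this
  have k := (k1.sub (k2.const_mul_left 2)).sub k3
  refine k.congr_left fun d => ?_
  have h3 : 2 * Real.log tz = Real.log (1 + tz) + Real.log (1 - tz) := by
    rw [← Real.log_mul h2.ne' h1.ne', show (1 + tz) * (1 - tz) = tz ^ 2 by linarith [tz_sq],
      Real.log_pow]
    norm_num
  have hq : 1 / (2 * (1 + tz)) - 2 / (2 * tz) - 1 / (2 * (1 - tz)) = - (2 * √2) := by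
    have hs : √2 = 2 * tz := by rw [tz_eq]; ring
    rw [hs]
    have hz := tz_sq
    field_simp
    nlinarith
  rw [rho_eq, Real.log_div h2.ne' h1.ne', ent]
  rw [show 1 + (tz + d) = 1 + tz + d by ring, show 1 - (tz + d) = 1 - tz + -d by ring]
  linear_combination (-d ^ 2) * hq + (tz + d) * h3

end JacobiHankel

namespace JacobiHankel

open Topology Asymptotics

/-! ### Binomial weights near the peak -/

/-- The filter describing pairs `(n, m)` with `n → ∞` and `m / n → 1/√2`. -/
noncomputable def peak : Filter (ℕ × ℕ) :=
  comap Prod.fst atTop ⊓ comap (fun p : ℕ × ℕ => (p.2 : ℝ) / p.1) (𝓝 tz)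

theorem tendsto_peak {ι : Type*} {l : Filter ι} {f g : ι → ℕ} (hf : Tendsto f l atTop)
    (hg : Tendsto (fun i => (g i : ℝ) / f i) l (𝓝 tz)) :
    Tendsto (fun i => (f i, g i)) l peak := by
  rw [peak, tendsto_inf]
  exact ⟨tendsto_comap_iff.mpr hf, tendsto_comap_iff.mpr hg⟩

theorem peak_fst : Tendsto (Prod.fst : ℕ × ℕ → ℕ) peak atTop :=
  tendsto_comap.mono_left inf_le_left

theorem peak_cast : Tendsto (fun p : ℕ × ℕ => (p.1 : ℝ)) peak atTop :=
  tendsto_natCast_atTop_atTop.comp peak_fst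

theorem peak_ratio : Tendsto (fun p : ℕ × ℕ => (p.2 : ℝ) / p.1) peak (𝓝 tz) :=
  tendsto_comap.mono_left inf_le_right

theorem peak_lt : ∀ᶠ p : ℕ × ℕ in peak, 0 < p.1 ∧ 0 < p.2 ∧ p.2 < p.1 := by
  filter_upwards [peak_fst.eventually_gt_atTop 0,
    peak_ratio.eventually (lt_mem_nhds (show (0 : ℝ) < tz by linarith [tz_gt])),
    peak_ratio.eventually (gt_mem_nhds (show tz < 1 by linarith [tz_lt]))] with p h1 h2 h3
  have h1' : (0 : ℝ) < p.1 := by exact_mod_cast h1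
  refine ⟨h1, ?_, ?_⟩
  · by_contra hcon
    have : p.2 = 0 := by omega
    rw [this] at h2; simp at h2
  · rw [div_lt_one h1'] at h3; exact_mod_cast h3

theorem peak_snd_cast : Tendsto (fun p : ℕ × ℕ => (p.2 : ℝ)) peak atTop := by
  refine (peak_cast.atTop_mul_pos (show (0 : ℝ) < tz by linarith [tz_gt]) peak_ratio).congr' ?_
  filter_upwards [peak_lt] with p hp
  have : (p.1 : ℝ) ≠ 0 := by have := hp.1; positivity
  field_simp

theorem peak_snd : Tendsto (Prod.snd : ℕ × ℕ → ℕ) peak atTop :=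
  tendsto_natCast_atTop_iff.mp peak_snd_cast

theorem peak_add : Tendsto (fun p : ℕ × ℕ => p.1 + p.2) peak atTop :=
  tendsto_atTop_mono (fun _ => Nat.le_add_right _ _) peak_fst

theorem peak_sub : Tendsto (fun p : ℕ × ℕ => p.1 - p.2) peak atTop := by
  refine (tendsto_natCast_atTop_iff (R := ℝ)).mp ?_
  refine (peak_cast.atTop_mul_pos (show (0 : ℝ) < 1 - tz by linarith [tz_lt])
    (peak_ratio.const_sub 1)).congr' ?_
  filter_upwards [peak_lt] with p hp
  have : (p.1 : ℝ) ≠ 0 := by have := hp.1; positivity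
  simp only [Nat.cast_sub hp.2.2.le]
  field_simp

theorem peak_shift (i : ℕ) : Tendsto (fun p : ℕ × ℕ => (p.1 - i, p.2)) peak peak := by
  refine tendsto_peak ((tendsto_sub_atTop_nat i).comp peak_fst) ?_
  have h1 : Tendsto (fun p : ℕ × ℕ => ((p.2 : ℝ) / p.1) / (1 - (i : ℝ) / p.1)) peak
      (𝓝 (tz / (1 - 0))) := by
    refine peak_ratio.div (tendsto_const_nhds.sub ?_) (by norm_num)
    exact tendsto_const_nhds.div_atTop peak_cast
  rw [sub_zero, div_one] at h1
  refine h1.congr' ?_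
  filter_upwards [peak_fst.eventually_gt_atTop i] with p hp
  have h2 : (i : ℝ) < p.1 := by exact_mod_cast hp
  have h3 : (0 : ℝ) < p.1 := lt_of_le_of_lt (by positivity) h2
  rw [Nat.cast_sub hp.le, div_div, mul_sub, mul_one, mul_div_cancel₀ _ h3.ne']

/-- The coefficient of the shifted Legendre polynomial, `C(n,m) C(n+m,m)`. -/
noncomputable def leg (n m : ℕ) : ℝ := (n.choose m : ℝ) * ((n + m).choose m : ℝ)

theorem leg_nonneg (n m : ℕ) : 0 ≤ leg n m := by unfold leg; positivity

theorem leg_pos {n m : ℕ} (h : m ≤ n) : 0 < leg n m := by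
  have h1 : 0 < n.choose m := Nat.choose_pos h
  have h2 : 0 < (n + m).choose m := Nat.choose_pos (Nat.le_add_left _ _)
  unfold leg; positivity

theorem nat_pow_self (k : ℕ) : (k : ℝ) ^ k = Real.exp (k * Real.log k) := by
  rcases Nat.eq_zero_or_pos k with rfl | hk
  · simp
  · rw [mul_comm, ← Real.rpow_def_of_pos (by positivity), Real.rpow_natCast]

theorem choose_mul_le (a b : ℕ) :
    ((a + b).choose a : ℝ) * ((a : ℝ) ^ a * (b : ℝ) ^ b) ≤ ((a + b : ℕ) : ℝ) ^ (a + b) := by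
  have h1 := add_pow (a : ℝ) b (a + b)
  rw [Nat.cast_add, h1]
  have h2 := Finset.single_le_sum (f := fun m => (a : ℝ) ^ m * (b : ℝ) ^ (a + b - m) *
    ((a + b).choose m : ℝ)) (fun i _ => by positivity) (Finset.mem_range.mpr
      (show a < a + b + 1 by omega))
  refine le_trans (le_of_eq ?_) h2
  simp only [Nat.add_sub_cancel_left]
  ring

theorem mul_log_div {k n : ℝ} (hn : n ≠ 0) :
    k * Real.log (k / n) = k * Real.log k - k * Real.log n := by
  rcases eq_or_ne k 0 with rfl | hk
  · simp
  · rw [Real.log_div hk hn]; ring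

theorem n_mul_ent {n m : ℕ} (hn : 0 < n) (h : m ≤ n) : n * ent ((m : ℝ) / n) =
    ((n + m : ℕ) : ℝ) * Real.log ((n + m : ℕ) : ℝ) - 2 * (m * Real.log m)
      - ((n - m : ℕ) : ℝ) * Real.log ((n - m : ℕ) : ℝ) := by
  have hn' : (n : ℝ) ≠ 0 := by positivity
  rw [ent, show 1 + (m : ℝ) / n = ((n + m : ℕ) : ℝ) / n by push_cast; field_simp,
    show 1 - (m : ℝ) / n = ((n - m : ℕ) : ℝ) / n by rw [Nat.cast_sub h]; field_simp]
  have e1 := mul_log_div (k := ((n + m : ℕ) : ℝ)) hn'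
  have e2 := mul_log_div (k := (m : ℝ)) hn'
  have e3 := mul_log_div (k := ((n - m : ℕ) : ℝ)) hn'
  have e4 : ((n - m : ℕ) : ℝ) = n - m := Nat.cast_sub h
  have e5 : ((n + m : ℕ) : ℝ) = n + m := Nat.cast_add _ _
  have : n * (((n + m : ℕ) : ℝ) / n * Real.log (((n + m : ℕ) : ℝ) / n) -
      2 * ((m : ℝ) / n * Real.log ((m : ℝ) / n)) -
      ((n - m : ℕ) : ℝ) / n * Real.log (((n - m : ℕ) : ℝ) / n))
      = ((n + m : ℕ) : ℝ) * Real.log (((n + m : ℕ) : ℝ) / n) -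
      2 * ((m : ℝ) * Real.log ((m : ℝ) / n)) -
      ((n - m : ℕ) : ℝ) * Real.log (((n - m : ℕ) : ℝ) / n) := by
    field_simp
  rw [this, e1, e2, e3]
  linear_combination (Real.log n) * e4 - (Real.log n) * e5

theorem exp_n_ent {n m : ℕ} (hn : 0 < n) (h : m ≤ n) : Real.exp (n * ent ((m : ℝ) / n)) =
    ((n + m : ℕ) : ℝ) ^ (n + m) / (((m : ℝ) ^ m) ^ 2 * ((n - m : ℕ) : ℝ) ^ (n - m)) := by
  rw [n_mul_ent hn h, Real.exp_sub, Real.exp_sub, nat_pow_self, nat_pow_self, nat_pow_self,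
    ← Real.exp_nat_mul, div_div]
  norm_num

theorem pow_self_pos (k : ℕ) : 0 < (k : ℝ) ^ k := by rw [nat_pow_self]; positivity

/-- Each binomial coefficient is bounded by a single term of the binomial theorem. -/
theorem leg_le {n m : ℕ} (hn : 0 < n) (h : m ≤ n) :
    leg n m ≤ Real.exp (n * ent ((m : ℝ) / n)) := by
  have h1 := choose_mul_le m (n - m)
  have h2 := choose_mul_le m n
  rw [Nat.add_sub_cancel' h] at h1
  rw [add_comm m n] at h2
  have p1 := pow_self_pos m
  have p2 := pow_self_pos (n - m)
  have p3 := pow_self_pos n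
  rw [exp_n_ent hn h, le_div_iff₀ (by positivity), leg]
  refine le_of_mul_le_mul_right ?_ p3
  calc _ = ((n.choose m : ℝ) * ((m : ℝ) ^ m * ((n - m : ℕ) : ℝ) ^ (n - m))) *
        (((n + m).choose m : ℝ) * ((m : ℝ) ^ m * (n : ℝ) ^ n)) := by ring
    _ ≤ (n : ℝ) ^ n * ((n + m : ℕ) : ℝ) ^ (n + m) := by gcongr
    _ = _ := by ring

theorem leg_eq_factorial {n m : ℕ} (h : m ≤ n) : leg n m =
    ((n + m).factorial : ℝ) / ((m.factorial : ℝ) ^ 2 * (n - m).factorial) := by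
  rw [leg, Nat.cast_choose ℝ h, Nat.cast_choose ℝ (Nat.le_add_left m n), Nat.add_sub_cancel]
  have := Nat.factorial_pos n
  field_simp

theorem factorial_eq_stirling {k : ℕ} (hk : 0 < k) : (k.factorial : ℝ) =
    Stirling.stirlingSeq k * √(2 * k) * ((k : ℝ) ^ k / Real.exp k) := by
  have h1 : √(2 * (k : ℝ)) ≠ 0 := by positivity
  have h2 : ((k : ℝ) / Real.exp 1) ^ k ≠ 0 := by positivity
  rw [Stirling.stirlingSeq, show Real.exp (k : ℝ) = Real.exp 1 ^ k by rw [← Real.exp_nat_mul, mul_one],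
    ← div_pow]
  field_simp

theorem stirlingSeq_pos {k : ℕ} (hk : 0 < k) : 0 < Stirling.stirlingSeq k := by
  unfold Stirling.stirlingSeq; positivity

/-- Stirling's formula for the polynomial prefactor of the weights, near the peak. -/
theorem prefactor_tendsto :
    Tendsto (fun p : ℕ × ℕ => (p.1 : ℝ) * leg p.1 p.2 * Real.exp (-(p.1 * ent ((p.2 : ℝ) / p.1))))
      peak (𝓝 ((1 + √2) / (√2 * Real.pi))) := by
  have hS := Stirling.tendsto_stirlingSeq_sqrt_pi
  have hpi : (0 : ℝ) < √Real.pi := Real.sqrt_pos.mpr Real.pi_pos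
  have htz0 : (0 : ℝ) < tz := by linarith [tz_gt]
  have htz1 : (0 : ℝ) < 1 - tz := by linarith [tz_lt]
  have h1 : Tendsto (fun p : ℕ × ℕ => Stirling.stirlingSeq (p.1 + p.2) /
      (Stirling.stirlingSeq p.2 ^ 2 * Stirling.stirlingSeq (p.1 - p.2))) peak
      (𝓝 (√Real.pi / (√Real.pi ^ 2 * √Real.pi))) :=
    (hS.comp peak_add).div (((hS.comp peak_snd).pow 2).mul (hS.comp peak_sub)) (by positivity)
  have h2 : Tendsto (fun p : ℕ × ℕ => √((1 + (p.2 : ℝ) / p.1) / (1 - (p.2 : ℝ) / p.1)) *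
      (1 / (2 * ((p.2 : ℝ) / p.1)))) peak (𝓝 (√((1 + tz) / (1 - tz)) * (1 / (2 * tz)))) :=
    (((peak_ratio.const_add 1).div (peak_ratio.const_sub 1) htz1.ne').sqrt).mul
      (tendsto_const_nhds.div (peak_ratio.const_mul 2) (by positivity))
  have hlim : √Real.pi / (√Real.pi ^ 2 * √Real.pi) * (√((1 + tz) / (1 - tz)) * (1 / (2 * tz)))
      = (1 + √2) / (√2 * Real.pi) := by
    rw [← rho_eq, rho, Real.sqrt_sq (by positivity), tz_eq]
    have := Real.sq_sqrt Real.pi_pos.le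
    have hp := Real.pi_pos
    have h2 := sqrt2_pos
    field_simp
    rw [this]
  rw [← hlim]
  refine (h1.mul h2).congr' ?_
  filter_upwards [peak_lt] with p hp
  obtain ⟨n, m⟩ := p
  obtain ⟨hn, hm, hmn⟩ := hp
  simp only at hn hm hmn ⊢
  have hnm : 0 < n - m := by omega
  rw [Real.exp_neg, exp_n_ent hn hmn.le, leg_eq_factorial hmn.le, factorial_eq_stirling hm,
    factorial_eq_stirling hnm, factorial_eq_stirling (Nat.add_pos_left hn m)]
  have s1 := stirlingSeq_pos hm
  have s2 := stirlingSeq_pos hnm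
  have p1 := pow_self_pos m
  have p2 := pow_self_pos (n - m)
  have p3 := pow_self_pos (n + m)
  have e1 : Real.exp ((n + m : ℕ) : ℝ) = Real.exp m ^ 2 * Real.exp ((n - m : ℕ) : ℝ) := by
    rw [← Real.exp_nat_mul, ← Real.exp_add, Nat.cast_sub hmn.le]
    push_cast; ring_nf
  have e2 : √((1 + (m : ℝ) / n) / (1 - (m : ℝ) / n)) =
      √(2 * ((n + m : ℕ) : ℝ)) / √(2 * ((n - m : ℕ) : ℝ)) := by
    rw [← Real.sqrt_div (by positivity), Nat.cast_sub hmn.le]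
    congr 1
    have h1 : (n : ℝ) - m ≠ 0 := by
      have : (m : ℝ) < n := by exact_mod_cast hmn
      linarith
    have hn' : (n : ℝ) ≠ 0 := by positivity
    push_cast
    field_simp
  have e3 : √(2 * (m : ℝ)) ^ 2 = 2 * m := Real.sq_sqrt (by positivity)
  have r1 : 0 < √(2 * ((n - m : ℕ) : ℝ)) := Real.sqrt_pos.mpr (by positivity)
  have x1 := Real.exp_pos (m : ℝ)
  have x2 := Real.exp_pos ((n - m : ℕ) : ℝ)
  have hm' : (0 : ℝ) < m := by positivity
  have hn' : (0 : ℝ) < n := by positivity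
  rw [e1, e2, mul_pow, mul_pow, e3]
  generalize Real.exp (m : ℝ) = E1 at *
  generalize Real.exp ((n - m : ℕ) : ℝ) = E2 at *
  generalize ((n + m : ℕ) : ℝ) ^ (n + m) = P3 at *
  generalize ((n - m : ℕ) : ℝ) ^ (n - m) = P2 at *
  generalize (m : ℝ) ^ m = P1 at *
  generalize √(2 * ((n - m : ℕ) : ℝ)) = R at *
  generalize √(2 * ((n + m : ℕ) : ℝ)) = R' at *
  field_simp

end JacobiHankel

namespace JacobiHankel

open Topology Asymptotics MeasureTheory

/-! ### Laplace's method for sums -/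

/-- The step function taking the value `h m` on `[m, m+1)` for `m ≤ n`, and `0` elsewhere. -/
noncomputable def step (n : ℕ) (h : ℕ → ℝ) (y : ℝ) : ℝ :=
  ∑ m ∈ Finset.range (n + 1), (Set.Ico (m : ℝ) (m + 1)).indicator (fun _ => h m) y

theorem integral_step (n : ℕ) (h : ℕ → ℝ) :
    ∫ y, step n h y = ∑ m ∈ Finset.range (n + 1), h m := by
  unfold step
  rw [integral_finsetSum]
  · refine Finset.sum_congr rfl fun m _ => ?_
    rw [integral_indicator_const _ measurableSet_Ico]
    simp
  · intro m _
    exact (integrable_indicator_iff measurableSet_Ico).mpr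
      (integrableOn_const (by simp))

theorem measurable_step (n : ℕ) (h : ℕ → ℝ) : Measurable (step n h) := by
  unfold step
  exact Finset.measurable_fun_sum _ fun m _ => measurable_const.indicator measurableSet_Ico

theorem step_eq {n : ℕ} {h : ℕ → ℝ} {y : ℝ} (hy : 0 ≤ y) (hn : ⌊y⌋₊ ≤ n) :
    step n h y = h ⌊y⌋₊ := by
  unfold step
  rw [Finset.sum_eq_single ⌊y⌋₊]
  · rw [Set.indicator_of_mem]
    exact ⟨Nat.floor_le hy, Nat.lt_floor_add_one y⟩
  · intro m _ hm
    refine Set.indicator_of_notMem ?_ _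
    intro hmem
    exact hm ((Nat.floor_eq_iff hy).mpr hmem).symm
  · intro hcon
    exact absurd (Finset.mem_range.mpr (by omega)) hcon

theorem step_eq_zero {n : ℕ} {h : ℕ → ℝ} {y : ℝ} (hy : ¬ (0 ≤ y ∧ ⌊y⌋₊ ≤ n)) :
    step n h y = 0 := by
  unfold step
  refine Finset.sum_eq_zero fun m hm => Set.indicator_of_notMem ?_ _
  intro hmem
  apply hy
  have h0 : 0 ≤ y := le_trans (by positivity) hmem.1
  refine ⟨h0, ?_⟩
  rw [(Nat.floor_eq_iff h0).mpr hmem]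
  have := Finset.mem_range.mp hm
  omega

/-- Polynomial growth of a two-index array, uniformly in `m ≤ n`. -/
def PolyBdd (W : ℕ → ℕ → ℝ) : Prop :=
  ∃ (C : ℝ) (p : ℕ), ∀ n m, 0 < n → m ≤ n → |W n m| ≤ C * (n : ℝ) ^ p

/-- The exponential part of the square of the weights, normalised to be `1` at the peak. -/
noncomputable def gauss (n m : ℕ) : ℝ :=
  Real.exp (2 * (n * (ent ((m : ℝ) / n) - Real.log rho)))

theorem gauss_le {n m : ℕ} (hn : 0 < n) (hm : m ≤ n) :
    gauss n m ≤ Real.exp (-((m - n * tz) ^ 2 / n)) := by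
  have hn' : (0 : ℝ) < n := by positivity
  have hm' : (m : ℝ) ≤ n := by exact_mod_cast hm
  have h1 := ent_le (t := (m : ℝ) / n) (by positivity) ((div_le_one hn').mpr hm')
  refine Real.exp_le_exp.mpr ?_
  have h2 : 2 * (n * (ent ((m : ℝ) / n) - Real.log rho)) ≤
      2 * (n * (-(((m : ℝ) / n - tz) ^ 2 / 2))) := by gcongr; linarith
  refine h2.trans_eq ?_
  field_simp

/-- Away from the peak the Gaussian factor beats the polynomial growth of `W`; half of the
exponent is kept. -/
theorem laplace_bound {W : ℕ → ℕ → ℝ} {w : ℝ}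
    (hW : Tendsto (fun p : ℕ × ℕ => W p.1 p.2) peak (𝓝 w)) (hP : PolyBdd W) :
    ∃ C : ℝ, 0 ≤ C ∧ ∀ᶠ n : ℕ in atTop, 0 < n ∧ ∀ m ≤ n,
      |W n m * gauss n m| ≤ C * Real.exp (-((m - n * tz) ^ 2 / (2 * n))) := by
  have hev : ∀ᶠ p : ℕ × ℕ in peak, |W p.1 p.2| < |w| + 1 :=
    hW.abs.eventually (gt_mem_nhds (lt_add_one _))
  have hbasis := (atTop_basis.comap (Prod.fst : ℕ × ℕ → ℕ)).inf
    ((Metric.nhds_basis_ball (x := tz)).comap (fun p : ℕ × ℕ => (p.2 : ℝ) / p.1))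
  obtain ⟨⟨N, δ⟩, ⟨-, hδ⟩, hsub⟩ := hbasis.eventually_iff.mp hev
  simp only at hδ hsub
  obtain ⟨C, p, hC⟩ := hP
  set c : ℝ := δ ^ 2 / 2 with hc
  have hc0 : 0 < c := by positivity
  have hexp : ∀ᶠ n : ℕ in atTop, (c * n) ^ p * Real.exp (-(c * n)) < 1 := by
    have h1 : Tendsto (fun n : ℕ => c * (n : ℝ)) atTop atTop :=
      tendsto_natCast_atTop_atTop.const_mul_atTop hc0
    exact ((Real.tendsto_pow_mul_exp_neg_atTop_nhds_zero p).comp h1).eventually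
      (gt_mem_nhds one_pos)
  refine ⟨|w| + 1 + |C| / c ^ p, by positivity, ?_⟩
  filter_upwards [hexp, eventually_ge_atTop N, eventually_gt_atTop 0] with n h1 h2 h3
  refine ⟨h3, fun m hm => ?_⟩
  have hn' : (0 : ℝ) < n := by positivity
  set q : ℝ := (m - n * tz) ^ 2 / (2 * n) with hq
  have hq0 : 0 ≤ q := by positivity
  have hg : gauss n m ≤ Real.exp (-q) * Real.exp (-q) := by
    refine (gauss_le h3 hm).trans_eq ?_
    rw [← Real.exp_add, hq]
    congr 1
    field_simp
    ring
  have hg0 : 0 ≤ gauss n m := (Real.exp_pos _).le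
  rw [abs_mul, abs_of_nonneg hg0]
  -- Near the peak `W` is bounded; otherwise `q ≥ c * n` and one factor `exp (-q)` absorbs `n ^ p`.
  by_cases hd : |(m : ℝ) / n - tz| < δ
  · have hw : |W n m| < |w| + 1 := by
      refine hsub (x := (n, m)) ⟨?_, ?_⟩
      · exact h2
      · simpa [Real.dist_eq] using hd
    have he : Real.exp (-q) ≤ 1 := Real.exp_le_one_iff.mpr (by linarith)
    calc |W n m| * gauss n m ≤ (|w| + 1) * (Real.exp (-q) * Real.exp (-q)) := by gcongr
      _ ≤ (|w| + 1) * (1 * Real.exp (-q)) := by gcongr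
      _ ≤ (|w| + 1 + |C| / c ^ p) * Real.exp (-q) := by
        rw [one_mul]
        have : 0 ≤ |C| / c ^ p := by positivity
        exact mul_le_mul_of_nonneg_right (by linarith) (Real.exp_pos _).le
  · push Not at hd
    have hcq : c * n ≤ q := by
      have h4 : δ ^ 2 ≤ ((m : ℝ) / n - tz) ^ 2 := by
        rw [← sq_abs ((m : ℝ) / n - tz)]; gcongr
      have h5 : q = ((m : ℝ) / n - tz) ^ 2 / 2 * n := by
        rw [hq]; field_simp
      rw [h5, hc]; gcongr
    have he : Real.exp (-q) ≤ Real.exp (-(c * n)) := Real.exp_le_exp.mpr (by linarith)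
    have hpow : (n : ℝ) ^ p * Real.exp (-(c * n)) ≤ 1 / c ^ p := by
      rw [le_div_iff₀ (by positivity)]
      rw [mul_pow] at h1
      linarith
    calc |W n m| * gauss n m ≤ (|C| * (n : ℝ) ^ p) * (Real.exp (-q) * Real.exp (-q)) := by
          gcongr
          exact (hC n m h3 hm).trans (by gcongr; exact le_abs_self C)
      _ ≤ (|C| * (n : ℝ) ^ p) * (Real.exp (-(c * n)) * Real.exp (-q)) := by gcongr
      _ = |C| * ((n : ℝ) ^ p * Real.exp (-(c * n))) * Real.exp (-q) := by ring
      _ ≤ |C| * (1 / c ^ p) * Real.exp (-q) := by gcongr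
      _ = |C| / c ^ p * Real.exp (-q) := by ring
      _ ≤ (|w| + 1 + |C| / c ^ p) * Real.exp (-q) := by
        have : 0 ≤ |w| + 1 := by positivity
        exact mul_le_mul_of_nonneg_right (by linarith) (Real.exp_pos _).le

/-- The integer `⌊n tz + √n x⌋`, at distance about `x √n` from the peak `n tz`, has ratio to `n`
tending to `tz`, with deviation `x / √n` to leading order. -/
theorem scaled_point (x : ℝ) :
    Tendsto (fun n : ℕ => (⌊n * tz + √n * x⌋₊ : ℝ) / n) atTop (𝓝 tz) ∧
    Tendsto (fun n : ℕ => √n * ((⌊n * tz + √n * x⌋₊ : ℝ) / n - tz)) atTop (𝓝 x) ∧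
    ∀ᶠ n : ℕ in atTop, 0 ≤ n * tz + √n * x := by
  have hs : Tendsto (fun n : ℕ => √(n : ℝ)) atTop atTop :=
    Real.tendsto_sqrt_atTop.comp tendsto_natCast_atTop_atTop
  have hinv : Tendsto (fun n : ℕ => (√(n : ℝ))⁻¹) atTop (𝓝 0) := tendsto_inv_atTop_zero.comp hs
  have htz0 : (0 : ℝ) < tz := by linarith [tz_gt]
  have hpos : ∀ᶠ n : ℕ in atTop, 0 ≤ n * tz + √n * x := by
    filter_upwards [hs.eventually_ge_atTop (|x| / tz)] with n hn
    have h1 : |x| ≤ √n * tz := by rwa [div_le_iff₀ htz0] at hn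
    have h2 : (n : ℝ) = √n * √n := (Real.mul_self_sqrt (by positivity)).symm
    have h3 := neg_abs_le x
    have : n * tz + √n * x = √n * (√n * tz + x) := by rw [mul_add, ← mul_assoc, ← h2]
    rw [this]
    exact mul_nonneg (Real.sqrt_nonneg _) (by linarith)
  have hB : Tendsto (fun n : ℕ => √n * ((⌊n * tz + √n * x⌋₊ : ℝ) / n - tz)) atTop (𝓝 x) := by
    rw [tendsto_iff_norm_sub_tendsto_zero]
    refine squeeze_zero' (Eventually.of_forall fun n => norm_nonneg _) ?_ hinv
    filter_upwards [hpos, eventually_gt_atTop 0] with n h1 h2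
    have hn' : (0 : ℝ) < n := by positivity
    have hsn : 0 < √(n : ℝ) := Real.sqrt_pos.mpr hn'
    have h3 : (n : ℝ) = √n * √n := (Real.mul_self_sqrt (by positivity)).symm
    have e : √n * ((⌊n * tz + √n * x⌋₊ : ℝ) / n - tz) - x =
        ((⌊n * tz + √n * x⌋₊ : ℝ) - (n * tz + √n * x)) * (√n)⁻¹ := by
      set k : ℝ := (⌊n * tz + √n * x⌋₊ : ℝ)
      generalize √(n : ℝ) = s at *
      rw [h3]
      field_simp
      ring
    rw [e, norm_mul, Real.norm_eq_abs, Real.norm_eq_abs, abs_of_pos (inv_pos.mpr hsn)]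
    have h4 := Nat.floor_le h1
    have h5 := Nat.lt_floor_add_one (n * tz + √n * x)
    have h6 : |(⌊n * tz + √n * x⌋₊ : ℝ) - (n * tz + √n * x)| ≤ 1 := by
      rw [abs_le]; constructor <;> linarith
    exact mul_le_of_le_one_left (inv_pos.mpr hsn).le h6
  refine ⟨?_, hB, hpos⟩
  have := (hB.mul hinv).const_add tz
  rw [mul_zero, add_zero] at this
  refine this.congr' ?_
  filter_upwards [eventually_gt_atTop 0] with n hn
  have hn' : (0 : ℝ) < n := by positivity
  have hsn : √(n : ℝ) ≠ 0 := (Real.sqrt_pos.mpr hn').ne'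
  field_simp
  ring

/-- The method of Laplace: the sum is the integral of a step function; after the substitution
`y = n tz + √n x` the integrands are dominated by a fixed Gaussian (`laplace_bound`) and tend
pointwise to `w exp(-4√2 x²)` (`ent_taylor`). -/
theorem laplace {W : ℕ → ℕ → ℝ} {w : ℝ}
    (hW : Tendsto (fun p : ℕ × ℕ => W p.1 p.2) peak (𝓝 w)) (hP : PolyBdd W) :
    Tendsto (fun n : ℕ => (√(n : ℝ))⁻¹ * ∑ m ∈ Finset.range (n + 1), W n m * gauss n m) atTop
      (𝓝 (w * √(Real.pi / (4 * √2)))) := by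
  obtain ⟨C, hC0, hC⟩ := laplace_bound hW hP
  set F : ℕ → ℝ → ℝ := fun n x => step n (fun m => W n m * gauss n m) (n * tz + √n * x) with hF
  have hFint : ∀ n : ℕ, 0 < n → ∫ x, F n x =
      (√(n : ℝ))⁻¹ * ∑ m ∈ Finset.range (n + 1), W n m * gauss n m := by
    intro n hn
    simp only [hF]
    rw [Measure.integral_comp_mul_left
      (fun y => step n (fun m => W n m * gauss n m) (n * tz + y)) (√(n : ℝ)),
      integral_add_left_eq_self (fun y => step n (fun m => W n m * gauss n m) y), integral_step,
      abs_of_nonneg (by positivity), smul_eq_mul]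
  have hlim : ∫ x : ℝ, w * Real.exp (-(4 * √2) * x ^ 2) = w * √(Real.pi / (4 * √2)) := by
    rw [integral_const_mul, integral_gaussian]
  rw [← hlim]
  refine Tendsto.congr' (f₁ := fun n => ∫ x, F n x) ?_ ?_
  · filter_upwards [eventually_gt_atTop 0] with n hn
    exact hFint n hn
  refine tendsto_integral_filter_of_dominated_convergence
    (fun x => C * Real.exp (1 / 2) * Real.exp (-(1 / 4) * x ^ 2)) ?_ ?_ ?_ ?_
  · exact Eventually.of_forall fun n =>
      ((measurable_step _ _).comp (by fun_prop)).aestronglyMeasurable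
  · filter_upwards [hC] with n hn
    refine Eventually.of_forall fun x => ?_
    obtain ⟨hn0, hb⟩ := hn
    by_cases hy : 0 ≤ n * tz + √n * x ∧ ⌊n * tz + √n * x⌋₊ ≤ n
    · simp only [hF]
      rw [step_eq hy.1 hy.2, Real.norm_eq_abs, mul_assoc, ← Real.exp_add]
      refine (hb _ hy.2).trans ?_
      gcongr
      have hn' : (0 : ℝ) < n := by positivity
      have h4 := Nat.floor_le hy.1
      have h5 := Nat.lt_floor_add_one (n * tz + √n * x)
      set k : ℝ := (⌊n * tz + √n * x⌋₊ : ℝ)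
      have hs2 : √(n : ℝ) ^ 2 = n := Real.sq_sqrt hn'.le
      have hn1 : (1 : ℝ) ≤ n := by exact_mod_cast hn0
      have h6 : (√n * x) ^ 2 ≤ 2 * (k - n * tz) ^ 2 + 2 := by
        set e := n * tz + √n * x - k with he
        have he0 : 0 ≤ e := by linarith
        have he1 : e ≤ 1 := by linarith
        have : √n * x = (k - n * tz) + e := by rw [he]; ring
        rw [this]
        nlinarith [sq_nonneg (k - n * tz - e)]
      have h7 : n * x ^ 2 ≤ 2 * (k - n * tz) ^ 2 + 2 * n := by
        rw [mul_pow, hs2] at h6; linarith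
      have h8 : x ^ 2 / 4 - 1 / 2 ≤ (k - n * tz) ^ 2 / (2 * n) := by
        rw [le_div_iff₀ (by positivity)]
        linarith
      linarith
    · simp only [hF]
      rw [step_eq_zero hy, norm_zero]
      positivity
  · exact (integrable_exp_neg_mul_sq (by norm_num)).const_mul _
  · refine Eventually.of_forall fun x => ?_
    obtain ⟨h1, h2, h3⟩ := scaled_point x
    have hlt : ∀ᶠ n : ℕ in atTop, ⌊n * tz + √n * x⌋₊ ≤ n := by
      filter_upwards [h1.eventually (gt_mem_nhds (show tz < 1 by linarith [tz_lt])),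
        eventually_gt_atTop 0] with n hn hn0
      rw [div_lt_one (by positivity)] at hn
      exact_mod_cast hn.le
    refine Tendsto.congr' (f₁ := fun n : ℕ => W n ⌊n * tz + √n * x⌋₊ * gauss n ⌊n * tz + √n * x⌋₊)
      ?_ ?_
    · filter_upwards [h3, hlt] with n a b
      simp only [hF]
      rw [step_eq a b]
    refine Tendsto.mul (hW.comp (tendsto_peak tendsto_id h1)) ?_
    refine (Real.continuous_exp.tendsto _).comp ?_
    set d : ℕ → ℝ := fun n => (⌊n * tz + √n * x⌋₊ : ℝ) / n - tz with hd
    have hd0 : Tendsto d atTop (𝓝 0) := by simpa using h1.sub_const tz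
    have hnd : Tendsto (fun n : ℕ => (n : ℝ) * d n ^ 2) atTop (𝓝 (x ^ 2)) := by
      refine (h2.pow 2).congr fun n => ?_
      rw [mul_pow, Real.sq_sqrt (by positivity)]
    have hr : Tendsto (fun n : ℕ => (n : ℝ) * (ent (tz + d n) - Real.log rho + 2 * √2 * d n ^ 2))
        atTop (𝓝 0) := by
      rw [← isLittleO_one_iff ℝ]
      have k1 := ent_taylor.comp_tendsto hd0
      have k2 := (isBigO_refl (fun n : ℕ => (n : ℝ)) atTop).mul_isLittleO k1
      exact k2.trans_isBigO (hnd.isBigO_one ℝ)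
    have hfin := (hr.sub (hnd.const_mul (2 * √2))).const_mul 2
    have hval : 2 * (0 - 2 * √2 * x ^ 2) = -(4 * √2) * x ^ 2 := by ring
    rw [hval] at hfin
    refine hfin.congr fun n => ?_
    have : tz + d n = (⌊n * tz + √n * x⌋₊ : ℝ) / n := by rw [hd]; ring
    rw [this]
    ring

end JacobiHankel

namespace JacobiHankel

open Topology Asymptotics

/-! ### Gamma quotients -/

/-- The quotient `Γ(k+1+s) / k!`, which is asymptotic to `k ^ s`. -/
noncomputable def gam (s : ℝ) (k : ℕ) : ℝ := Real.Gamma (k + 1 + s) / k.factorial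

theorem gam_pos {s : ℝ} {k : ℕ} (h : 0 < (k : ℝ) + 1 + s) : 0 < gam s k :=
  div_pos (Real.Gamma_pos_of_pos h) (by positivity)

/-- The limit formula of Euler for the Gamma function. -/
theorem gam_tendsto_of_pos {s : ℝ} (hs : 0 < s) :
    Tendsto (fun k : ℕ => gam s k / (k : ℝ) ^ s) atTop (𝓝 1) := by
  have hG := Real.Gamma_pos_of_pos hs
  have h := (tendsto_const_nhds (x := Real.Gamma s)).div (Real.GammaSeq_tendsto_Gamma s) hG.ne'
  rw [div_self hG.ne'] at h
  refine h.congr' ?_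
  filter_upwards [eventually_gt_atTop 0] with k hk
  have hprod : ∀ j : ℕ, Real.Gamma (s + j) = (∏ i ∈ Finset.range j, (s + i)) * Real.Gamma s := by
    intro j
    induction j with
    | zero => simp
    | succ j ih =>
      rw [Finset.prod_range_succ, Nat.cast_succ, ← add_assoc,
        Real.Gamma_add_one (by positivity), ih]
      ring
  have h1 := hprod (k + 1)
  simp only [Pi.div_apply]
  rw [gam, Real.GammaSeq, show (k : ℝ) + 1 + s = s + (k + 1 : ℕ) by push_cast; ring, h1]
  have h2 : (∏ i ∈ Finset.range (k + 1), (s + i)) ≠ 0 :=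
    Finset.prod_ne_zero_iff.mpr fun i _ => by positivity
  have h3 : (k : ℝ) ^ s ≠ 0 := (Real.rpow_pos_of_pos (by positivity) _).ne'
  have h4 : (k.factorial : ℝ) ≠ 0 := by positivity
  field_simp

theorem div_add_tendsto (c : ℝ) : Tendsto (fun k : ℕ => (k : ℝ) / (k + c)) atTop (𝓝 1) := by
  simpa using tendsto_natCast_div_add_atTop c

/-- The restriction `0 < s` is removed by descending along `Γ(x+1) = x Γ(x)`. -/
theorem gam_tendsto (s : ℝ) :
    Tendsto (fun k : ℕ => gam s k / (k : ℝ) ^ s) atTop (𝓝 1) := by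
  obtain ⟨N, hN⟩ := exists_nat_gt (-s)
  replace hN : 0 < s + N := by linarith
  induction N generalizing s with
  | zero => exact gam_tendsto_of_pos (by simpa using hN)
  | succ N ih =>
    have h1 := (ih (s + 1) (by push_cast at hN; linarith)).mul (div_add_tendsto (1 + s))
    rw [mul_one] at h1
    refine h1.congr' ?_
    filter_upwards [eventually_gt_atTop 0, eventually_gt_atTop ⌈-s⌉₊] with k hk hk2
    have h2 : (0 : ℝ) < k := by positivity
    have h3 : 0 < (k : ℝ) + 1 + s := by
      have := Nat.lt_of_ceil_lt hk2
      linarith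
    rw [gam, gam, show (k : ℝ) + 1 + (s + 1) = (k + 1 + s) + 1 by ring,
      Real.Gamma_add_one h3.ne', Real.rpow_add h2, Real.rpow_one]
    have h4 : (k : ℝ) ^ s ≠ 0 := (Real.rpow_pos_of_pos (by positivity) _).ne'
    have h5 : (k : ℝ) + (1 + s) ≠ 0 := by linarith
    have h6 : (k.factorial : ℝ) ≠ 0 := by positivity
    field_simp
    ring

theorem gam_ratio (s : ℝ) : Tendsto (fun k : ℕ => gam s k / gam s (k + 1)) atTop (𝓝 1) := by
  have h1 := ((tendsto_add_atTop_iff_nat 1).mpr (div_add_tendsto s))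
  refine h1.congr' ?_
  filter_upwards [eventually_gt_atTop ⌈-s⌉₊] with k hk2
  have h3 : 0 < (k : ℝ) + 1 + s := by
    have := Nat.lt_of_ceil_lt hk2
    linarith
  have h4 := (Real.Gamma_pos_of_pos h3).ne'
  rw [gam, gam, show ((k + 1 : ℕ) : ℝ) + 1 + s = (k + 1 + s) + 1 by push_cast; ring,
    Real.Gamma_add_one h3.ne', Nat.factorial_succ]
  push_cast
  have h6 : (k.factorial : ℝ) ≠ 0 := by positivity
  field_simp

/-- A sequence asymptotic to a power is bounded by a power at every index, the junk value of
`0 ^ s` included. -/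
theorem pow_bound {f : ℕ → ℝ} {s : ℝ}
    (h : Tendsto (fun k : ℕ => f k / (k : ℝ) ^ s) atTop (𝓝 1)) :
    ∃ (C : ℝ) (p : ℕ), 0 ≤ C ∧ ∀ k : ℕ, |f k| ≤ C * ((k : ℝ) + 1) ^ p := by
  set p := ⌈s⌉₊
  have h1 : f =O[atTop] fun k : ℕ => ((k : ℝ) + 1) ^ p := by
    have h2 : f =O[atTop] fun k : ℕ => (k : ℝ) ^ s := by
      have h3 := (h.isBigO_one ℝ).mul (isBigO_refl (fun k : ℕ => (k : ℝ) ^ s) atTop)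
      simp only [one_mul] at h3
      refine h3.congr' ?_ EventuallyEq.rfl
      filter_upwards [eventually_gt_atTop 0] with k hk
      have h4 : (k : ℝ) ^ s ≠ 0 := (Real.rpow_pos_of_pos (by positivity) _).ne'
      field_simp
    refine h2.trans (IsBigO.of_bound 1 ?_)
    filter_upwards [eventually_gt_atTop 0] with k hk
    have hk1 : (1 : ℝ) ≤ k := by exact_mod_cast hk
    rw [one_mul, Real.norm_of_nonneg (by positivity), Real.norm_of_nonneg (by positivity)]
    calc (k : ℝ) ^ s ≤ (k : ℝ) ^ (p : ℝ) := Real.rpow_le_rpow_of_exponent_le hk1 (Nat.le_ceil s)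
      _ = (k : ℝ) ^ p := Real.rpow_natCast _ _
      _ ≤ _ := by gcongr; linarith
  obtain ⟨C, hC, hb⟩ := bound_of_isBigO_nat_atTop h1
  refine ⟨C, p, hC.le, fun k => ?_⟩
  have := hb (x := k) (by positivity)
  rwa [Real.norm_eq_abs, Real.norm_of_nonneg (by positivity)] at this

theorem gam_inv_tendsto (s : ℝ) :
    Tendsto (fun k : ℕ => (gam s k)⁻¹ / (k : ℝ) ^ (-s)) atTop (𝓝 1) := by
  have := (gam_tendsto s).inv₀ one_ne_zero
  rw [inv_one] at this
  refine this.congr fun k => ?_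
  rw [Real.rpow_neg (by positivity), inv_div, div_inv_eq_mul, div_eq_mul_inv, mul_comm]

theorem PolyBdd.mul {V W : ℕ → ℕ → ℝ} (hV : PolyBdd V) (hW : PolyBdd W) :
    PolyBdd fun n m => V n m * W n m := by
  obtain ⟨C, p, h⟩ := hV
  obtain ⟨D, q, h'⟩ := hW
  refine ⟨C * D, p + q, fun n m hn hm => ?_⟩
  have h1 := h n m hn hm
  have h2 := h' n m hn hm
  rw [abs_mul, pow_add, mul_mul_mul_comm]
  exact mul_le_mul h1 h2 (abs_nonneg _) ((abs_nonneg _).trans h1)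

/-- A sequence asymptotic to a power, evaluated at an index `g n m ≤ 2 n`, is polynomially bounded. -/
theorem PolyBdd.of_index {f : ℕ → ℝ} {s : ℝ}
    (h : Tendsto (fun k : ℕ => f k / (k : ℝ) ^ s) atTop (𝓝 1)) (g : ℕ → ℕ → ℕ)
    (hg : ∀ n m, m ≤ n → g n m ≤ 2 * n) : PolyBdd fun n m => f (g n m) := by
  obtain ⟨C, p, hC, hb⟩ := pow_bound h
  refine ⟨C * 3 ^ p, p, fun n m hn hm => (hb _).trans ?_⟩
  rw [mul_assoc, ← mul_pow]
  have h1 : ((g n m : ℕ) : ℝ) ≤ 2 * n := by exact_mod_cast hg n m hm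
  have h2 : (1 : ℝ) ≤ n := by exact_mod_cast hn
  gcongr
  linarith

theorem PolyBdd.mono {V W : ℕ → ℕ → ℝ} (hW : PolyBdd W)
    (h : ∀ n m, 0 < n → m ≤ n → |V n m| ≤ |W n m|) : PolyBdd V := by
  obtain ⟨C, p, hC⟩ := hW
  exact ⟨C, p, fun n m hn hm => (h n m hn hm).trans (hC n m hn hm)⟩

/-! ### Asymptotics of the coefficients near the peak -/

/-- The normalisation of the orthonormal polynomial relative to the Legendre coefficients. -/
noncomputable def kap (α β : ℝ) (n : ℕ) : ℝ :=
  gam α n * (2 * n + α + β + 1) / (gam β n * gam (α + β) n)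

/-- The quotient of Gamma quotients by which the Jacobi coefficients differ from the Legendre
ones. -/
noncomputable def quo (α β : ℝ) (n m : ℕ) : ℝ := gam (α + β) (n + m) / gam α m

theorem rho_pos : 0 < rho := by linarith [rho_gt]

section

variable {α β : ℝ} (hα : -1 < α) (hβ : -1 < β)

include hα hβ

theorem kap_pos {n : ℕ} (hn : 0 < n) : 0 < kap α β n := by
  have h1 : (1 : ℝ) ≤ n := by exact_mod_cast hn
  have h2 := gam_pos (s := α) (k := n) (by linarith)
  have h3 := gam_pos (s := β) (k := n) (by linarith)
  have h4 := gam_pos (s := α + β) (k := n) (by linarith)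
  have h5 : 0 < 2 * (n : ℝ) + α + β + 1 := by linarith
  unfold kap
  positivity

theorem quo_pos {n : ℕ} (hn : 0 < n) (m : ℕ) : 0 < quo α β n m := by
  have h1 : (1 : ℝ) ≤ n := by exact_mod_cast hn
  have h0 : (0 : ℝ) ≤ m := by positivity
  have h2 := gam_pos (s := α) (k := m) (by linarith)
  have h4 := gam_pos (s := α + β) (k := n + m) (by push_cast; linarith)
  exact div_pos h4 h2

/-- The Jacobi coefficients are the Legendre coefficients times Gamma quotients of power growth. -/
theorem coeffAbs_eq {n : ℕ} (hn : 0 < n) (m : ℕ) :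
    coeffAbs α β n m = √(kap α β n) * leg n m * quo α β n m := by
  have h1 : (1 : ℝ) ≤ n := by exact_mod_cast hn
  have h0 : (0 : ℝ) ≤ m := by positivity
  have hf : (0 : ℝ) < n.factorial := by positivity
  have hk : normSq α β n = kap α β n / (n.factorial : ℝ) ^ 2 := by
    have g1 : Real.Gamma (n + α + 1) ≠ 0 := (Real.Gamma_pos_of_pos (by linarith)).ne'
    have g2 : Real.Gamma (n + β + 1) ≠ 0 := (Real.Gamma_pos_of_pos (by linarith)).ne'
    have g3 : Real.Gamma (n + α + β + 1) ≠ 0 := (Real.Gamma_pos_of_pos (by linarith)).ne'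
    rw [normSq, kap, gam, gam, gam, show (n : ℝ) + 1 + α = n + α + 1 by ring,
      show (n : ℝ) + 1 + β = n + β + 1 by ring,
      show (n : ℝ) + 1 + (α + β) = n + α + β + 1 by ring]
    field_simp
  rw [coeffAbs, if_neg hn.ne', hk, Real.sqrt_div (kap_pos hα hβ hn).le, Real.sqrt_sq hf.le, quo,
    gam, gam, leg, Nat.cast_choose ℝ (Nat.le_add_left m n), Nat.add_sub_cancel]
  have g1 : Real.Gamma (m + α + 1) ≠ 0 := (Real.Gamma_pos_of_pos (by linarith)).ne'
  rw [show (m : ℝ) + 1 + α = m + α + 1 by ring,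
    show ((n + m : ℕ) : ℝ) + 1 + (α + β) = n + m + α + β + 1 by push_cast; ring]
  have f1 : (m.factorial : ℝ) ≠ 0 := by positivity
  have f2 : ((n + m).factorial : ℝ) ≠ 0 := by positivity
  field_simp

theorem coeffAbs_pos {n m : ℕ} (hn : 0 < n) (hm : m ≤ n) : 0 < coeffAbs α β n m := by
  rw [coeffAbs_eq hα hβ hn]
  exact mul_pos (mul_pos (Real.sqrt_pos.mpr (kap_pos hα hβ hn)) (leg_pos hm)) (quo_pos hα hβ hn m)

theorem coeffAbs_nonneg {n : ℕ} (hn : 0 < n) (m : ℕ) : 0 ≤ coeffAbs α β n m := by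
  rw [coeffAbs_eq hα hβ hn]
  exact mul_nonneg (mul_nonneg (Real.sqrt_nonneg _) (leg_nonneg _ _)) (quo_pos hα hβ hn m).le

omit hα hβ in
/-- `kap α β n` is asymptotic to `2 n ^ (1 - 2β)`. -/
theorem kap_tendsto : Tendsto (fun n : ℕ => kap α β n / n * (n : ℝ) ^ (2 * β)) atTop (𝓝 2) := by
  have h1 : Tendsto (fun n : ℕ => (2 : ℝ) + (α + β + 1) / n) atTop (𝓝 (2 + 0)) :=
    tendsto_const_nhds.add (tendsto_const_div_atTop_nhds_zero_nat _)
  have h := (((gam_tendsto α).mul h1).mul (gam_inv_tendsto β)).mul (gam_inv_tendsto (α + β))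
  norm_num at h
  refine h.congr' ?_
  filter_upwards [eventually_gt_atTop 0] with n hn
  have hn' : (0 : ℝ) < n := by positivity
  rw [kap, Real.rpow_add hn', Real.rpow_neg hn'.le, Real.rpow_neg hn'.le, two_mul β,
    Real.rpow_add hn']
  have e1 : (n : ℝ) ^ α ≠ 0 := (Real.rpow_pos_of_pos hn' _).ne'
  have e2 : (n : ℝ) ^ β ≠ 0 := (Real.rpow_pos_of_pos hn' _).ne'
  field_simp
  ring

omit hα hβ in
theorem quo_tendsto : Tendsto (fun p : ℕ × ℕ => quo α β p.1 p.2 / (p.1 : ℝ) ^ β) peak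
    (𝓝 ((1 + tz) ^ (α + β) * tz ^ (-α))) := by
  have ht : 0 < tz := by linarith [tz_gt]
  have h1 := ((gam_tendsto (α + β)).comp peak_add).mul ((gam_inv_tendsto α).comp peak_snd)
  have h2 := (peak_ratio.const_add 1).rpow_const (p := α + β) (Or.inl (by linarith))
  have h3 := peak_ratio.rpow_const (p := -α) (Or.inl ht.ne')
  have h := h1.mul (h2.mul h3)
  rw [one_mul, one_mul] at h
  refine h.congr' ?_
  filter_upwards [peak_lt] with p hp
  obtain ⟨n, m⟩ := p
  have hn' : (0 : ℝ) < n := by have := hp.1; positivity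
  have hm' : (0 : ℝ) < m := by have := hp.2.1; positivity
  simp only [Function.comp_apply]
  have e0 : 1 + (m : ℝ) / n = ((n + m : ℕ) : ℝ) / n := by push_cast; field_simp
  have hs' : (0 : ℝ) < ((n + m : ℕ) : ℝ) := by push_cast; positivity
  rw [quo, e0, Real.div_rpow hs'.le hn'.le, Real.div_rpow hm'.le hn'.le, Real.rpow_neg hm'.le,
    Real.rpow_neg hn'.le, Real.rpow_add hn']
  have e1 : (n : ℝ) ^ α ≠ 0 := (Real.rpow_pos_of_pos hn' _).ne'
  have e2 : (n : ℝ) ^ β ≠ 0 := (Real.rpow_pos_of_pos hn' _).ne'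
  have e3 : (m : ℝ) ^ α ≠ 0 := (Real.rpow_pos_of_pos hm' _).ne'
  have e4 : ((n + m : ℕ) : ℝ) ^ (α + β) ≠ 0 := (Real.rpow_pos_of_pos hs' _).ne'
  field_simp

/-- The squared coefficients `coeffAbs α β n m ^ 2`, scaled by `n * rho ^ (-2n)` and with the
exponential part `gauss n m` divided out. -/
noncomputable def wgt (α β : ℝ) (n m : ℕ) : ℝ :=
  ((n : ℝ) * leg n m * Real.exp (-(n * ent ((m : ℝ) / n)))) ^ 2 *
    (kap α β n / n * quo α β n m ^ 2)

theorem wgt_eq {n : ℕ} (hn : 0 < n) (m : ℕ) :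
    n * coeffAbs α β n m ^ 2 / (rho ^ n) ^ 2 = wgt α β n m * gauss n m := by
  have hn' : (0 : ℝ) < n := by positivity
  rw [coeffAbs_eq hα hβ hn, wgt, gauss, mul_pow, mul_pow, Real.sq_sqrt (kap_pos hα hβ hn).le,
    mul_pow _ (Real.exp _), ← Real.exp_nat_mul]
  have e : (rho ^ n) ^ 2 = Real.exp (2 * (n * Real.log rho)) := by
    rw [← Real.exp_log rho_pos, ← Real.exp_nat_mul, ← Real.exp_nat_mul, Real.log_exp]
    norm_num
  rw [e, div_eq_mul_inv, ← Real.exp_neg]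
  have e2 : Real.exp (-(2 * (n * Real.log rho))) =
      Real.exp ((2 : ℕ) * -(n * ent ((m : ℝ) / n))) *
        Real.exp (2 * (n * (ent ((m : ℝ) / n) - Real.log rho))) := by
    rw [← Real.exp_add]; congr 1; push_cast; ring
  rw [e2]
  field_simp

/-- The limit of `wgt` at the peak. -/
noncomputable def wlim (α β : ℝ) : ℝ :=
  ((1 + √2) / (√2 * Real.pi)) ^ 2 * (2 * ((1 + tz) ^ (α + β) * tz ^ (-α)) ^ 2)

omit hα hβ in
/-- The powers of `n` in `kap` and `quo ^ 2` cancel, leaving a finite limit at the peak. -/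
theorem wgt_tendsto : Tendsto (fun p : ℕ × ℕ => wgt α β p.1 p.2) peak (𝓝 (wlim α β)) := by
  have h1 := (prefactor_tendsto.pow 2).mul
    (((kap_tendsto (α := α) (β := β)).comp peak_fst).mul
      ((quo_tendsto (α := α) (β := β)).pow 2))
  refine h1.congr' ?_
  filter_upwards [peak_lt] with p hp
  have hn' : (0 : ℝ) < p.1 := by have := hp.1; positivity
  have e : (p.1 : ℝ) ^ β ≠ 0 := (Real.rpow_pos_of_pos hn' _).ne'
  simp only [Function.comp_apply]
  rw [wgt, two_mul β, Real.rpow_add hn']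
  field_simp

theorem wgt_nonneg {n : ℕ} (hn : 0 < n) (m : ℕ) : 0 ≤ wgt α β n m := by
  have := kap_pos hα hβ hn
  unfold wgt
  positivity

omit hα hβ in
theorem wgt_polyBdd : PolyBdd (wgt α β) := by
  have hpow (s : ℝ) : PolyBdd fun n _ => gam s n :=
    PolyBdd.of_index (gam_tendsto s) (fun n _ => n) (by intros; omega)
  have hpow' (s : ℝ) : PolyBdd fun n _ => (gam s n)⁻¹ :=
    PolyBdd.of_index (gam_inv_tendsto s) (fun n _ => n) (by intros; omega)
  have hquo : PolyBdd (quo α β) := by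
    refine (PolyBdd.of_index (gam_tendsto (α + β)) (fun n m => n + m) (by intros; omega)).mul
      (PolyBdd.of_index (gam_inv_tendsto α) (fun _ m => m) (by intros; omega))
  have hlin : PolyBdd fun n _ => (2 * (n : ℝ) + α + β + 1) / n := by
    refine ⟨2 + |α + β + 1|, 0, fun n m hn hm => ?_⟩
    have h1 : (1 : ℝ) ≤ n := by exact_mod_cast hn
    rw [pow_zero, mul_one, abs_div, abs_of_nonneg (by positivity : (0 : ℝ) ≤ n),
      div_le_iff₀ (by positivity)]
    have h2 := abs_add_le (2 * (n : ℝ)) (α + β + 1)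
    rw [abs_of_nonneg (by positivity : (0 : ℝ) ≤ 2 * n)] at h2
    have h3 : |α + β + 1| ≤ |α + β + 1| * n := le_mul_of_one_le_right (abs_nonneg _) h1
    calc |2 * (n : ℝ) + α + β + 1| = |2 * (n : ℝ) + (α + β + 1)| := by ring_nf
      _ ≤ _ := by linarith
  have hpre : PolyBdd fun n m => (n : ℝ) * leg n m * Real.exp (-(n * ent ((m : ℝ) / n))) := by
    refine ⟨1, 1, fun n m hn hm => ?_⟩
    have h1 := leg_le hn hm
    have h2 := leg_nonneg n m
    rw [abs_of_nonneg (by positivity), pow_one, one_mul]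
    beta_reduce
    rw [Real.exp_neg, mul_assoc]
    refine mul_le_of_le_one_right (by positivity) ?_
    rw [← div_eq_mul_inv]
    exact div_le_one_of_le₀ h1 (Real.exp_pos _).le
  refine ((hpre.mul hpre).mul ((((hpow α).mul hlin).mul ((hpow' β).mul (hpow' (α + β)))).mul
    (hquo.mul hquo))).mono fun n m hn hm => le_of_eq ?_
  congr 1
  rw [wgt, kap, ← mul_inv]
  ring

end
end JacobiHankel

namespace JacobiHankel

open Topology Asymptotics

/-! ### Inner products of the coefficient rows -/

/-- The squared Euclidean norm of the coefficient vector of the `n`-th orthonormal polynomial. -/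
noncomputable def rowSq (α β : ℝ) (n : ℕ) : ℝ := ∑ m ∈ Finset.range (n + 1), coeffAbs α β n m ^ 2

/-- The limit of `√n * rho ^ (-2n) * rowSq α β n`. -/
noncomputable def dlim (α β : ℝ) : ℝ := wlim α β * √(Real.pi / (4 * √2))

theorem dlim_pos (α β : ℝ) : 0 < dlim α β := by
  have h0 : 0 < tz := by linarith [tz_gt]
  have h1 := Real.rpow_pos_of_pos h0 (-α)
  have h2 := Real.rpow_pos_of_pos (show 0 < 1 + tz by linarith) (α + β)
  have := sqrt2_pos
  have := Real.pi_pos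
  unfold dlim wlim
  positivity

section

variable {α β : ℝ} (hα : -1 < α) (hβ : -1 < β)

include hα hβ

omit hα hβ in
theorem rowSq_nonneg (n : ℕ) : 0 ≤ rowSq α β n := Finset.sum_nonneg fun _ _ => sq_nonneg _

/-- The sum of the squared coefficients grows like `dlim * rho ^ (2n) / √n`, by the method of
Laplace. -/
theorem rowSq_tendsto :
    Tendsto (fun n : ℕ => √(n : ℝ) * rowSq α β n / (rho ^ n) ^ 2) atTop (𝓝 (dlim α β)) := by
  refine (laplace (wgt_tendsto (α := α) (β := β)) wgt_polyBdd).congr' ?_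
  filter_upwards [eventually_gt_atTop 0] with n hn
  have hn' : (0 : ℝ) < n := by positivity
  have hs : √(n : ℝ) * √n = n := Real.mul_self_sqrt hn'.le
  have hs0 : 0 < √(n : ℝ) := Real.sqrt_pos.mpr hn'
  rw [rowSq, Finset.mul_sum, Finset.mul_sum, Finset.sum_div]
  refine Finset.sum_congr rfl fun m _ => ?_
  rw [← wgt_eq hα hβ hn, inv_mul_eq_div, div_eq_iff hs0.ne']
  nth_rewrite 1 [← hs]
  ring

/-- Near the peak consecutive rows are proportional with factor `(1 - tz) / (1 + tz) = rho⁻¹`: apart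
from factors tending to `1`, the quotient of coefficients is `(n - m) / (n + m)`. -/
theorem coeffAbs_pred_tendsto :
    Tendsto (fun p : ℕ × ℕ => coeffAbs α β (p.1 - 1) p.2 / coeffAbs α β p.1 p.2) peak
      (𝓝 rho⁻¹) := by
  have hl : Tendsto (fun n : ℕ => (2 * (n : ℝ) + α + β + 1) / (2 * (n + 1 : ℕ) + α + β + 1)) atTop
      (𝓝 1) := by
    have h1 : Tendsto (fun n : ℕ => 1 - 2 / (2 * ((n + 1 : ℕ) : ℝ) + α + β + 1)) atTop
        (𝓝 (1 - 0)) := by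
      refine tendsto_const_nhds.sub (tendsto_const_nhds.div_atTop ?_)
      have : Tendsto (fun n : ℕ => (n : ℝ)) atTop atTop := tendsto_natCast_atTop_atTop
      refine tendsto_atTop_mono' _ ?_ this
      filter_upwards with n
      push_cast
      have : (0 : ℝ) ≤ n := by positivity
      linarith
    rw [sub_zero] at h1
    refine h1.congr fun n => ?_
    have : (0 : ℝ) ≤ n := by positivity
    have h2 : 2 * ((n + 1 : ℕ) : ℝ) + α + β + 1 ≠ 0 := by push_cast; linarith
    rw [eq_div_iff h2, sub_mul, div_mul_cancel₀ _ h2]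
    push_cast
    ring
  have hk : Tendsto (fun n : ℕ => kap α β n / kap α β (n + 1)) atTop (𝓝 1) := by
    have h1 := ((gam_ratio α).mul hl).mul
      (((gam_ratio β).inv₀ one_ne_zero).mul ((gam_ratio (α + β)).inv₀ one_ne_zero))
    norm_num at h1
    refine h1.congr fun n => ?_
    rw [kap, kap]
    push_cast
    simp only [div_eq_mul_inv, mul_inv, inv_inv]
    ring
  have hpred : Tendsto (fun p : ℕ × ℕ => p.1 - 1) peak atTop :=
    (tendsto_sub_atTop_nat 1).comp peak_fst
  have hpred2 : Tendsto (fun p : ℕ × ℕ => p.1 - 1 + p.2) peak atTop :=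
    tendsto_atTop_mono (fun _ => Nat.le_add_right _ _) hpred
  have hr : Tendsto (fun p : ℕ × ℕ => (1 - (p.2 : ℝ) / p.1) / (1 + (p.2 : ℝ) / p.1)) peak
      (𝓝 rho⁻¹) := by
    rw [rho_eq, inv_div]
    exact (peak_ratio.const_sub 1).div (peak_ratio.const_add 1) (by linarith [tz_gt])
  have h := ((hk.comp hpred).sqrt.mul hr).mul ((gam_ratio (α + β)).comp hpred2)
  rw [Real.sqrt_one, one_mul, mul_one] at h
  refine h.congr' ?_
  filter_upwards [peak_lt, (peak_shift 1).eventually peak_lt] with p hp hp1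
  obtain ⟨n, m⟩ := p
  simp only at hp hp1
  simp only [Function.comp_apply]
  obtain ⟨k, rfl⟩ : ∃ k, n = k + 1 := ⟨n - 1, by omega⟩
  simp only [Nat.add_sub_cancel] at hp1 ⊢
  have hk0 := kap_pos hα hβ hp.1
  have hk1 := kap_pos hα hβ hp1.1
  rw [coeffAbs_eq hα hβ hp1.1, coeffAbs_eq hα hβ hp.1, Real.sqrt_div hk1.le, quo, quo,
    leg_eq_factorial hp1.2.2.le, leg_eq_factorial hp.2.2.le,
    show k + 1 + m = (k + m) + 1 by ring, show k + 1 - m = (k - m) + 1 by omega,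
    Nat.factorial_succ, Nat.factorial_succ]
  have s0 := (Real.sqrt_pos.mpr hk0).ne'
  have g0 := (gam_pos (s := α) (k := m) (by
    have : (0 : ℝ) ≤ m := by positivity
    linarith)).ne'
  have g1 := (gam_pos (s := α + β) (k := k + m + 1) (by
    have h1 : (1 : ℝ) ≤ k := by exact_mod_cast hp1.1
    have : (0 : ℝ) ≤ m := by positivity
    push_cast; linarith)).ne'
  have hc : ((k - m : ℕ) : ℝ) = k - m := Nat.cast_sub hp1.2.2.le
  push_cast
  rw [hc]
  have f1 : (m.factorial : ℝ) ≠ 0 := by positivity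
  have f2 : ((k + m).factorial : ℝ) ≠ 0 := by positivity
  have f3 : ((k - m).factorial : ℝ) ≠ 0 := by positivity
  have f4 : (k : ℝ) - m + 1 ≠ 0 := by
    rw [← hc]; positivity
  have f5 : (k : ℝ) + m + 1 ≠ 0 := by positivity
  have f6 : (k : ℝ) + 1 + m ≠ 0 := by positivity
  have f7 : (k : ℝ) + 1 ≠ 0 := by positivity
  have e1 : (1 - (m : ℝ) / (k + 1)) / (1 + m / (k + 1)) = (k - m + 1) / (k + m + 1) := by
    rw [div_eq_div_iff (by positivity) f5]
    field_simp
    ring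
  rw [e1]
  field_simp

theorem coeffAbs_sub_tendsto (i : ℕ) :
    Tendsto (fun p : ℕ × ℕ => coeffAbs α β (p.1 - i) p.2 / coeffAbs α β p.1 p.2) peak
      (𝓝 (rho⁻¹ ^ i)) := by
  induction i with
  | zero =>
    simp only [Nat.sub_zero, pow_zero]
    refine tendsto_const_nhds.congr' ?_
    filter_upwards [peak_lt] with p hp
    rw [div_self (coeffAbs_pos hα hβ hp.1 hp.2.2.le).ne']
  | succ i ih =>
    have h := ((coeffAbs_pred_tendsto hα hβ).comp (peak_shift i)).mul ih
    rw [← pow_succ'] at h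
    refine h.congr' ?_
    filter_upwards [(peak_shift i).eventually peak_lt] with p hp
    have h1 := (coeffAbs_pos hα hβ hp.1 hp.2.2.le).ne'
    simp only [Function.comp_apply, Nat.sub_sub]
    rw [mul_comm]
    exact div_mul_div_cancel₀' h1 _ _

/-- An asymptotic lower bound for the inner product of the rows `n - i` and `n`. In the proof the
ratio `coeffAbs α β (n - i) m / coeffAbs α β n m` is truncated at `1`, so that `laplace` applies
without a uniform bound on this ratio. -/
theorem cross_lower (i : ℕ) : ∃ q : ℕ → ℝ, Tendsto q atTop (𝓝 (dlim α β * rho⁻¹ ^ i)) ∧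
    ∀ᶠ n : ℕ in atTop, q n ≤ √(n : ℝ) *
      (∑ m ∈ Finset.range (n + 1), coeffAbs α β (n - i) m * coeffAbs α β n m) / (rho ^ n) ^ 2 := by
  set r : ℕ → ℕ → ℝ := fun n m => min (coeffAbs α β (n - i) m / coeffAbs α β n m) 1 with hr
  have hrho : rho⁻¹ ^ i ≤ 1 := pow_le_one₀ (inv_nonneg.mpr rho_pos.le) (inv_le_one_of_one_le₀ rho_gt.le)
  have hlim : Tendsto (fun p : ℕ × ℕ => wgt α β p.1 p.2 * r p.1 p.2) peak
      (𝓝 (wlim α β * rho⁻¹ ^ i)) := by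
    have := (coeffAbs_sub_tendsto hα hβ i).min (tendsto_const_nhds (x := (1 : ℝ)))
    rw [min_eq_left hrho] at this
    exact wgt_tendsto.mul this
  have ha (n m : ℕ) : 0 ≤ coeffAbs α β n m := by
    rcases Nat.eq_zero_or_pos n with rfl | hn
    · rw [coeffAbs, if_pos rfl]
      split_ifs <;> positivity
    · exact coeffAbs_nonneg hα hβ hn m
  have hr0 (n m : ℕ) : 0 ≤ r n m := le_min (div_nonneg (ha _ _) (ha _ _)) zero_le_one
  have hP : PolyBdd fun n m => wgt α β n m * r n m := by
    refine wgt_polyBdd.mono (W := wgt α β) fun n m hn hm => ?_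
    rw [abs_mul]
    refine mul_le_of_le_one_right (abs_nonneg _) ?_
    rw [abs_of_nonneg (hr0 _ _)]
    exact min_le_right _ _
  have h := laplace (W := fun n m => wgt α β n m * r n m) hlim hP
  rw [mul_right_comm] at h
  refine ⟨_, h, ?_⟩
  filter_upwards [eventually_gt_atTop 0] with n hn
  have hn' : (0 : ℝ) < n := by positivity
  have hs : √(n : ℝ) * √n = n := Real.mul_self_sqrt hn'.le
  have hs0 : 0 < √(n : ℝ) := Real.sqrt_pos.mpr hn'
  have hR : 0 < (rho ^ n) ^ 2 := pow_pos (pow_pos rho_pos _) _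
  rw [Finset.mul_sum, Finset.mul_sum, Finset.sum_div]
  refine Finset.sum_le_sum fun m hm => ?_
  have hm' : m ≤ n := by simpa [Nat.lt_succ_iff] using hm
  have hpos := coeffAbs_pos hα hβ hn hm'
  rw [mul_right_comm, ← wgt_eq hα hβ hn]
  have h1 : coeffAbs α β n m ^ 2 * r n m ≤ coeffAbs α β (n - i) m * coeffAbs α β n m := by
    calc coeffAbs α β n m ^ 2 * r n m
        ≤ coeffAbs α β n m ^ 2 * (coeffAbs α β (n - i) m / coeffAbs α β n m) := by
          gcongr; exact min_le_left _ _
      _ = _ := by field_simp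
  calc (√(n : ℝ))⁻¹ * (n * coeffAbs α β n m ^ 2 / (rho ^ n) ^ 2 * r n m)
      = √(n : ℝ) * (coeffAbs α β n m ^ 2 * r n m) / (rho ^ n) ^ 2 := by
        rw [inv_mul_eq_div, div_eq_iff hs0.ne']
        nth_rewrite 1 [← hs]
        ring
    _ ≤ _ := by gcongr

/-! ### The trace of the inverse and the smallest eigenvalue -/

/-- Bound for `rowSq` valid at every index, in the form suited to dominated convergence. -/
theorem rowSq_bound : ∃ C : ℝ, 0 ≤ C ∧ ∀ n : ℕ,
    √((n : ℝ) + 1) * rowSq α β n / (rho ^ n) ^ 2 ≤ C := by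
  have h1 : Tendsto (fun n : ℕ => √(((n : ℝ) + 1) / n)) atTop (𝓝 1) := by
    have := ((div_add_tendsto 1).inv₀ one_ne_zero).sqrt
    rw [inv_one, Real.sqrt_one] at this
    exact this.congr fun n => by rw [inv_div]
  have h2 := h1.mul (rowSq_tendsto hα hβ)
  have h3 : Tendsto (fun n : ℕ => √((n : ℝ) + 1) * rowSq α β n / (rho ^ n) ^ 2) atTop
      (𝓝 (1 * dlim α β)) := by
    refine h2.congr' ?_
    filter_upwards [eventually_gt_atTop 0] with n hn
    have hn' : (0 : ℝ) < n := by positivity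
    have hs0 : √(n : ℝ) ≠ 0 := (Real.sqrt_pos.mpr hn').ne'
    rw [Real.sqrt_div (by positivity)]
    field_simp
  obtain ⟨C, hC⟩ := h3.bddAbove_range
  refine ⟨max C 0, le_max_right _ _, fun n => le_max_of_le_left (hC ⟨n, rfl⟩)⟩

/-- The trace is summed from the last row backwards: the terms are asymptotically geometric with
ratio `rho⁻²`, and `rowSq_bound` justifies passing to the limit under the sum (Tannery). -/
theorem trace_tendsto :
    Tendsto (fun N : ℕ => √(N : ℝ) * (∑ j ∈ Finset.range (N + 1), rowSq α β j) / (rho ^ N) ^ 2)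
      atTop (𝓝 (dlim α β / (1 - (rho ^ 2)⁻¹))) := by
  obtain ⟨C, hC0, hC⟩ := rowSq_bound hα hβ
  have hrho := rho_pos
  have hr2 : (rho ^ 2)⁻¹ < 1 := inv_lt_one_of_one_lt₀ (one_lt_pow₀ rho_gt two_ne_zero)
  have hr0 : 0 ≤ (rho ^ 2)⁻¹ := by positivity
  set x := (rho ^ 2)⁻¹ with hx
  set f : ℕ → ℕ → ℝ := fun N i =>
    if i ≤ N then √(N : ℝ) * rowSq α β (N - i) / (rho ^ N) ^ 2 else 0 with hf
  have hsum : Summable fun i : ℕ => C * (((i : ℝ) + 1) * x ^ i) := by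
    refine Summable.mul_left _ ?_
    have h1 := summable_pow_mul_geometric_of_norm_lt_one 1
      (show ‖x‖ < 1 by rwa [Real.norm_of_nonneg hr0])
    have h2 := summable_geometric_of_lt_one hr0 hr2
    refine (h1.add h2).congr fun i => ?_
    ring
  have hpow (k i : ℕ) : (rho ^ (k + i)) ^ 2 = (rho ^ k) ^ 2 * (rho ^ 2) ^ i := by
    rw [pow_add, mul_pow, ← pow_mul _ i 2, mul_comm i 2, pow_mul]
  have hlim : ∀ i, Tendsto (fun N => f N i) atTop (𝓝 (dlim α β * x ^ i)) := by
    intro i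
    rw [← tendsto_add_atTop_iff_nat i]
    have h1 : Tendsto (fun k : ℕ => √(((k : ℝ) + i) / k)) atTop (𝓝 1) := by
      have := ((div_add_tendsto i).inv₀ one_ne_zero).sqrt
      rw [inv_one, Real.sqrt_one] at this
      exact this.congr fun n => by rw [inv_div]
    have h2 := (h1.mul (rowSq_tendsto hα hβ)).mul_const (x ^ i)
    rw [one_mul] at h2
    refine h2.congr' ?_
    filter_upwards [eventually_gt_atTop 0] with k hk
    have hk' : (0 : ℝ) < k := by positivity
    have hs0 : √(k : ℝ) ≠ 0 := (Real.sqrt_pos.mpr hk').ne'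
    simp only [hf]
    rw [if_pos (Nat.le_add_left _ _), Nat.add_sub_cancel, hpow, Real.sqrt_div (by positivity), hx,
      inv_pow]
    push_cast
    field_simp
  have hbound : ∀ N i, ‖f N i‖ ≤ C * (((i : ℝ) + 1) * x ^ i) := by
    intro N i
    simp only [hf]
    split_ifs with h
    · obtain ⟨k, rfl⟩ : ∃ k, N = k + i := ⟨N - i, by omega⟩
      have hrow := rowSq_nonneg (α := α) (β := β) k
      rw [Nat.add_sub_cancel, hpow, Real.norm_of_nonneg (by positivity)]
      have h1 : √((k + i : ℕ) : ℝ) ≤ √((k : ℝ) + 1) * ((i : ℝ) + 1) := by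
        rw [Real.sqrt_le_left (by positivity), mul_pow, Real.sq_sqrt (by positivity)]
        push_cast
        have : (0 : ℝ) ≤ k * i := by positivity
        have : (0 : ℝ) ≤ k * (i : ℝ) ^ 2 := by positivity
        nlinarith
      calc √((k + i : ℕ) : ℝ) * rowSq α β k / ((rho ^ k) ^ 2 * (rho ^ 2) ^ i)
          ≤ √((k : ℝ) + 1) * ((i : ℝ) + 1) * rowSq α β k / ((rho ^ k) ^ 2 * (rho ^ 2) ^ i) := by
            gcongr
        _ = √((k : ℝ) + 1) * rowSq α β k / (rho ^ k) ^ 2 * (((i : ℝ) + 1) * x ^ i) := by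
            rw [hx, inv_pow]; field_simp
        _ ≤ C * (((i : ℝ) + 1) * x ^ i) := by
            gcongr; exact hC k
    · rw [norm_zero]; positivity
  have key := tendsto_tsum_of_dominated_convergence (𝓕 := atTop) hsum hlim
    (Eventually.of_forall hbound)
  rw [tsum_mul_left, tsum_geometric_of_lt_one hr0 hr2, ← div_eq_mul_inv] at key
  refine key.congr fun N => ?_
  rw [tsum_eq_sum (s := Finset.range (N + 1))]
  · rw [← Finset.sum_range_reflect, Finset.mul_sum, Finset.sum_div]
    refine Finset.sum_congr rfl fun i hi => ?_
    have hi' := Finset.mem_range.mp hi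
    simp only [hf]
    rw [if_pos (by omega), Nat.add_sub_cancel, Nat.sub_sub_self (by omega)]
  · intro i hi
    have hi' : ¬ i ≤ N := by simpa [Nat.lt_succ_iff] using hi
    simp only [hf]
    rw [if_neg hi']

/-- The two bounds of `eigen_bounds` determine the limit: the trace gives the lower bound, and the
last `I` rows alone give upper bounds which converge to the same value as `I → ∞`. -/
theorem lam_tendsto (lam : ℕ → ℝ)
    (h1 : ∀ N, 1 ≤ lam N * ∑ j ∈ Finset.range (N + 1), rowSq α β j)
    (h2 : ∀ N, lam N * ∑ j ∈ Finset.range (N + 1),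
      (∑ m ∈ Finset.range (N + 1), coeffAbs α β j m * coeffAbs α β N m) ^ 2 ≤ rowSq α β N) :
    Tendsto (fun N : ℕ => lam N * (rho ^ N) ^ 2 / √(N : ℝ)) atTop
      (𝓝 ((1 - (rho ^ 2)⁻¹) / dlim α β)) := by
  have hrho := rho_pos
  have hD := dlim_pos α β
  have hr2 : (rho ^ 2)⁻¹ < 1 := inv_lt_one_of_one_lt₀ (one_lt_pow₀ rho_gt two_ne_zero)
  have hr0 : 0 ≤ (rho ^ 2)⁻¹ := by positivity
  have hlam (N : ℕ) : 0 ≤ lam N := by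
    have hS : 0 ≤ ∑ j ∈ Finset.range (N + 1), rowSq α β j :=
      Finset.sum_nonneg fun j _ => rowSq_nonneg j
    by_contra hcon
    have := mul_nonpos_of_nonpos_of_nonneg (not_le.mp hcon).le hS
    linarith [h1 N]
  have hL0 (N : ℕ) : 0 ≤ lam N * (rho ^ N) ^ 2 / √(N : ℝ) := by
    have := hlam N
    positivity
  rw [tendsto_order]
  constructor
  · intro a ha
    have hT := (trace_tendsto hα hβ).inv₀ (by
      have : 0 < 1 - (rho ^ 2)⁻¹ := by linarith
      positivity)
    rw [inv_div] at hT
    filter_upwards [hT.eventually (lt_mem_nhds ha), eventually_gt_atTop 0] with N hN hN0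
    refine hN.trans_le ?_
    have hs0 : 0 < √(N : ℝ) := Real.sqrt_pos.mpr (by positivity)
    have hS : 0 < ∑ j ∈ Finset.range (N + 1), rowSq α β j := by
      have := h1 N
      by_contra hcon
      have := mul_nonpos_of_nonneg_of_nonpos (hlam N) (not_lt.mp hcon)
      linarith
    have h := h1 N
    set S := ∑ j ∈ Finset.range (N + 1), rowSq α β j
    rw [inv_div, div_le_div_iff₀ (by positivity) hs0]
    calc (rho ^ N) ^ 2 * √(N : ℝ) = 1 * ((rho ^ N) ^ 2 * √(N : ℝ)) := by ring
      _ ≤ lam N * S * ((rho ^ N) ^ 2 * √(N : ℝ)) := by gcongr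
      _ = _ := by ring
  · intro b hb
    -- Only the last `I` rows are kept, with `I` so large that the truncated geometric sum suffices.
    have hgeo : Tendsto (fun I : ℕ => dlim α β /
        ∑ i ∈ Finset.range I, (dlim α β * rho⁻¹ ^ i) ^ 2) atTop
        (𝓝 ((1 - (rho ^ 2)⁻¹) / dlim α β)) := by
      have hs := ((hasSum_geometric_of_lt_one hr0 hr2).mul_left (dlim α β ^ 2)).tendsto_sum_nat
      have h0 : dlim α β ^ 2 * (1 - (rho ^ 2)⁻¹)⁻¹ ≠ 0 := by
        have : 0 < 1 - (rho ^ 2)⁻¹ := by linarith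
        positivity
      have h3 := (tendsto_const_nhds (x := dlim α β)).div hs h0
      have e : dlim α β / (dlim α β ^ 2 * (1 - (rho ^ 2)⁻¹)⁻¹) =
          (1 - (rho ^ 2)⁻¹) / dlim α β := by
        field_simp
      rw [e] at h3
      refine h3.congr fun I => ?_
      simp only [Pi.div_apply]
      congr 1
      refine Finset.sum_congr rfl fun i _ => ?_
      rw [mul_pow, ← pow_mul, mul_comm i 2, pow_mul, inv_pow rho 2]
    obtain ⟨I, hI, hI1⟩ := ((hgeo.eventually (gt_mem_nhds hb)).and (eventually_gt_atTop 0)).exists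
    choose q hq hqle using cross_lower hα hβ
    have hsumpos : 0 < ∑ i ∈ Finset.range I, (dlim α β * rho⁻¹ ^ i) ^ 2 :=
      Finset.sum_pos (fun i _ => by positivity) ⟨0, Finset.mem_range.mpr hI1⟩
    have hsum : Tendsto (fun N => ∑ i ∈ Finset.range I, q i N ^ 2) atTop
        (𝓝 (∑ i ∈ Finset.range I, (dlim α β * rho⁻¹ ^ i) ^ 2)) :=
      tendsto_finsetSum _ fun i _ => (hq i).pow 2
    have hquot := (rowSq_tendsto hα hβ).div hsum hsumpos.ne'
    have hqpos : ∀ᶠ N in atTop, ∀ i ∈ Finset.range I, 0 ≤ q i N := by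
      rw [Filter.eventually_all_finset]
      intro i _
      exact ((hq i).eventually (lt_mem_nhds (by positivity))).mono fun N h => h.le
    have hqle' : ∀ᶠ N : ℕ in atTop, ∀ i ∈ Finset.range I, q i N ≤ √(N : ℝ) *
        (∑ m ∈ Finset.range (N + 1), coeffAbs α β (N - i) m * coeffAbs α β N m) /
          (rho ^ N) ^ 2 := by
      rw [Filter.eventually_all_finset]
      exact fun i _ => hqle i
    filter_upwards [hquot.eventually (gt_mem_nhds hI), hqpos, hqle',
      hsum.eventually (lt_mem_nhds hsumpos), eventually_gt_atTop 0, eventually_ge_atTop I]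
      with N g1 g2 g3 g4 g5 g6
    refine lt_of_le_of_lt ?_ g1
    have hs0 : 0 < √(N : ℝ) := Real.sqrt_pos.mpr (by positivity)
    have hR : 0 < (rho ^ N) ^ 2 := by positivity
    set c : ℕ → ℝ := fun j => ∑ m ∈ Finset.range (N + 1), coeffAbs α β j m * coeffAbs α β N m
      with hc
    simp only [Pi.div_apply]
    rw [le_div_iff₀ g4]
    have k1 : ∑ i ∈ Finset.range I, q i N ^ 2 ≤
        (√(N : ℝ) / (rho ^ N) ^ 2) ^ 2 * ∑ j ∈ Finset.range (N + 1), c j ^ 2 := by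
      calc ∑ i ∈ Finset.range I, q i N ^ 2
          ≤ ∑ i ∈ Finset.range I, (√(N : ℝ) / (rho ^ N) ^ 2) ^ 2 * c (N - i) ^ 2 := by
            refine Finset.sum_le_sum fun i hi => ?_
            rw [← mul_pow, div_mul_eq_mul_div]
            exact pow_le_pow_left₀ (g2 i hi) (g3 i hi) 2
        _ ≤ ∑ i ∈ Finset.range (N + 1), (√(N : ℝ) / (rho ^ N) ^ 2) ^ 2 * c (N - i) ^ 2 :=
            Finset.sum_le_sum_of_subset_of_nonneg
              (Finset.range_mono (by omega)) fun i _ _ => by positivity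
        _ = _ := by
            rw [← Finset.mul_sum, ← Finset.sum_range_reflect (fun j => c j ^ 2)]
            simp only [Nat.add_sub_cancel]
    calc lam N * (rho ^ N) ^ 2 / √(N : ℝ) * ∑ i ∈ Finset.range I, q i N ^ 2
        ≤ lam N * (rho ^ N) ^ 2 / √(N : ℝ) *
          ((√(N : ℝ) / (rho ^ N) ^ 2) ^ 2 * ∑ j ∈ Finset.range (N + 1), c j ^ 2) :=
          mul_le_mul_of_nonneg_left k1 (hL0 N)
      _ = √(N : ℝ) * (lam N * ∑ j ∈ Finset.range (N + 1), c j ^ 2) / (rho ^ N) ^ 2 := by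
          field_simp
      _ ≤ √(N : ℝ) * rowSq α β N / (rho ^ N) ^ 2 := by
          gcongr; exact h2 N

end

/-! ### The constant -/

theorem sqrt_pi_eq : √(Real.pi / (4 * √2)) = Real.pi ^ ((1 : ℝ) / 2) * 2 ^ (-((5 : ℝ) / 4)) := by
  have e : 4 * √2 = (2 : ℝ) ^ ((5 : ℝ) / 2) := by
    rw [Real.sqrt_eq_rpow, show (4 : ℝ) = 2 ^ (2 : ℝ) by norm_num,
      ← Real.rpow_add (by norm_num)]
    norm_num
  rw [e, Real.sqrt_eq_rpow, Real.div_rpow Real.pi_pos.le (by positivity), ← Real.rpow_mul (by norm_num),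
    Real.rpow_neg (by norm_num), div_eq_mul_inv (_ ^ _)]
  norm_num

/-- The limit `dlim` in closed form. It combines `(1 + tz) / tz = 1 + √2` with the constants of
Stirling's formula and of the Gaussian integral. -/
theorem dlim_eq (α β : ℝ) : dlim α β = (1 + √2) ^ 2 * (1 + √2) ^ (2 * α) *
    (1 + 1 / √2) ^ (2 * β) * (Real.pi ^ ((3 : ℝ) / 2))⁻¹ * 2 ^ (-((5 : ℝ) / 4)) := by
  have ht : 0 < tz := by linarith [tz_gt]
  have ht1 : 0 < 1 + tz := by linarith
  have h1 : ((1 + tz) ^ (α + β) * tz ^ (-α)) ^ 2 = (1 + √2) ^ (2 * α) * (1 + tz) ^ (2 * β) := by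
    have e : 1 + √2 = (1 + tz) / tz := by
      rw [eq_div_iff ht.ne', tz_eq]; linarith [sqrt2_sq]
    rw [e, Real.div_rpow ht1.le ht.le, Real.rpow_add ht1, Real.rpow_neg ht.le, mul_comm 2 α,
      mul_comm 2 β, Real.rpow_mul ht1.le, Real.rpow_mul ht.le, Real.rpow_mul ht1.le,
      Real.rpow_two, Real.rpow_two, Real.rpow_two]
    field_simp
  have h2 : Real.pi ^ ((1 : ℝ) / 2) = Real.pi ^ 2 * (Real.pi ^ ((3 : ℝ) / 2))⁻¹ := by
    rw [← Real.rpow_neg Real.pi_pos.le, ← Real.rpow_two, ← Real.rpow_add Real.pi_pos]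
    norm_num
  have hpi := Real.pi_pos
  have hs := sqrt2_pos
  rw [dlim, wlim, h1, sqrt_pi_eq, h2, div_pow, mul_pow, sqrt2_sq, show 1 + 1 / √2 = 1 + tz from rfl]
  field_simp

/-- The constant of the theorem, through `1 - rho⁻² = 4√2 / rho`. -/
theorem const_eq (α β : ℝ) :
    2 ^ ((15 : ℝ) / 4) * Real.pi ^ ((3 : ℝ) / 2) * (1 + √2) ^ (-(2 * α)) *
      (1 + 1 / √2) ^ (-(2 * β)) * (1 + √2) ^ (-4 : ℝ) = (1 - (rho ^ 2)⁻¹) / dlim α β := by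
  have hs := sqrt2_pos
  have hpi := Real.pi_pos
  have hu : 0 < 1 + √2 := by positivity
  have hv : 0 < 1 + 1 / √2 := by positivity
  have e : (2 : ℝ) ^ ((15 : ℝ) / 4) = 4 * √2 * 2 ^ ((5 : ℝ) / 4) := by
    rw [Real.sqrt_eq_rpow, show (4 : ℝ) = 2 ^ (2 : ℝ) by norm_num, ← Real.rpow_add (by norm_num),
      ← Real.rpow_add (by norm_num)]
    norm_num
  have e4 : (1 + √2) ^ (-4 : ℝ) = ((1 + √2) ^ 4)⁻¹ := by
    rw [Real.rpow_neg hu.le]; norm_cast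
  have hr : 1 - (rho ^ 2)⁻¹ = 4 * √2 * ((1 + √2) ^ 2)⁻¹ := by
    have h3 : rho ^ 2 - 1 = 4 * √2 * rho := by
      rw [rho]
      linear_combination √2 ^ 2 * sqrt2_sq
    have h0 := rho_pos
    rw [← rho]
    field_simp
    linarith
  rw [hr, dlim_eq, e, e4, Real.rpow_neg hu.le, Real.rpow_neg hv.le, Real.rpow_neg (by norm_num)]
  have a1 := (Real.rpow_pos_of_pos hu (2 * α)).ne'
  have a2 := (Real.rpow_pos_of_pos hv (2 * β)).ne'
  have a3 := (Real.rpow_pos_of_pos hpi ((3 : ℝ) / 2)).ne'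
  have a4 := (Real.rpow_pos_of_pos (show (0 : ℝ) < 2 by norm_num) ((5 : ℝ) / 4)).ne'
  generalize (1 + √2) ^ (2 * α) = A at *
  generalize (1 + 1 / √2) ^ (2 * β) = B at *
  generalize Real.pi ^ ((3 : ℝ) / 2) = P at *
  generalize (2 : ℝ) ^ ((5 : ℝ) / 4) = T at *
  field_simp

end JacobiHankel

open JacobiHankel

/-- The smallest eigenvalue `λ_N` of the `(N+1)×(N+1)` Hankel matrix of moments of the
weight `x^α (1-x)^β` on `[0,1]` satisfies
`λ_N ≃ 2^(15/4) π^(3/2) (1+√2)^(-2α) (1+1/√2)^(-2β) N^(1/2) (1+√2)^(-4(N+1))`. -/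
theorem smallest_eigenvalue_hankel_jacobi_asymptotic
    (α β : ℝ) (hα : -1 < α) (hβ : -1 < β)
    (H : (N : ℕ) → Matrix (Fin (N + 1)) (Fin (N + 1)) ℝ)
    (hH : ∀ N (m n : Fin (N + 1)),
      H N m n = Real.Gamma (α + (m : ℕ) + (n : ℕ) + 1) * Real.Gamma (β + 1) /
        Real.Gamma (α + β + (m : ℕ) + (n : ℕ) + 2))
    (lam : ℕ → ℝ)
    (hmem : ∀ N, lam N ∈ spectrum ℝ (H N))
    (hmin : ∀ N, ∀ μ ∈ spectrum ℝ (H N), lam N ≤ μ) :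
    Tendsto (fun N : ℕ => lam N /
        (2 ^ ((15 : ℝ) / 4) * Real.pi ^ ((3 : ℝ) / 2) *
          (1 + Real.sqrt 2) ^ (-(2 * α)) * (1 + 1 / Real.sqrt 2) ^ (-(2 * β)) *
          (N : ℝ) ^ ((1 : ℝ) / 2) * (1 + Real.sqrt 2) ^ (-(4 * ((N : ℝ) + 1)))))
      atTop (nhds 1) := by
  have hb (N : ℕ) := eigen_bounds (moment α β) (coeff α β) N
    (fun n m h => by rw [coeff, coeffAbs_zero_of_lt h, mul_zero])
    (fun n k h => coeff_orth hα hβ h) (fun n => coeff_norm hα hβ n) (H N)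
    (fun m n => by
      rw [hH, moment]
      push_cast
      congr 3 <;> ring) (lam N) (hmem N) (hmin N)
  have hsign (j k m : ℕ) : coeff α β j m * coeff α β k m = coeffAbs α β j m * coeffAbs α β k m := by
    rw [coeff, coeff, mul_mul_mul_comm, ← pow_add, Even.neg_one_pow ⟨m, rfl⟩, one_mul]
  have hrow (N j : ℕ) (hj : j ≤ N) :
      ∑ m ∈ Finset.range (N + 1), coeff α β j m ^ 2 = rowSq α β j := by
    rw [rowSq, ← Finset.sum_subset (Finset.range_mono (show j + 1 ≤ N + 1 by omega))]
    · exact Finset.sum_congr rfl fun m _ => by rw [sq, sq, hsign]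
    · intro m _ hm
      have : j < m := by simpa [Nat.lt_succ_iff] using hm
      rw [coeff, coeffAbs_zero_of_lt this, mul_zero, zero_pow two_ne_zero]
  have h := lam_tendsto hα hβ lam
    (fun N => by
      refine (hb N).1.trans_eq ?_
      congr 1
      exact Finset.sum_congr rfl fun j hj => hrow N j (by
        have := Finset.mem_range.mp hj
        omega))
    (fun N => by
      have := (hb N).2
      rw [hrow N N le_rfl] at this
      simpa only [hsign] using this)
  have hs2 := sqrt2_pos
  have hlim0 : (1 - (rho ^ 2)⁻¹) / dlim α β ≠ 0 := by
    rw [← const_eq]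
    have := Real.pi_pos
    positivity
  have h' := h.div_const ((1 - (rho ^ 2)⁻¹) / dlim α β)
  rw [div_self hlim0] at h'
  refine h'.congr fun N => ?_
  have hp : (1 + √2) ^ (-(4 * ((N : ℝ) + 1))) = ((rho ^ N) ^ 2)⁻¹ * (1 + √2) ^ (-4 : ℝ) := by
    have h0 : (0 : ℝ) < 1 + √2 := by positivity
    rw [rho, ← pow_mul, ← pow_mul, ← Real.rpow_natCast, ← Real.rpow_neg h0.le, ← Real.rpow_add h0]
    congr 1
    push_cast
    ring
  rw [← const_eq, hp, ← Real.sqrt_eq_rpow]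
  simp only [div_eq_mul_inv, mul_inv, inv_inv]
  ring
end

section
/- For each N ∈ ℕ, let H_N be the (N+1)×(N+1) real symmetric matrix with (m,n)-entry 1/(m+n+1) (0 ≤ m,n ≤ N), and let λ_N be its smallest eigenvalue. Then as N → ∞, λ_N / [ 2^(15/4) · π^(3/2) · N^(1/2) · (√2 − 1)^(4N+4) ] tends to 1. -/
open Filter

/-!
Write `n = N + 1` and let `w i = (n + i)! / (i!² (n - 1 - i)!)` for `i < n`, `d i = (-1)^i w i`.
The Hilbert matrix `A` satisfies `A⁻¹ = D A D` with `D = diagonal d`; this follows from the partial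
fraction expansion of `∏_{m ≠ i} (x - (m + 1)) / ∏_k (x + k)` evaluated at `x = j + 1`
(`hilbert_inverse_entry`).

The weights `w i` peak sharply at `i ≈ n / √2`, on a window of width `√n`, where `1 / (i + j + 1)` is
nearly constant. Hence `A⁻¹` is nearly of rank one, and two elementary bounds for `1 / λ` agree
asymptotically (`hilbert_least_eigenvalue_bounds`):

* `1 / λ ≤ tr A⁻¹ = ∑ w i² / (2 i + 1)`, from `i + j + 1 ≥ √(2 i + 1) √(2 j + 1)` and Cauchy–Schwarz;
* `1 / λ ≥ S² / (2 M + S)` with `S = ∑ w i²`, `M = ∑ i w i²`, from the Rayleigh quotient of `A⁻¹` at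
  the vector `d` and the Cauchy–Schwarz inequality for the weights `w i² w j²`.

The three sums are evaluated by Laplace's method (`hilbert_laplace`): if `ψ n i → L` whenever
`i / n → 1 / √2`, then
`∑ w i² ψ n i ~ L κ (1 + √2)^(4 n) √n` with `κ = (4 π²)⁻¹ √(π / (4 √2))`.
The sum, divided by `√n`, is the integral of a step function in the variable
`x = (i - n / √2) / √n`. It converges pointwise to a Gaussian by Stirling's formula and the
second-order expansion of the exponential rate (`tendsto_hilbertWeight`). It is dominated by a
Gaussian because of the product formula `w (i + 1) / w i = (n / (i + 1))² - 1`
(`eventually_hilbertWeight_le`). Consequently both bounds give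
`λ ~ (√2 / κ) √n (1 + √2)^(-4 n)`, and `√2 / κ = 2^(15/4) π^(3/2)`.
-/

/-! ### The inverse of the Hilbert matrix -/

/-- The weight `(n + i)! / (i!² (n - 1 - i)!)`, the absolute value of the `i`-th diagonal entry of
the matrix `D` with `A⁻¹ = D A D`, where `A` is the `n × n` Hilbert matrix. Only the values at `i < n`
are meaningful, the natural subtraction being truncated otherwise. -/
noncomputable def hilbertWeight (n i : ℕ) : ℝ :=
  ((n + i).factorial : ℝ) / ((i.factorial : ℝ) ^ 2 * ((n - 1 - i).factorial : ℝ))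

lemma hilbertWeight_pos (n i : ℕ) : 0 < hilbertWeight n i := by
  unfold hilbertWeight; positivity

lemma prod_range_erase_sub (k r : ℕ) :
    ∏ l ∈ (Finset.range (k + 1 + r)).erase k, ((l : ℝ) - k)
      = (-1) ^ k * k.factorial * r.factorial := by
  induction r with
  | zero =>
    have h1 : (Finset.range (k + 1 + 0)).erase k = Finset.range k := by
      ext l; simp; omega
    rw [h1, ← Finset.prod_range_reflect]
    have h2 : ∀ l ∈ Finset.range k, (((k - 1 - l : ℕ) : ℝ) - k) = (-1) * ((l : ℝ) + 1) := by
      intro l hl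
      have hl := Finset.mem_range.1 hl
      have : ((k - 1 - l : ℕ) : ℝ) + 1 + l = k := by
        exact_mod_cast (by omega : k - 1 - l + 1 + l = k)
      linarith
    rw [Finset.prod_congr rfl h2, Finset.prod_mul_distrib]
    simp [← Finset.prod_range_add_one_eq_factorial]
  | succ r ih =>
    have h1 : (Finset.range (k + 1 + (r + 1))).erase k
        = insert (k + 1 + r) ((Finset.range (k + 1 + r)).erase k) := by
      ext l; simp; omega
    rw [h1, Finset.prod_insert (by simp), ih, Nat.factorial_succ]
    push_cast
    ring

lemma prod_range_add (n k : ℕ) :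
    ∏ m ∈ Finset.range n, ((k : ℝ) + m + 1) = (n + k).factorial / k.factorial := by
  induction n with
  | zero => simp [Nat.factorial_ne_zero]
  | succ n ih =>
    rw [Finset.prod_range_succ, ih, show n + 1 + k = (n + k) + 1 by ring, Nat.factorial_succ]
    push_cast
    field_simp
    ring

/-- The entries of `A D A`, where `A` is the Hilbert matrix, are those of `D⁻¹`. The polynomial
`∏_{m ≠ i} (X - (m + 1))` has degree less than `n`, so it equals its Lagrange interpolant at the
nodes `-k`, `k < n`; the identity is the value of that interpolant at `j + 1`. -/
lemma hilbert_inverse_entry (n i j : ℕ) (hi : i < n) (hj : j < n) :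
    ∑ k ∈ Finset.range n, (-1) ^ k * hilbertWeight n k / (((k : ℝ) + i + 1) * (k + j + 1))
      = if i = j then ((-1) ^ i * hilbertWeight n i)⁻¹ else 0 := by
  open Polynomial in
  set P : ℝ[X] := ∏ m ∈ (Finset.range n).erase i, (X - C ((m : ℝ) + 1)) with hP
  have hcard : ((Finset.range n).erase i).card = n - 1 := by
    rw [Finset.card_erase_of_mem (Finset.mem_range.2 hi), Finset.card_range]
  have hdeg : P.degree < (Finset.range n).card := by
    rw [hP, Polynomial.degree_prod]
    simp only [Polynomial.degree_X_sub_C, Finset.sum_const, hcard, Finset.card_range]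
    simp
    exact_mod_cast hi.pos
  have hinj : Set.InjOn (fun k : ℕ => -(k : ℝ)) (Finset.range n) := by
    intro a _ b _ h
    simpa using h
  have hint := Lagrange.eq_interpolate hinj hdeg
  have hev := congrArg (Polynomial.eval ((j : ℝ) + 1)) hint
  rw [Lagrange.eval_interpolate_not_at_node] at hev
  swap
  · intro k _
    have : (0 : ℝ) ≤ k := by positivity
    have : (0 : ℝ) ≤ j := by positivity
    linarith
  have hPe : ∀ x : ℝ, P.eval x = ∏ m ∈ (Finset.range n).erase i, (x - (m + 1)) := by
    intro x; simp [hP, Polynomial.eval_prod]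
  obtain ⟨N, rfl⟩ : ∃ N, n = N + 1 := ⟨n - 1, by omega⟩
  have hnod : ∀ k ∈ Finset.range (N + 1),
      Lagrange.nodalWeight (Finset.range (N + 1)) (fun k : ℕ => -(k : ℝ)) k
        * ((j : ℝ) + 1 - -(k : ℝ))⁻¹ * P.eval (-(k : ℝ))
      = (-1) ^ N * ((-1) ^ k * hilbertWeight (N + 1) k / (((k : ℝ) + i + 1) * (k + j + 1))) := by
    intro k hk
    have hk' := Finset.mem_range.1 hk
    obtain ⟨r, hr⟩ : ∃ r, N + 1 = k + 1 + r := ⟨N - k, by omega⟩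
    have e1 : Lagrange.nodalWeight (Finset.range (N + 1)) (fun k : ℕ => -(k : ℝ)) k
        = ((-1 : ℝ) ^ k * k.factorial * r.factorial)⁻¹ := by
      rw [Lagrange.nodalWeight, Finset.prod_inv_distrib, hr, ← prod_range_erase_sub]
      congr 1
      refine Finset.prod_congr rfl fun l _ => by ring
    have e2 : P.eval (-(k : ℝ))
        = (-1) ^ N * ((N + 1 + k).factorial / k.factorial / (k + i + 1)) := by
      rw [hPe, ← prod_range_add, ← Finset.mul_prod_erase _ _ (Finset.mem_range.2 hi),
        mul_div_cancel_left₀ _ (by positivity)]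
      have : ∀ m ∈ (Finset.range (N + 1)).erase i,
          (-(k : ℝ) - (m + 1)) = (-1) * (k + m + 1) := fun m _ => by ring
      rw [Finset.prod_congr rfl this, Finset.prod_mul_distrib, Finset.prod_const, hcard]
      simp
    have e3 : N + 1 - 1 - k = r := by omega
    rw [e1, e2, hilbertWeight, e3]
    have hs : ((-1 : ℝ) ^ k)⁻¹ = (-1) ^ k := by
      rw [← inv_pow]; norm_num
    rw [mul_inv, mul_inv, hs, show (j : ℝ) + 1 - -(k : ℝ) = k + j + 1 by ring]
    field_simp
  rw [Finset.sum_congr rfl hnod, ← Finset.mul_sum, Lagrange.eval_nodal, hPe] at hev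
  have hden : ∏ k ∈ Finset.range (N + 1), ((j : ℝ) + 1 - -(k : ℝ))
      = (N + 1 + j).factorial / j.factorial := by
    rw [← prod_range_add]
    exact Finset.prod_congr rfl fun l _ => by ring
  rw [hden] at hev
  have hsq : ((-1 : ℝ) ^ N) * (-1) ^ N = 1 := by
    rw [← mul_pow]; norm_num
  have hfac : ((N + 1 + j).factorial : ℝ) / j.factorial ≠ 0 := by positivity
  set Sm := ∑ k ∈ Finset.range (N + 1),
    (-1) ^ k * hilbertWeight (N + 1) k / (((k : ℝ) + i + 1) * (k + j + 1)) with hSm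
  split_ifs with hij
  · subst hij
    obtain ⟨r, hr⟩ : ∃ r, N + 1 = i + 1 + r := ⟨N - i, by omega⟩
    have e4 : ∏ m ∈ (Finset.range (N + 1)).erase i, ((i : ℝ) + 1 - (m + 1))
        = (-1) ^ N * ((-1) ^ i * i.factorial * r.factorial) := by
      rw [← prod_range_erase_sub, ← hr]
      have : ∀ m ∈ (Finset.range (N + 1)).erase i,
          ((i : ℝ) + 1 - (m + 1)) = (-1) * (m - i) := fun m _ => by ring
      rw [Finset.prod_congr rfl this, Finset.prod_mul_distrib, Finset.prod_const, hcard]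
      simp
    rw [e4] at hev
    have e3 : N + 1 - 1 - i = r := by omega
    have hs : ((-1 : ℝ) ^ i)⁻¹ = (-1) ^ i := by
      rw [← inv_pow]; norm_num
    have : Sm = (-1) ^ i * i.factorial * r.factorial / ((N + 1 + i).factorial / i.factorial) := by
      rw [eq_div_iff hfac]
      linear_combination (-(-1) ^ N) * hev +
        ((-1) ^ i * i.factorial * r.factorial - ((N + 1 + i).factorial / i.factorial) * Sm) * hsq
    rw [this, hilbertWeight, e3, mul_inv, hs]
    field_simp
  · have e4 : ∏ m ∈ (Finset.range (N + 1)).erase i, ((j : ℝ) + 1 - (m + 1)) = 0 := by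
      refine Finset.prod_eq_zero (i := j) ?_ (by ring)
      simp; omega
    rw [e4] at hev
    have h2 : (-1 : ℝ) ^ N ≠ 0 := by positivity
    have := hev.symm
    simp only [mul_eq_zero, hfac, h2, false_or] at this
    exact this

/-! ### Bounds for the least eigenvalue -/

/-- The Hilbert form is nonnegative, being `∫₀¹ (∑ x i tⁱ)² dt`. -/
lemma hilbert_quadForm_nonneg {n : ℕ} (x : Fin n → ℝ) :
    0 ≤ ∑ i, ∑ j, x i * x j / ((i : ℕ) + (j : ℕ) + 1 : ℝ) := by
  have h : ∫ t in (0 : ℝ)..1, (∑ i, x i * t ^ (i : ℕ)) ^ 2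
      = ∑ i, ∑ j, x i * x j / ((i : ℕ) + (j : ℕ) + 1 : ℝ) := by
    have e : ∀ t : ℝ, (∑ i, x i * t ^ (i : ℕ)) ^ 2
        = ∑ i, ∑ j, x i * x j * t ^ ((i : ℕ) + (j : ℕ)) := by
      intro t
      rw [sq, Finset.sum_mul_sum]
      refine Finset.sum_congr rfl fun i _ => Finset.sum_congr rfl fun j _ => ?_
      rw [pow_add]; ring
    simp_rw [e]
    rw [intervalIntegral.integral_finsetSum]
    · refine Finset.sum_congr rfl fun i _ => ?_
      rw [intervalIntegral.integral_finsetSum]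
      · refine Finset.sum_congr rfl fun j _ => ?_
        rw [intervalIntegral.integral_const_mul, integral_pow]
        push_cast
        simp
        ring
      · intro j _
        exact Continuous.intervalIntegrable (by fun_prop) _ _
    · intro i _
      exact Continuous.intervalIntegrable (by fun_prop) _ _
  rw [← h]
  exact intervalIntegral.integral_nonneg (by norm_num) fun t _ => sq_nonneg _

/-- The quadratic form of `A⁻¹ = D A D` is bounded by its trace. -/
lemma hilbert_quadForm_le {n : ℕ} (x d : Fin n → ℝ) :
    ∑ i, ∑ j, (x i * d i) * (x j * d j) / ((i : ℕ) + (j : ℕ) + 1 : ℝ)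
      ≤ (∑ i, x i ^ 2) * ∑ i, d i ^ 2 / (2 * (i : ℕ) + 1) := by
  set r : Fin n → ℝ := fun i => Real.sqrt (2 * (i : ℕ) + 1) with hr
  have hrpos : ∀ i, 0 < r i := fun i => Real.sqrt_pos.2 (by positivity)
  have hrsq : ∀ i, r i ^ 2 = 2 * (i : ℕ) + 1 := fun i => Real.sq_sqrt (by positivity)
  calc _ ≤ ∑ i, ∑ j, (|x i| * (|d i| / r i)) * (|x j| * (|d j| / r j)) := by
        refine Finset.sum_le_sum fun i _ => Finset.sum_le_sum fun j _ => ?_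
        have h1 : r i * r j ≤ (i : ℕ) + (j : ℕ) + 1 := by
          nlinarith [sq_nonneg (r i - r j), hrsq i, hrsq j]
        have h2 := mul_pos (hrpos i) (hrpos j)
        calc _ ≤ |(x i * d i) * (x j * d j)| / ((i : ℕ) + (j : ℕ) + 1 : ℝ) := by
              gcongr; exact le_abs_self _
          _ ≤ |(x i * d i) * (x j * d j)| / (r i * r j) := by gcongr
          _ = _ := by
              simp only [abs_mul]
              have := (hrpos i).ne'
              have := (hrpos j).ne'
              field_simp
    _ = (∑ i, |x i| * (|d i| / r i)) ^ 2 := by rw [sq, Finset.sum_mul_sum]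
    _ ≤ (∑ i, |x i| ^ 2) * ∑ i, (|d i| / r i) ^ 2 := Finset.sum_mul_sq_le_sq_mul_sq _ _ _
    _ = _ := by
        congr 1
        · simp
        · refine Finset.sum_congr rfl fun i _ => ?_
          rw [div_pow, hrsq, sq_abs]

/-- With `S = ∑ p i` and `M = ∑ i p i`, this says that the mean of `1 / (i + j + 1)` with respect to
the weights `p i p j` is at least the inverse `S / (2 M + S)` of the mean of `i + j + 1`. -/
lemma hilbert_quadForm_ge {n : ℕ} (p : Fin n → ℝ) (hp : ∀ i, 0 < p i) :
    (∑ i, p i) ^ 4 ≤ (∑ i, ∑ j, p i * p j / ((i : ℕ) + (j : ℕ) + 1 : ℝ)) *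
      ((∑ i, p i) * (2 * (∑ i, p i * (i : ℕ)) + ∑ i, p i)) := by
  have key := Finset.sum_sq_le_sum_mul_sum_of_sq_le_mul
    (Finset.univ : Finset (Fin n × Fin n))
    (r := fun q => p q.1 * p q.2)
    (f := fun q => p q.1 * p q.2 / ((q.1 : ℕ) + (q.2 : ℕ) + 1 : ℝ))
    (g := fun q => p q.1 * p q.2 * ((q.1 : ℕ) + (q.2 : ℕ) + 1 : ℝ))
    (fun q _ => by have := hp q.1; have := hp q.2; positivity)
    (fun q _ => by have := hp q.1; have := hp q.2; positivity)
    (fun q _ => by field_simp; exact le_rfl)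
  simp only [Fintype.sum_prod_type] at key
  have e1 : ∑ i, ∑ j, p i * p j = (∑ i, p i) ^ 2 := by rw [sq, Finset.sum_mul_sum]
  have e2 : ∑ i, ∑ j, p i * p j * ((i : ℕ) + (j : ℕ) + 1 : ℝ)
      = (∑ i, p i) * (2 * (∑ i, p i * (i : ℕ)) + ∑ i, p i) := by
    have : ∀ i j, p i * p j * ((i : ℕ) + (j : ℕ) + 1 : ℝ)
        = (p i * (i : ℕ)) * p j + p i * (p j * (j : ℕ)) + p i * p j := fun i j => by ring
    simp_rw [this, Finset.sum_add_distrib, ← Finset.sum_mul_sum]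
    ring
  rw [e1, e2] at key
  calc _ = ((∑ i, p i) ^ 2) ^ 2 := by ring
    _ ≤ _ := key

/-- The diagonal entries `(-1)^i w i` of the matrix `D` with `A⁻¹ = D A D`. -/
noncomputable def hilbertSign (n : ℕ) (i : Fin n) : ℝ := (-1) ^ (i : ℕ) * hilbertWeight n i

lemma hilbertSign_sq (n : ℕ) (i : Fin n) : hilbertSign n i ^ 2 = hilbertWeight n i ^ 2 := by
  rw [hilbertSign, mul_pow, ← pow_mul, mul_comm _ 2, pow_mul]; simp

lemma hilbertSign_ne_zero (n : ℕ) (i : Fin n) : hilbertSign n i ≠ 0 :=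
  mul_ne_zero (by simp) (hilbertWeight_pos n i).ne'

lemma hilbert_mul_inverse {n : ℕ} (A : Matrix (Fin n) (Fin n) ℝ)
    (hA : ∀ i j, A i j = 1 / ((i : ℕ) + (j : ℕ) + 1 : ℝ)) :
    A * (Matrix.diagonal (hilbertSign n) * A * Matrix.diagonal (hilbertSign n)) = 1 := by
  ext i j
  have h := hilbert_inverse_entry n i j i.2 j.2
  rw [Finset.sum_range (fun k => (-1) ^ k * hilbertWeight n k / (((k : ℝ) + i + 1) * (k + j + 1)))]
    at h
  rw [Matrix.mul_apply]
  simp only [Matrix.mul_diagonal, Matrix.diagonal_mul, hA]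
  have : ∀ k : Fin n, 1 / ((i : ℕ) + (k : ℕ) + 1 : ℝ) *
      (hilbertSign n k * (1 / ((k : ℕ) + (j : ℕ) + 1 : ℝ)) * hilbertSign n j)
      = ((-1) ^ (k : ℕ) * hilbertWeight n k / (((k : ℕ) + (i : ℕ) + 1 : ℝ) * ((k : ℕ) + (j : ℕ) + 1)))
        * hilbertSign n j := by
    intro k
    have e : hilbertSign n k = (-1) ^ (k : ℕ) * hilbertWeight n k := rfl
    rw [← e, add_comm ((i : ℕ) : ℝ)]
    field_simp
  rw [Finset.sum_congr rfl fun k _ => this k, ← Finset.sum_mul, h, Matrix.one_apply]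
  by_cases hij : i = j
  · subst hij
    have e : hilbertSign n i = (-1) ^ (i : ℕ) * hilbertWeight n i := rfl
    simp only [if_true, ← e]
    exact inv_mul_cancel₀ (hilbertSign_ne_zero n i)
  · have : (i : ℕ) ≠ j := fun h => hij (Fin.ext h)
    simp [hij, this]

/-- The least eigenvalue `l` of the Hilbert matrix lies between `1 / tr A⁻¹` and the inverse of a
lower bound for the Rayleigh quotient of `A⁻¹` at the diagonal `d` of `D`. -/
lemma hilbert_least_eigenvalue_bounds {n : ℕ} (A : Matrix (Fin n) (Fin n) ℝ)
    (hA : ∀ i j, A i j = 1 / ((i : ℕ) + (j : ℕ) + 1 : ℝ)) (l : ℝ)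
    (hl : l ∈ spectrum ℝ A) (hmin : ∀ μ ∈ spectrum ℝ A, l ≤ μ) :
    1 ≤ l * (∑ i ∈ Finset.range n, hilbertWeight n i ^ 2 / (2 * (i : ℝ) + 1)) ∧
    l * (∑ i ∈ Finset.range n, hilbertWeight n i ^ 2) ^ 2 ≤
      2 * (∑ i ∈ Finset.range n, hilbertWeight n i ^ 2 * (i : ℝ)) +
        ∑ i ∈ Finset.range n, hilbertWeight n i ^ 2 := by
  set d := hilbertSign n with hd
  set B := Matrix.diagonal d * A * Matrix.diagonal d with hB
  have hAB : A * B = 1 := hilbert_mul_inverse A hA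
  have hBA : B * A = 1 := mul_eq_one_comm.1 hAB
  have hquad : ∀ x : Fin n → ℝ, x ⬝ᵥ A.mulVec x
      = ∑ i, ∑ j, x i * x j / ((i : ℕ) + (j : ℕ) + 1 : ℝ) := by
    intro x
    simp only [dotProduct, Matrix.mulVec, Finset.mul_sum, hA]
    refine Finset.sum_congr rfl fun i _ => Finset.sum_congr rfl fun j _ => by ring
  have hquadB : ∀ x : Fin n → ℝ, x ⬝ᵥ B.mulVec x
      = ∑ i, ∑ j, (x i * d i) * (x j * d j) / ((i : ℕ) + (j : ℕ) + 1 : ℝ) := by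
    intro x
    simp only [dotProduct, Matrix.mulVec, Finset.mul_sum, hB, Matrix.mul_diagonal,
      Matrix.diagonal_mul, hA]
    refine Finset.sum_congr rfl fun i _ => Finset.sum_congr rfl fun j _ => by ring
  have hsymm : A.IsHermitian := by
    ext i j
    simp only [Matrix.conjTranspose_apply, hA, star_trivial]
    rw [add_comm ((j : ℕ) : ℝ)]
  have hpsd : A.PosSemidef := by
    refine .of_dotProduct_mulVec_nonneg hsymm fun x => ?_
    rw [star_trivial, hquad]
    exact hilbert_quadForm_nonneg x
  have hl0 : 0 ≤ l := (Matrix.posSemidef_iff_isHermitian_and_spectrum_nonneg.1 hpsd).2 hl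
  have hdsq : ∀ i : Fin n, d i ^ 2 = hilbertWeight n i ^ 2 := hilbertSign_sq n
  constructor
  -- An eigenvector satisfies `x = l • A⁻¹ x`, and `A⁻¹` is bounded by its trace.
  · obtain ⟨x, hx⟩ : ∃ x, Module.End.HasEigenvector (Matrix.toLin' A) l x := by
      rw [← Matrix.spectrum_toLin'] at hl
      exact (Module.End.hasEigenvalue_iff_mem_spectrum.2 hl).exists_hasEigenvector
    have hx1 : A.mulVec x = l • x := by simpa using hx.apply_eq_smul
    have hx2 : x = l • B.mulVec x := by
      have := congrArg B.mulVec hx1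
      rwa [Matrix.mulVec_mulVec, hBA, Matrix.one_mulVec, Matrix.mulVec_smul] at this
    have hxx : 0 < ∑ i, x i ^ 2 := by
      obtain ⟨i, hi⟩ := Function.ne_iff.1 hx.2
      exact Finset.sum_pos' (fun i _ => sq_nonneg _) ⟨i, Finset.mem_univ _, sq_pos_of_ne_zero hi⟩
    have h1 : ∑ i, x i ^ 2 = l * (x ⬝ᵥ B.mulVec x) := by
      rw [← smul_eq_mul, ← dotProduct_smul, ← hx2]
      simp [dotProduct, sq]
    have h2 := hilbert_quadForm_le x d
    rw [← hquadB] at h2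
    rw [Finset.sum_range (fun i => hilbertWeight n i ^ 2 / (2 * (i : ℝ) + 1))]
    simp only [hdsq] at h2
    have h3 := mul_le_mul_of_nonneg_left h2 hl0
    rw [← h1] at h3
    refine le_of_mul_le_mul_left ?_ hxx
    linarith
  · have hRay : ∀ x : Fin n → ℝ, l * (x ⬝ᵥ x) ≤ x ⬝ᵥ A.mulVec x := by
      have hp : (A - algebraMap ℝ _ l).PosSemidef := by
        rw [Matrix.posSemidef_iff_isHermitian_and_spectrum_nonneg]
        constructor
        · refine hsymm.sub ?_
          rw [Matrix.algebraMap_eq_diagonal]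
          exact Matrix.isHermitian_diagonal _
        · rw [← spectrum.sub_singleton_eq]
          rintro _ ⟨a, ha, b, hb, rfl⟩
          simp only [Set.mem_singleton_iff] at hb
          subst hb
          simpa using hmin a ha
      intro x
      have := hp.dotProduct_mulVec_nonneg x
      rw [star_trivial, Matrix.sub_mulVec, dotProduct_sub, Algebra.algebraMap_eq_smul_one,
        Matrix.smul_mulVec, Matrix.one_mulVec, dotProduct_smul, smul_eq_mul] at this
      linarith
    -- The Rayleigh bound for `A` at `A⁻¹ d` gives `l * (d ⬝ᵥ A⁻¹ d) ≤ d ⬝ᵥ d`.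
    set y := B.mulVec d with hy
    have hAy : A.mulVec y = d := by rw [hy, Matrix.mulVec_mulVec, hAB, Matrix.one_mulVec]
    set S := ∑ i ∈ Finset.range n, hilbertWeight n i ^ 2 with hS
    have hSd : ∑ i, d i ^ 2 = S := by
      rw [hS, Finset.sum_range]; exact Finset.sum_congr rfl fun i _ => hdsq i
    set Q := d ⬝ᵥ y with hQ
    have h1 := hRay y
    rw [hAy, dotProduct_comm y d, ← hQ] at h1
    have hcs : Q ^ 2 ≤ S * (y ⬝ᵥ y) := by
      have := Finset.sum_mul_sq_le_sq_mul_sq Finset.univ d y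
      rw [hSd] at this
      simpa [hQ, dotProduct, sq] using this
    have h2 := hilbert_quadForm_ge (fun i : Fin n => d i ^ 2)
      (fun i => sq_pos_of_ne_zero (hilbertSign_ne_zero n i))
    have hQ' : Q = ∑ i, ∑ j, d i ^ 2 * d j ^ 2 / ((i : ℕ) + (j : ℕ) + 1 : ℝ) := by
      rw [hQ, hy, hquadB]; simp only [sq]
    rw [← hQ', hSd] at h2
    set M := ∑ i ∈ Finset.range n, hilbertWeight n i ^ 2 * (i : ℝ) with hM
    have hMd : ∑ i : Fin n, d i ^ 2 * (i : ℕ) = M := by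
      rw [hM, Finset.sum_range]; exact Finset.sum_congr rfl fun i _ => by rw [hdsq]
    rw [hMd] at h2
    have hn : 0 < n := by
      rcases Nat.eq_zero_or_pos n with rfl | h
      · exact absurd hl (by simp [spectrum.of_subsingleton])
      · exact h
    have hSpos : 0 < S := Finset.sum_pos (fun i _ => pow_pos (hilbertWeight_pos n i) 2) (by simpa using hn.ne')
    have hMnn : 0 ≤ M := Finset.sum_nonneg fun i _ => by positivity
    have hQpos : 0 < Q := by
      by_contra hneg
      have : 0 < S ^ 4 := by positivity
      have : 0 < S * (2 * M + S) := by positivity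
      nlinarith
    have h3 : l * Q ≤ S := by
      have : l * Q ^ 2 ≤ S * Q := by
        calc l * Q ^ 2 ≤ l * (S * (y ⬝ᵥ y)) := by gcongr
          _ = S * (l * (y ⬝ᵥ y)) := by ring
          _ ≤ S * Q := by gcongr
      refine le_of_mul_le_mul_right ?_ hQpos
      linarith
    have h4 : l * S ^ 4 ≤ S * (S * (2 * M + S)) := by
      calc l * S ^ 4 ≤ l * (Q * (S * (2 * M + S))) := by gcongr
        _ = (l * Q) * (S * (2 * M + S)) := by ring
        _ ≤ _ := by gcongr
    have hS2 : 0 < S ^ 2 := by positivity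
    refine le_of_mul_le_mul_right ?_ hS2
    linarith

/-! ### Pointwise asymptotics of the weights -/

/-- The exponential rate of the weights: `w i` is `exp (n * hilbertRate (i / n))` up to a factor that
converges when `i / n` converges in `(0, 1)`. -/
noncomputable def hilbertRate (t : ℝ) : ℝ :=
  (1 + t) * Real.log (1 + t) - 2 * (t * Real.log t) - (1 - t) * Real.log (1 - t)

lemma sqrt_two_div_two_mem : 0 < √2 / 2 ∧ √2 / 2 < 1 := by
  have h := Real.sq_sqrt (show (0 : ℝ) ≤ 2 by norm_num)
  have h0 : 0 < √2 := by positivity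
  constructor
  · positivity
  · nlinarith

lemma hasDerivAt_hilbertRate {t : ℝ} (h0 : 0 < t) (h1 : t < 1) :
    HasDerivAt hilbertRate (Real.log (1 + t) - 2 * Real.log t + Real.log (1 - t)) t := by
  have a := (hasDerivAt_id t).const_add 1
  have b := (hasDerivAt_id t).const_sub 1
  have ha : (1 + t) ≠ 0 := by linarith
  have hb : (1 - t) ≠ 0 := by linarith
  have := ((a.mul (a.log ha)).sub (((hasDerivAt_id t).mul (Real.hasDerivAt_log h0.ne')).const_mul 2)).sub
    (b.mul (b.log hb))
  refine this.congr_deriv ?_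
  simp only [id]
  have := h0.ne'
  field_simp
  ring

/-- The derivative of `hilbertRate` vanishes at `√2 / 2`. -/
lemma hilbertRate_deriv_critical :
    Real.log (1 + √2 / 2) - 2 * Real.log (√2 / 2) + Real.log (1 - √2 / 2) = 0 := by
  obtain ⟨h0, h1⟩ := sqrt_two_div_two_mem
  have h := Real.sq_sqrt (show (0 : ℝ) ≤ 2 by norm_num)
  have e : (1 + √2 / 2) * (1 - √2 / 2) = (√2 / 2) ^ 2 := by nlinarith
  have := congrArg Real.log e
  rw [Real.log_mul (by linarith) (by linarith), Real.log_pow] at this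
  push_cast at this
  linarith

lemma hilbertRate_critical : hilbertRate (√2 / 2) = 2 * Real.log (1 + √2) := by
  obtain ⟨h0, h1⟩ := sqrt_two_div_two_mem
  have h := Real.sq_sqrt (show (0 : ℝ) ≤ 2 by norm_num)
  have h2 : 1 + √2 = (1 + √2 / 2) / (√2 / 2) := by
    field_simp; nlinarith
  rw [h2, Real.log_div (by linarith) h0.ne', hilbertRate]
  have := hilbertRate_deriv_critical
  linear_combination (-(1 - √2 / 2)) * this

/-- Second-order expansion of the rate at its critical point `√2 / 2`, where the second derivative
is `-4 √2`. -/
lemma hilbertRate_taylor :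
    Tendsto (fun t => (hilbertRate t - hilbertRate (√2 / 2)) / (t - √2 / 2) ^ 2)
      (nhdsWithin (√2 / 2) {√2 / 2}ᶜ) (nhds (-(2 * √2))) := by
  obtain ⟨h0, h1⟩ := sqrt_two_div_two_mem
  have h := Real.sq_sqrt (show (0 : ℝ) ≤ 2 by norm_num)
  set g : ℝ → ℝ := fun t => Real.log (1 + t) - 2 * Real.log t + Real.log (1 - t) with hg
  have hgd : HasDerivAt g (-(4 * √2)) (√2 / 2) := by
    have a := ((hasDerivAt_id (√2 / 2)).const_add 1).log (by simp only [id]; linarith)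
    have b := ((hasDerivAt_id (√2 / 2)).const_sub 1).log (by simp only [id]; linarith)
    refine ((a.sub ((Real.hasDerivAt_log h0.ne').const_mul 2)).add b).congr_deriv ?_
    simp only [id]
    have h3 : 1 - √2 / 2 ≠ 0 := by linarith
    have h4 : 1 + √2 / 2 ≠ 0 := by linarith
    have h5 : 2 - √2 ≠ 0 := by linarith
    have h6 : 2 + √2 ≠ 0 := by linarith
    have h7 : √2 ≠ 0 := by positivity
    field_simp
    ring_nf
    have h8 : √2 ^ 3 = 2 * √2 := by rw [pow_succ, h]
    have h9 : √2 ^ 4 = 4 := by rw [show √2 ^ 4 = (√2 ^ 2) ^ 2 by ring, h]; norm_num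
    try nlinarith
  have hslope := hasDerivAt_iff_tendsto_slope.1 hgd
  refine HasDerivAt.lhopital_zero_nhdsNE (f' := g) (g' := fun t => 2 * (t - √2 / 2)) ?_ ?_ ?_ ?_ ?_ ?_
  · have : ∀ᶠ t in nhds (√2 / 2), t ∈ Set.Ioo (0 : ℝ) 1 := Ioo_mem_nhds h0 h1
    filter_upwards [this.filter_mono nhdsWithin_le_nhds] with t ht
    exact (hasDerivAt_hilbertRate ht.1 ht.2).sub_const _
  · refine Eventually.of_forall fun t => ?_
    have := ((hasDerivAt_id t).sub_const (√2 / 2)).pow 2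
    refine this.congr_deriv ?_
    simp
  · filter_upwards [self_mem_nhdsWithin] with t ht
    simpa [sub_eq_zero] using ht
  · have : ContinuousAt (fun t => hilbertRate t - hilbertRate (√2 / 2)) (√2 / 2) :=
      (hasDerivAt_hilbertRate h0 h1).continuousAt.sub continuousAt_const
    have := this.tendsto.mono_left (nhdsWithin_le_nhds (s := {√2 / 2}ᶜ))
    simpa using this
  · have : ContinuousAt (fun t : ℝ => (t - √2 / 2) ^ 2) (√2 / 2) := by fun_prop
    have := this.tendsto.mono_left (nhdsWithin_le_nhds (s := {√2 / 2}ᶜ))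
    simpa using this
  · have := hslope.const_mul (1 / 2)
    rw [show 1 / 2 * -(4 * √2) = -(2 * √2) by ring] at this
    refine this.congr fun t => ?_
    rw [slope_def_field, show g (√2 / 2) = 0 from hilbertRate_deriv_critical, sub_zero]
    rw [← div_div]; ring

lemma factorial_eq_stirlingSeq {m : ℕ} (hm : 0 < m) :
    (m.factorial : ℝ) = Stirling.stirlingSeq m * √(2 * m) * Real.exp (m * Real.log m - m) := by
  have hm' : (0 : ℝ) < m := by exact_mod_cast hm
  have e : Real.exp (m * Real.log m - m) = ((m : ℝ) / Real.exp 1) ^ m := by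
    rw [← Real.exp_log (show 0 < ((m : ℝ) / Real.exp 1) ^ m by positivity), Real.log_pow,
      Real.log_div hm'.ne' (Real.exp_ne_zero _), Real.log_exp]
    congr 1; ring
  rw [e, Stirling.stirlingSeq, mul_assoc, div_mul_cancel₀ _ (by positivity)]

lemma hilbertWeight_eq_stirling {n i : ℕ} (h0 : 0 < i) (h1 : i < n) :
    hilbertWeight n i = (Stirling.stirlingSeq (n + i) /
        (Stirling.stirlingSeq i ^ 2 * Stirling.stirlingSeq (n - i))) *
      (√(1 - (i : ℝ) / n) * √(1 + (i : ℝ) / n) / (2 * ((i : ℝ) / n))) *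
      Real.exp (n * hilbertRate ((i : ℝ) / n)) := by
  obtain ⟨r, rfl⟩ : ∃ r, n = i + (r + 1) := ⟨n - i - 1, by omega⟩
  have hfac : hilbertWeight (i + (r + 1)) i = ((i + (r + 1) + i).factorial : ℝ) * (r + 1 : ℕ) /
      ((i.factorial : ℝ) ^ 2 * ((r + 1).factorial : ℝ)) := by
    rw [hilbertWeight, show i + (r + 1) - 1 - i = r by omega, Nat.factorial_succ r]
    push_cast
    field_simp
  have hs : ∀ m, 0 < m → 0 < Stirling.stirlingSeq m := by
    intro m hm
    obtain ⟨k, rfl⟩ : ∃ k, m = k + 1 := ⟨m - 1, by omega⟩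
    exact Stirling.stirlingSeq'_pos k
  rw [hfac, factorial_eq_stirlingSeq h0, factorial_eq_stirlingSeq (show 0 < r + 1 by omega),
    factorial_eq_stirlingSeq (show 0 < i + (r + 1) + i by omega),
    show i + (r + 1) - i = r + 1 by omega]
  have s1 := hs i h0
  have s2 := hs (r + 1) (Nat.succ_pos r)
  have s3 := hs (i + (r + 1) + i) (by omega)
  set m := r + 1 with hm
  have hm0 : 0 < m := Nat.succ_pos r
  set a : ℝ := (i : ℝ) with ha
  set b : ℝ := (m : ℝ) with hb
  have ha0 : 0 < a := Nat.cast_pos.2 h0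
  have hb0 : 0 < b := Nat.cast_pos.2 hm0
  have c1 : ((i + m + i : ℕ) : ℝ) = 2 * a + b := by push_cast; ring
  have c2 : ((i + m : ℕ) : ℝ) = a + b := by push_cast; ring
  rw [c1, c2]
  have hexp : (a + b) * hilbertRate (a / (a + b))
      = ((2 * a + b) * Real.log (2 * a + b) - (2 * a + b)) - 2 * (a * Real.log a - a)
        - (b * Real.log b - b) := by
    have e1 : 1 + a / (a + b) = (2 * a + b) / (a + b) := by field_simp; ring
    have e2 : 1 - a / (a + b) = b / (a + b) := by field_simp; ring
    rw [hilbertRate, e1, e2, Real.log_div, Real.log_div, Real.log_div]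
    · field_simp; ring
    all_goals positivity
  have hsq : √(1 - a / (a + b)) * √(1 + a / (a + b)) / (2 * (a / (a + b)))
      = √(2 * (2 * a + b)) * b / (√(2 * a) ^ 2 * √(2 * b)) := by
    have e1 : 1 + a / (a + b) = (2 * a + b) / (a + b) := by field_simp; ring
    have e2 : 1 - a / (a + b) = b / (a + b) := by field_simp; ring
    rw [e1, e2, Real.sqrt_div hb0.le, Real.sqrt_div (by positivity),
      Real.sq_sqrt (by positivity), Real.sqrt_mul (by norm_num) (2 * a + b),
      Real.sqrt_mul (by norm_num) b]
    have q1 := Real.sq_sqrt hb0.le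
    have q2 := Real.sq_sqrt (show 0 ≤ a + b by positivity)
    have p1 : 0 < √b := Real.sqrt_pos.2 hb0
    have p2 : 0 < √(a + b) := Real.sqrt_pos.2 (by positivity)
    field_simp
    rw [q1, q2]
    try ring
  rw [hsq, hexp]
  generalize (2 * a + b) * Real.log (2 * a + b) - (2 * a + b) = E₁
  generalize a * Real.log a - a = E₂
  generalize b * Real.log b - b = E₃
  rw [Real.exp_sub, Real.exp_sub, two_mul E₂, Real.exp_add]
  have : 0 < √(2 * a) := Real.sqrt_pos.2 (by positivity)
  have : 0 < √(2 * b) := Real.sqrt_pos.2 (by positivity)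
  field_simp

lemma tendsto_div_of_fluctuation {u : ℕ → ℕ} {x : ℝ}
    (hu : Tendsto (fun n : ℕ => ((u n : ℝ) - √2 / 2 * n) / √n) atTop (nhds x)) :
    Tendsto (fun n : ℕ => (u n : ℝ) / n) atTop (nhds (√2 / 2)) := by
  have h1 : Tendsto (fun n : ℕ => (√(n : ℝ))⁻¹) atTop (nhds 0) :=
    tendsto_inv_atTop_zero.comp (Real.tendsto_sqrt_atTop.comp tendsto_natCast_atTop_atTop)
  have h2 := (hu.mul h1).add_const (√2 / 2)
  rw [mul_zero, zero_add] at h2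
  refine h2.congr' ?_
  filter_upwards [eventually_gt_atTop 0] with n hn
  have hn' : (0 : ℝ) < n := by exact_mod_cast hn
  have := Real.sq_sqrt hn'.le
  have hp : 0 < √(n : ℝ) := Real.sqrt_pos.2 hn'
  field_simp
  rw [this]; ring

/-- Local limit: at indices `u n = n / √2 + x √n + o(√n)` the weights, normalised by
`(1 + √2)^(2 n) = exp (n * hilbertRate (√2 / 2))`, have a Gaussian profile. -/
lemma tendsto_hilbertWeight {u : ℕ → ℕ} {x : ℝ}
    (hu : Tendsto (fun n : ℕ => ((u n : ℝ) - √2 / 2 * n) / √n) atTop (nhds x)) :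
    Tendsto (fun n : ℕ => hilbertWeight n (u n) / (1 + √2) ^ (2 * n)) atTop
      (nhds (1 / (2 * Real.pi) * Real.exp (-(2 * √2 * x ^ 2)))) := by
  obtain ⟨h0, h1⟩ := sqrt_two_div_two_mem
  have hss := Real.sq_sqrt (show (0 : ℝ) ≤ 2 by norm_num)
  have ht := tendsto_div_of_fluctuation hu
  have hmem : ∀ᶠ n : ℕ in atTop, (u n : ℝ) / n ∈ Set.Ioo (0 : ℝ) 1 := ht (Ioo_mem_nhds h0 h1)
  have hn : Tendsto (fun n : ℕ => (n : ℝ)) atTop atTop := tendsto_natCast_atTop_atTop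
  have hev : ∀ᶠ n : ℕ in atTop, 0 < n ∧ 0 < u n ∧ u n < n := by
    filter_upwards [hmem, eventually_gt_atTop 0] with n hn hn0
    have hn' : (0 : ℝ) < n := by exact_mod_cast hn0
    refine ⟨hn0, ?_, ?_⟩
    · have := (div_pos_iff_of_pos_right hn').1 hn.1
      exact_mod_cast this
    · have := (div_lt_one hn').1 hn.2
      exact_mod_cast this
  have hu1 : Tendsto u atTop atTop := by
    rw [← tendsto_natCast_atTop_iff (R := ℝ)]
    refine (ht.pos_mul_atTop h0 hn).congr' ?_
    filter_upwards [hev] with n hn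
    have : (n : ℝ) ≠ 0 := by exact_mod_cast hn.1.ne'
    field_simp
  have hu2 : Tendsto (fun n => n + u n) atTop atTop :=
    tendsto_atTop_mono (fun n => Nat.le_add_right _ _) tendsto_id
  have hu3 : Tendsto (fun n => n - u n) atTop atTop := by
    rw [← tendsto_natCast_atTop_iff (R := ℝ)]
    refine ((ht.const_sub 1).pos_mul_atTop (by linarith) hn).congr' ?_
    filter_upwards [hev] with n hn
    have : (n : ℝ) ≠ 0 := by exact_mod_cast hn.1.ne'
    rw [Nat.cast_sub hn.2.2.le]
    field_simp
  have hS := Stirling.tendsto_stirlingSeq_sqrt_pi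
  have hpi : 0 < √Real.pi := Real.sqrt_pos.2 Real.pi_pos
  have L1 : Tendsto (fun n => Stirling.stirlingSeq (n + u n) /
      (Stirling.stirlingSeq (u n) ^ 2 * Stirling.stirlingSeq (n - u n))) atTop
      (nhds (√Real.pi / (√Real.pi ^ 2 * √Real.pi))) :=
    (hS.comp hu2).div (((hS.comp hu1).pow 2).mul (hS.comp hu3)) (by positivity)
  have L2 : Tendsto (fun n => √(1 - (u n : ℝ) / n) * √(1 + (u n : ℝ) / n) / (2 * ((u n : ℝ) / n)))
      atTop (nhds (√(1 - √2 / 2) * √(1 + √2 / 2) / (2 * (√2 / 2)))) :=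
    ((ht.const_sub 1).sqrt.mul (ht.const_add 1).sqrt).div (ht.const_mul 2) (by positivity)
  have L3 : Tendsto (fun n : ℕ => n * (hilbertRate ((u n : ℝ) / n) - hilbertRate (√2 / 2))) atTop
      (nhds (-(2 * √2) * x ^ 2)) := by
    -- The second-order difference quotient, extended by its limit at `√2 / 2`, can be composed with
    -- `u n / n` even where `u n / n` equals `√2 / 2`.
    have hc := continuousAt_update_same.2 hilbertRate_taylor
    have h2 := hc.tendsto.comp ht
    rw [Function.update_self] at h2
    refine (h2.mul (hu.pow 2)).congr' ?_
    filter_upwards [eventually_gt_atTop 0] with n hn0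
    have hn' : (0 : ℝ) < n := by exact_mod_cast hn0
    have e : (((u n : ℝ) - √2 / 2 * n) / √n) ^ 2 = n * ((u n : ℝ) / n - √2 / 2) ^ 2 := by
      rw [div_pow, Real.sq_sqrt hn'.le]
      field_simp
    rw [e, Function.comp]
    by_cases hx : (u n : ℝ) / n = √2 / 2
    · rw [hx]; simp
    · rw [Function.update_of_ne hx]
      have : (u n : ℝ) / n - √2 / 2 ≠ 0 := sub_ne_zero.2 hx
      rw [div_mul_eq_mul_div, div_eq_iff (pow_ne_zero 2 this)]
      ring
  have L := (L1.mul L2).mul ((Real.continuous_exp.tendsto _).comp L3)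
  have e : √Real.pi / (√Real.pi ^ 2 * √Real.pi)
      * (√(1 - √2 / 2) * √(1 + √2 / 2) / (2 * (√2 / 2))) = 1 / (2 * Real.pi) := by
    rw [← Real.sqrt_mul (by linarith), show (1 - √2 / 2) * (1 + √2 / 2) = (√2 / 2) ^ 2 by nlinarith,
      Real.sqrt_sq h0.le, Real.sq_sqrt Real.pi_pos.le]
    field_simp
  rw [e, neg_mul] at L
  refine L.congr' ?_
  filter_upwards [hev] with n hn
  rw [hilbertWeight_eq_stirling hn.2.1 hn.2.2, mul_div_assoc _ (Real.exp _)]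
  congr 1
  rw [Function.comp_apply, mul_sub, Real.exp_sub, hilbertRate_critical]
  congr 1
  rw [show (n : ℝ) * (2 * Real.log (1 + √2)) = (2 * n : ℕ) * Real.log (1 + √2) by push_cast; ring,
    ← Real.log_pow, Real.exp_log (by positivity)]

/-! ### A uniform Gaussian bound for the weights -/

lemma hilbertWeight_succ {n i : ℕ} (h : i + 1 < n) :
    hilbertWeight n (i + 1)
      = hilbertWeight n i * (((n : ℝ) ^ 2 - (i + 1) ^ 2) / (i + 1) ^ 2) := by
  obtain ⟨r, rfl⟩ : ∃ r, n = i + 2 + r := ⟨n - i - 2, by omega⟩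
  rw [hilbertWeight, hilbertWeight, show i + 2 + r - 1 - (i + 1) = r by omega,
    show i + 2 + r - 1 - i = r + 1 by omega, ← add_assoc, Nat.factorial_succ, Nat.factorial_succ,
    Nat.factorial_succ]
  push_cast
  field_simp
  ring

/-- The weight `w i` divided by the Gaussian `exp (-√2 (i + 1/2 - n/√2)² / n)`. The shift by `1/2`
makes the quotient of consecutive Gaussians an exact exponential of a function linear in `i`. -/
noncomputable def hilbertEnvelope (n i : ℕ) : ℝ :=
  hilbertWeight n i * Real.exp (√2 * ((i : ℝ) + 1 / 2 - √2 / 2 * n) ^ 2 / n)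

lemma hilbertEnvelope_succ {n i : ℕ} (h : i + 1 < n) :
    hilbertEnvelope n (i + 1) = hilbertEnvelope n i *
      ((((n : ℝ) / (i + 1)) ^ 2 - 1) * Real.exp (2 * (√2 * ((i + 1) / n) - 1))) := by
  have hn : (0 : ℝ) < n := by exact_mod_cast (by omega : 0 < n)
  have hss := Real.sq_sqrt (show (0 : ℝ) ≤ 2 by norm_num)
  rw [hilbertEnvelope, hilbertEnvelope, hilbertWeight_succ h]
  have e : √2 * (((i + 1 : ℕ) : ℝ) + 1 / 2 - √2 / 2 * n) ^ 2 / n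
      = √2 * ((i : ℝ) + 1 / 2 - √2 / 2 * n) ^ 2 / n + 2 * (√2 * ((i + 1) / n) - 1) := by
    push_cast
    field_simp
    linear_combination (-4 * (n : ℝ)) * hss
  have e2 : ((n : ℝ) ^ 2 - (i + 1) ^ 2) / (i + 1) ^ 2 = ((n : ℝ) / (i + 1)) ^ 2 - 1 := by
    field_simp
  rw [e, Real.exp_add, e2]
  ring

lemma hilbertEnvelope_pos (n i : ℕ) : 0 < hilbertEnvelope n i :=
  mul_pos (hilbertWeight_pos n i) (Real.exp_pos _)

lemma hilbertEnvelope_le_succ {n i : ℕ} (h : i + 1 < n) (h2 : (i : ℝ) + 1 ≤ √2 / 2 * n) :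
    hilbertEnvelope n i ≤ hilbertEnvelope n (i + 1) := by
  have hn : (0 : ℝ) < n := by exact_mod_cast (by omega : 0 < n)
  have hss := Real.sq_sqrt (show (0 : ℝ) ≤ 2 by norm_num)
  rw [hilbertEnvelope_succ h]
  refine le_mul_of_one_le_right (hilbertEnvelope_pos n i).le ?_
  set y := √2 * (((i : ℝ) + 1) / n) with hy
  have hy0 : 0 < y := by positivity
  have hy1 : y ≤ 1 := by
    rw [hy, ← mul_div_assoc, div_le_one hn]
    nlinarith [Real.sqrt_nonneg 2]
  have e : ((n : ℝ) / (i + 1)) ^ 2 = 2 / y ^ 2 := by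
    rw [hy, mul_pow, hss]; field_simp
  rw [e]
  have h3 : y ^ 2 ≤ Real.exp (2 * (y - 1)) := by
    rw [two_mul, Real.exp_add, sq]
    have : y ≤ Real.exp (y - 1) := by linarith [Real.add_one_le_exp (y - 1)]
    gcongr
  have h4 : 0 ≤ 2 / y ^ 2 - 1 := by
    rw [sub_nonneg, le_div_iff₀ (by positivity)]; nlinarith
  calc (1 : ℝ) ≤ 2 - y ^ 2 := by nlinarith
    _ = (2 / y ^ 2 - 1) * y ^ 2 := by field_simp
    _ ≤ _ := by gcongr

lemma hilbertEnvelope_succ_le {n i : ℕ} (h : i + 1 < n) (h2 : √2 / 2 * n ≤ (i : ℝ) + 1) :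
    hilbertEnvelope n (i + 1) ≤ hilbertEnvelope n i := by
  have hn : (0 : ℝ) < n := by exact_mod_cast (by omega : 0 < n)
  have hin : (i : ℝ) + 1 ≤ n := by exact_mod_cast h.le
  have hss := Real.sq_sqrt (show (0 : ℝ) ≤ 2 by norm_num)
  have hs0 : 0 < √2 := by positivity
  have hs : √2 ≤ 3 / 2 := by
    rw [Real.sqrt_le_iff]; norm_num
  rw [hilbertEnvelope_succ h]
  refine mul_le_of_le_one_right (hilbertEnvelope_pos n i).le ?_
  set y := √2 * (((i : ℝ) + 1) / n) with hy
  have hy0 : 0 < y := by positivity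
  have hy1 : 1 ≤ y := by
    rw [hy, ← mul_div_assoc, one_le_div hn]
    nlinarith
  have hy2 : y ≤ √2 := by
    rw [hy]
    exact mul_le_of_le_one_right hs0.le ((div_le_one hn).2 hin)
  have e : ((n : ℝ) / (i + 1)) ^ 2 = 2 / y ^ 2 := by
    rw [hy, mul_pow, hss]; field_simp
  rw [e]
  -- After clearing denominators this is `(y - 1) (y² - y - 1) ≤ 0`, valid for `1 ≤ y ≤ (1 + √5) / 2`.
  have h3 : 2 / y ^ 2 - 1 ≤ 1 - 2 * (y - 1) := by
    rw [sub_le_iff_le_add, div_le_iff₀ (by positivity)]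
    have : y ^ 2 - y - 1 ≤ 0 := by nlinarith
    nlinarith [mul_nonneg (sub_nonneg.2 hy1) (neg_nonneg.2 this)]
  have h4 : 1 - 2 * (y - 1) ≤ Real.exp (-(2 * (y - 1))) := by
    linarith [Real.add_one_le_exp (-(2 * (y - 1)))]
  calc _ ≤ Real.exp (-(2 * (y - 1))) * Real.exp (2 * (y - 1)) := by
        gcongr; exact h3.trans h4
    _ = 1 := by rw [← Real.exp_add]; simp

/-- The quotient of the weights by the Gaussian increases up to `n / √2` and decreases afterwards. -/
lemma hilbertEnvelope_le_floor {n i : ℕ} (h : i < n) :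
    hilbertEnvelope n i ≤ hilbertEnvelope n ⌊√2 / 2 * n⌋₊ := by
  obtain ⟨h0, h1⟩ := sqrt_two_div_two_mem
  have hn : (0 : ℝ) < n := by exact_mod_cast (by omega : 0 < n)
  set m := ⌊√2 / 2 * n⌋₊ with hm
  have hm1 : (m : ℝ) ≤ √2 / 2 * n := Nat.floor_le (by positivity)
  have hm2 : √2 / 2 * n < m + 1 := Nat.lt_floor_add_one _
  have hmn : m < n := by
    have : (m : ℝ) < n := by nlinarith
    exact_mod_cast this
  rcases le_total i m with him | him
  · induction him using Nat.decreasingInduction with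
    | self => exact le_rfl
    | of_succ k hk ih =>
      refine (hilbertEnvelope_le_succ (by omega) ?_).trans (ih (by omega))
      have : ((k + 1 : ℕ) : ℝ) ≤ m := by exact_mod_cast hk
      push_cast at this
      linarith
  · induction i, him using Nat.le_induction with
    | base => exact le_rfl
    | succ k hk ih =>
      refine (hilbertEnvelope_succ_le h ?_).trans (ih (by omega))
      have : (m : ℝ) ≤ k := by exact_mod_cast hk
      linarith

lemma eventually_window_nonneg (x : ℝ) :
    ∀ᶠ n : ℕ in atTop, 0 ≤ √2 / 2 * n + x * √n := by
  obtain ⟨h0, h1⟩ := sqrt_two_div_two_mem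
  have h : Tendsto (fun n : ℕ => √(n : ℝ)) atTop atTop :=
    Real.tendsto_sqrt_atTop.comp tendsto_natCast_atTop_atTop
  filter_upwards [h.eventually_ge_atTop (|x| / (√2 / 2))] with n hn
  rw [div_le_iff₀ h0] at hn
  have e := Real.mul_self_sqrt (Nat.cast_nonneg (α := ℝ) n)
  have hp := Real.sqrt_nonneg (n : ℝ)
  have : 0 ≤ (√2 / 2 * √n + x) * √n := by
    refine mul_nonneg ?_ hp
    linarith [neg_abs_le x]
  nlinarith

lemma tendsto_floor_fluctuation (x : ℝ) :
    Tendsto (fun n : ℕ => ((⌊√2 / 2 * n + x * √n⌋₊ : ℝ) - √2 / 2 * n) / √n) atTop (nhds x) := by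
  have h1 : Tendsto (fun n : ℕ => (√(n : ℝ))⁻¹) atTop (nhds 0) :=
    tendsto_inv_atTop_zero.comp (Real.tendsto_sqrt_atTop.comp tendsto_natCast_atTop_atTop)
  have h2 := h1.const_sub x
  rw [sub_zero] at h2
  refine tendsto_of_tendsto_of_tendsto_of_le_of_le' h2 tendsto_const_nhds ?_ ?_
  · filter_upwards [eventually_gt_atTop 0] with n hn
    have hp : 0 < √(n : ℝ) := Real.sqrt_pos.2 (by exact_mod_cast hn)
    rw [le_div_iff₀ hp, sub_mul, inv_mul_cancel₀ hp.ne']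
    linarith [Nat.lt_floor_add_one (√2 / 2 * n + x * √n)]
  · filter_upwards [eventually_gt_atTop 0, eventually_window_nonneg x] with n hn hw
    have hp : 0 < √(n : ℝ) := Real.sqrt_pos.2 (by exact_mod_cast hn)
    rw [div_le_iff₀ hp]
    linarith [Nat.floor_le hw]

/-- Uniform Gaussian bound for the weights; the constant `exp 1` is a convenient non-optimal one. -/
lemma eventually_hilbertWeight_le :
    ∀ᶠ n : ℕ in atTop, ∀ i < n, hilbertWeight n i ≤ Real.exp 1 * (1 + √2) ^ (2 * n) *
      Real.exp (-(√2 * ((i : ℝ) + 1 / 2 - √2 / 2 * n) ^ 2 / n)) := by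
  have hpk := tendsto_hilbertWeight (tendsto_floor_fluctuation 0)
  -- The normalised peak value tends to `1 / (2 π) < 1`.
  have hlt : 1 / (2 * Real.pi) * Real.exp (-(2 * √2 * 0 ^ 2)) < 1 := by
    simp
    have := Real.pi_gt_three
    have : Real.pi⁻¹ ≤ 3⁻¹ := by gcongr
    linarith
  filter_upwards [hpk.eventually_lt_const hlt, eventually_gt_atTop 0] with n hn hn0 i hi
  have hn1 : (1 : ℝ) ≤ n := by exact_mod_cast hn0
  have hE : (0 : ℝ) < (1 + √2) ^ (2 * n) := by positivity
  rw [div_lt_one hE, zero_mul, add_zero] at hn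
  have h1 := hilbertEnvelope_le_floor hi
  rw [Real.exp_neg, ← div_eq_mul_inv, le_div_iff₀ (Real.exp_pos _)]
  refine h1.trans ?_
  rw [hilbertEnvelope, mul_comm]
  set m := ⌊√2 / 2 * n⌋₊ with hm
  have hm1 : (m : ℝ) ≤ √2 / 2 * n := Nat.floor_le (by positivity)
  have hm2 : √2 / 2 * n < m + 1 := Nat.lt_floor_add_one _
  have hs : √2 ≤ 3 / 2 := by
    rw [Real.sqrt_le_iff]; norm_num
  gcongr
  · exact (hilbertWeight_pos _ _).le
  rw [div_le_one (by linarith)]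
  have : ((m : ℝ) + 1 / 2 - √2 / 2 * n) ^ 2 ≤ 1 / 4 := by nlinarith
  calc _ ≤ 3 / 2 * (1 / 4 : ℝ) := by gcongr
    _ ≤ n := by linarith

/-! ### Laplace's method -/

/-- Laplace's method for `∑ w i² ψ n i`. The growth allowed for `ψ` away from the peak is half of the
Gaussian decay of `w i²`, which leaves an integrable majorant. -/
lemma hilbert_laplace (ψ : ℕ → ℕ → ℝ) (L C : ℝ) (hψ0 : ∀ n i, 0 ≤ ψ n i)
    (hψC : ∀ᶠ n : ℕ in atTop, ∀ i < n,
      ψ n i ≤ C * Real.exp (√2 * ((i : ℝ) + 1 / 2 - √2 / 2 * n) ^ 2 / n))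
    (hψL : ∀ u : ℕ → ℕ, Tendsto (fun n : ℕ => (u n : ℝ) / n) atTop (nhds (√2 / 2)) →
      Tendsto (fun n => ψ n (u n)) atTop (nhds L)) :
    Tendsto (fun n : ℕ => (∑ i ∈ Finset.range n, hilbertWeight n i ^ 2 * ψ n i) /
        ((1 + √2) ^ (4 * n) * √n)) atTop
      (nhds (L * (1 / (4 * Real.pi ^ 2) * √(Real.pi / (4 * √2))))) := by
  obtain ⟨h0, h1⟩ := sqrt_two_div_two_mem
  -- `f n` is the step function with value `a n i` at those `x` with
  -- `i ≤ n / √2 + x √n < i + 1`; its integral is the normalised sum.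
  set a : ℕ → ℕ → ℝ := fun n i => hilbertWeight n i ^ 2 * ψ n i / (1 + √2) ^ (4 * n) with ha
  set I : ℕ → ℕ → Set ℝ := fun n i =>
    Set.Ico (((i : ℝ) - √2 / 2 * n) / √n) (((i : ℝ) + 1 - √2 / 2 * n) / √n) with hI
  set f : ℕ → ℝ → ℝ := fun n x => ∑ i ∈ Finset.range n, (I n i).indicator (fun _ => a n i) x with hf
  have hmem : ∀ n i x, 0 < n →
      (x ∈ I n i ↔ (i : ℝ) ≤ √2 / 2 * n + x * √n ∧ √2 / 2 * n + x * √n < i + 1) := by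
    intro n i x hn
    have hp : 0 < √(n : ℝ) := Real.sqrt_pos.2 (by exact_mod_cast hn)
    rw [hI, Set.mem_Ico, div_le_iff₀ hp, lt_div_iff₀ hp]
    constructor <;> rintro ⟨h, h'⟩ <;> constructor <;> linarith
  have hval : ∀ n i x, i < n → x ∈ I n i → f n x = a n i := by
    intro n i x hi hx
    have hn : 0 < n := by omega
    rw [hf]
    simp only
    rw [Finset.sum_eq_single i, Set.indicator_of_mem hx]
    · intro j _ hj
      refine Set.indicator_of_notMem (fun hxj => hj ?_) _
      rw [hmem _ _ _ hn] at hx hxj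
      have e1 : j < i + 1 := by exact_mod_cast hxj.1.trans_lt hx.2
      have e2 : i < j + 1 := by exact_mod_cast hx.1.trans_lt hxj.2
      omega
    · intro h
      exact absurd (Finset.mem_range.2 hi) h
  have hint : ∀ n, 0 < n → ∫ x, f n x = (∑ i ∈ Finset.range n, hilbertWeight n i ^ 2 * ψ n i) /
        ((1 + √2) ^ (4 * n) * √n) := by
    intro n hn
    have hp : 0 < √(n : ℝ) := Real.sqrt_pos.2 (by exact_mod_cast hn)
    rw [hf]
    simp only
    rw [MeasureTheory.integral_finsetSum]
    · rw [Finset.sum_div]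
      refine Finset.sum_congr rfl fun i _ => ?_
      rw [MeasureTheory.integral_indicator_const _ measurableSet_Ico, Real.volume_real_Ico_of_le]
      · rw [smul_eq_mul, ha]
        simp only
        field_simp
        ring
      · gcongr
        linarith
    · intro i _
      refine (MeasureTheory.integrable_indicator_iff measurableSet_Ico).2 ?_
      exact MeasureTheory.integrableOn_const (by simp) (by simp)
  set g : ℝ → ℝ := fun x => L * (1 / (2 * Real.pi) * Real.exp (-(2 * √2 * x ^ 2))) ^ 2 with hg
  have hgint : ∫ x, g x = L * (1 / (4 * Real.pi ^ 2) * √(Real.pi / (4 * √2))) := by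
    rw [← integral_gaussian, ← MeasureTheory.integral_const_mul, ← MeasureTheory.integral_const_mul]
    congr 1
    ext x
    rw [hg]
    simp only
    rw [mul_pow, ← Real.exp_nat_mul]
    have e : ((2 : ℕ) : ℝ) * -(2 * √2 * x ^ 2) = -(4 * √2) * x ^ 2 := by push_cast; ring
    rw [e]
    field_simp
    ring
  rw [← hgint]
  have hC0 : 0 ≤ C := by
    obtain ⟨n, hn, hn0⟩ := (hψC.and (eventually_gt_atTop 0)).exists
    have := (hψ0 n 0).trans (hn 0 hn0)
    exact nonneg_of_mul_nonneg_left this (Real.exp_pos _)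
  have hkey : Tendsto (fun n => ∫ x, f n x) atTop (nhds (∫ x, g x)) := by
    refine MeasureTheory.tendsto_integral_filter_of_dominated_convergence
      (fun x => Real.exp 1 ^ 2 * C * Real.exp (√2 / 4) * Real.exp (-(√2 / 2) * x ^ 2)) ?_ ?_ ?_ ?_
    · refine Eventually.of_forall fun n => Measurable.aestronglyMeasurable ?_
      exact Finset.measurable_fun_sum _ fun i _ => measurable_const.indicator measurableSet_Ico
    · filter_upwards [hψC, eventually_hilbertWeight_le, eventually_gt_atTop 0] with n hC hw hn
      refine Eventually.of_forall fun x => ?_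
      have hn1 : (1 : ℝ) ≤ n := by exact_mod_cast hn
      by_cases hx : ∃ i, i < n ∧ x ∈ I n i
      · obtain ⟨i, hi, hx⟩ := hx
        rw [hval n i x hi hx]
        rw [hmem _ _ _ hn] at hx
        have hapos : 0 ≤ a n i := by
          have := hψ0 n i
          rw [ha]; positivity
        rw [Real.norm_of_nonneg hapos]
        set d := (i : ℝ) + 1 / 2 - √2 / 2 * n with hd
        have hw' := hw i hi
        have hC' := hC i hi
        have hww : hilbertWeight n i ^ 2 ≤ Real.exp 1 ^ 2 * (1 + √2) ^ (4 * n) *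
            Real.exp (-(√2 * d ^ 2 / n)) ^ 2 := by
          calc _ ≤ (Real.exp 1 * (1 + √2) ^ (2 * n) * Real.exp (-(√2 * d ^ 2 / n))) ^ 2 := by
                have := (hilbertWeight_pos n i).le
                gcongr
            _ = _ := by ring
        have h3 : a n i ≤ Real.exp 1 ^ 2 * C * Real.exp (-(√2 * d ^ 2 / n)) := by
          rw [ha]
          simp only
          rw [div_le_iff₀ (by positivity)]
          calc _ ≤ (Real.exp 1 ^ 2 * (1 + √2) ^ (4 * n) * Real.exp (-(√2 * d ^ 2 / n)) ^ 2) *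
                (C * Real.exp (√2 * d ^ 2 / n)) := by
                  have := hψ0 n i
                  gcongr
            _ = Real.exp 1 ^ 2 * C * Real.exp (-(√2 * d ^ 2 / n)) * (1 + √2) ^ (4 * n) *
                (Real.exp (-(√2 * d ^ 2 / n)) * Real.exp (√2 * d ^ 2 / n)) := by ring
            _ = _ := by rw [← Real.exp_add]; simp
        refine h3.trans ?_
        rw [mul_assoc (Real.exp 1 ^ 2 * C), ← Real.exp_add]
        -- On the step of index `i`, `x √n` is within `1/2` of `d`.
        have h4 : x ^ 2 / 2 - 1 / 4 ≤ d ^ 2 / n := by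
          rw [le_div_iff₀ (by linarith)]
          have e := Real.sq_sqrt (show (0 : ℝ) ≤ n by linarith)
          have h5 : (x * √n) ^ 2 ≤ 2 * d ^ 2 + 1 / 2 := by
            have : (d - x * √n) ^ 2 ≤ 1 / 4 := by nlinarith
            nlinarith [sq_nonneg (2 * d - x * √n)]
          rw [mul_pow, e] at h5
          nlinarith
        gcongr
        have := mul_le_mul_of_nonneg_left h4 (Real.sqrt_nonneg 2)
        rw [mul_div_assoc]
        linarith
      · have : f n x = 0 := by
          refine Finset.sum_eq_zero fun i hi => Set.indicator_of_notMem (fun h => hx ?_) _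
          exact ⟨i, Finset.mem_range.1 hi, h⟩
        rw [this, norm_zero]
        positivity
    · exact (integrable_exp_neg_mul_sq (by positivity)).const_mul _
    · refine Eventually.of_forall fun x => ?_
      have hfl := tendsto_floor_fluctuation x
      have hdiv := tendsto_div_of_fluctuation hfl
      have l1 := (hψL _ hdiv).mul ((tendsto_hilbertWeight hfl).pow 2)
      refine l1.congr' ?_
      filter_upwards [eventually_gt_atTop 0, eventually_window_nonneg x,
        hdiv.eventually_lt_const h1] with n hn hw hlt
      have hn' : (0 : ℝ) < n := by exact_mod_cast hn
      rw [div_lt_one hn'] at hlt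
      rw [hval n ⌊√2 / 2 * n + x * √n⌋₊ x (by exact_mod_cast hlt)]
      · rw [ha]
        simp only
        rw [div_pow, ← pow_mul, show 2 * n * 2 = 4 * n by ring]
        ring
      · rw [hmem _ _ _ hn]
        exact ⟨Nat.floor_le hw, Nat.lt_floor_add_one _⟩
  refine hkey.congr' ?_
  filter_upwards [eventually_gt_atTop 0] with n hn
  exact hint n hn

/-! ### The three sums and the conclusion -/

/-- The constant `κ` in `∑ w i² ~ κ (1 + √2)^(4 n) √n`: the integral of the squared limiting profile
`((2 π)⁻¹ exp (-2 √2 x²))²`. -/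
noncomputable def hilbertKappa : ℝ := 1 / (4 * Real.pi ^ 2) * √(Real.pi / (4 * √2))

lemma hilbertKappa_pos : 0 < hilbertKappa := by
  have := Real.pi_pos
  have : 0 < √(Real.pi / (4 * √2)) := Real.sqrt_pos.2 (by positivity)
  unfold hilbertKappa
  positivity

lemma hilbertKappa_mul :
    (2 : ℝ) ^ ((15 : ℝ) / 4) * Real.pi ^ ((3 : ℝ) / 2) * hilbertKappa = √2 := by
  have hpi := Real.pi_pos
  have hk := hilbertKappa_pos
  have hss := Real.sq_sqrt (show (0 : ℝ) ≤ 2 by norm_num)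
  refine (pow_left_inj₀ (by positivity) (by positivity) (show 4 ≠ 0 by norm_num)).1 ?_
  have e1 : ((2 : ℝ) ^ ((15 : ℝ) / 4)) ^ 4 = 2 ^ 15 := by
    rw [← Real.rpow_natCast, ← Real.rpow_mul (by norm_num), ← Real.rpow_natCast]
    norm_num
  have e2 : (Real.pi ^ ((3 : ℝ) / 2)) ^ 4 = Real.pi ^ 6 := by
    rw [← Real.rpow_natCast, ← Real.rpow_mul hpi.le, ← Real.rpow_natCast]
    norm_num
  have e3 : √(Real.pi / (4 * √2)) ^ 4 = Real.pi ^ 2 / 32 := by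
    rw [show √(Real.pi / (4 * √2)) ^ 4 = (√(Real.pi / (4 * √2)) ^ 2) ^ 2 by ring,
      Real.sq_sqrt (by positivity), div_pow, mul_pow, hss]
    norm_num
  have e4 : √2 ^ 4 = 4 := by rw [show √2 ^ 4 = (√2 ^ 2) ^ 2 by ring, hss]; norm_num
  rw [hilbertKappa, mul_pow, mul_pow, mul_pow, e1, e2, e3, e4]
  field_simp
  norm_num

lemma tendsto_hilbert_sum :
    Tendsto (fun n : ℕ => (∑ i ∈ Finset.range n, hilbertWeight n i ^ 2) /
        ((1 + √2) ^ (4 * n) * √n)) atTop (nhds hilbertKappa) := by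
  have h := hilbert_laplace (fun _ _ => 1) 1 1 (fun _ _ => zero_le_one)
    (Eventually.of_forall fun n i _ => by
      rw [one_mul]; exact Real.one_le_exp (by positivity))
    (fun u _ => tendsto_const_nhds)
  simpa [hilbertKappa] using h

lemma tendsto_hilbert_moment :
    Tendsto (fun n : ℕ => (∑ i ∈ Finset.range n, hilbertWeight n i ^ 2 * ((i : ℝ) / n)) /
        ((1 + √2) ^ (4 * n) * √n)) atTop (nhds (√2 / 2 * hilbertKappa)) := by
  refine hilbert_laplace (fun n i => (i : ℝ) / n) (√2 / 2) 1 (fun _ _ => by positivity)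
    (Eventually.of_forall fun n i hi => ?_) (fun u hu => hu)
  have hn : (0 : ℝ) < n := by exact_mod_cast (by omega : 0 < n)
  rw [one_mul]
  refine le_trans ?_ (Real.one_le_exp (by positivity))
  rw [div_le_one hn]
  exact_mod_cast hi.le

lemma tendsto_hilbert_trace :
    Tendsto (fun n : ℕ =>
        (∑ i ∈ Finset.range n, hilbertWeight n i ^ 2 * ((n : ℝ) / (2 * i + 1))) /
        ((1 + √2) ^ (4 * n) * √n)) atTop (nhds ((√2)⁻¹ * hilbertKappa)) := by
  refine hilbert_laplace (fun n i => (n : ℝ) / (2 * i + 1)) (√2)⁻¹ 5 (fun _ _ => by positivity)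
    (Eventually.of_forall fun n i hi => ?_) (fun u hu => ?_)
  · have hn : (0 : ℝ) < n := by exact_mod_cast (by omega : 0 < n)
    have hi0 : (0 : ℝ) ≤ i := Nat.cast_nonneg i
    rw [div_le_iff₀ (by positivity)]
    -- The quotient is at most `5` unless `i < n / 10`, where the exponential exceeds `9 n / 25`.
    rcases le_total ((n : ℝ) / 5) (2 * i + 1) with h | h
    · have : (1 : ℝ) ≤ Real.exp (√2 * ((i : ℝ) + 1 / 2 - √2 / 2 * n) ^ 2 / n) :=
        Real.one_le_exp (by positivity)
      nlinarith
    · have hs : 7 / 5 ≤ √2 := Real.le_sqrt_of_sq_le (by norm_num)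
      have hd : (3 / 5 * (n : ℝ)) ^ 2 ≤ ((i : ℝ) + 1 / 2 - √2 / 2 * n) ^ 2 := by
        rw [← neg_sq ((i : ℝ) + 1 / 2 - √2 / 2 * n)]
        gcongr
        nlinarith
      have h2 : (9 / 25 : ℝ) * n ≤ √2 * ((i : ℝ) + 1 / 2 - √2 / 2 * n) ^ 2 / n := by
        rw [le_div_iff₀ hn]
        nlinarith [sq_nonneg ((i : ℝ) + 1 / 2 - √2 / 2 * n)]
      have h3 := Real.add_one_le_exp (√2 * ((i : ℝ) + 1 / 2 - √2 / 2 * n) ^ 2 / n)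
      have h4 : (n : ℝ) ≤ 5 * Real.exp (√2 * ((i : ℝ) + 1 / 2 - √2 / 2 * n) ^ 2 / n) := by
        linarith
      refine h4.trans (le_mul_of_one_le_right (by positivity) (by linarith))
  · have h1 : Tendsto (fun n : ℕ => ((n : ℝ))⁻¹) atTop (nhds 0) :=
      tendsto_inv_atTop_zero.comp tendsto_natCast_atTop_atTop
    have h2 := ((hu.const_mul 2).add h1).inv₀ (by positivity)
    rw [show (2 * (√2 / 2) + 0)⁻¹ = (√2)⁻¹ by congr 1; ring] at h2
    refine h2.congr' ?_
    filter_upwards [eventually_gt_atTop 0] with n hn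
    have hn' : (0 : ℝ) < n := by exact_mod_cast hn
    field_simp

/-- Szegő's asymptotic for the smallest eigenvalue of the `(N+1)×(N+1)` Hilbert matrix:
`λ_N ≃ 2^(15/4) π^(3/2) N^(1/2) (√2 - 1)^(4N+4)`. -/
theorem smallest_eigenvalue_hilbert_matrix_asymptotic
    (H : (N : ℕ) → Matrix (Fin (N + 1)) (Fin (N + 1)) ℝ)
    (hH : ∀ N (m n : Fin (N + 1)), H N m n = 1 / ((m : ℕ) + (n : ℕ) + 1 : ℝ))
    (lam : ℕ → ℝ)
    (hmem : ∀ N, lam N ∈ spectrum ℝ (H N))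
    (hmin : ∀ N, ∀ μ ∈ spectrum ℝ (H N), lam N ≤ μ) :
    Tendsto (fun N : ℕ => lam N /
        (2 ^ ((15 : ℝ) / 4) * Real.pi ^ ((3 : ℝ) / 2) *
          (N : ℝ) ^ ((1 : ℝ) / 2) * (Real.sqrt 2 - 1) ^ (4 * N + 4)))
      atTop (nhds 1) := by
  have hss := Real.sq_sqrt (show (0 : ℝ) ≤ 2 by norm_num)
  have hκ := hilbertKappa_pos
  set E : ℕ → ℝ := fun n => (1 + √2) ^ (4 * n) * √n with hE
  set S : ℕ → ℝ := fun n => ∑ i ∈ Finset.range n, hilbertWeight n i ^ 2 with hS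
  set M : ℕ → ℝ := fun n => ∑ i ∈ Finset.range n, hilbertWeight n i ^ 2 * (i : ℝ) with hM
  set T : ℕ → ℝ := fun n => ∑ i ∈ Finset.range n, hilbertWeight n i ^ 2 / (2 * (i : ℝ) + 1) with hT
  have tS : Tendsto (fun n => S n / E n) atTop (nhds hilbertKappa) := tendsto_hilbert_sum
  have tM : Tendsto (fun n => M n / n / E n) atTop (nhds (√2 / 2 * hilbertKappa)) := by
    refine tendsto_hilbert_moment.congr fun n => ?_
    rw [hM]
    simp only [Finset.sum_div]
    exact Finset.sum_congr rfl fun i _ => by ring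
  have tT : Tendsto (fun n => n * T n / E n) atTop (nhds ((√2)⁻¹ * hilbertKappa)) := by
    refine tendsto_hilbert_trace.congr fun n => ?_
    rw [hT]
    simp only [Finset.mul_sum]
    congr 1
    exact Finset.sum_congr rfl fun i _ => by ring
  have tn : Tendsto (fun n : ℕ => ((n : ℝ))⁻¹) atTop (nhds 0) :=
    tendsto_inv_atTop_zero.comp tendsto_natCast_atTop_atTop
  have tlow : Tendsto (fun n => (n * T n / E n)⁻¹) atTop (nhds (√2 / hilbertKappa)) := by
    have := tT.inv₀ (by positivity)
    rwa [mul_inv, inv_inv, ← div_eq_mul_inv] at this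
  have tup : Tendsto (fun n => (2 * (M n / n / E n) + S n / E n * (n : ℝ)⁻¹) / (S n / E n) ^ 2)
      atTop (nhds (√2 / hilbertKappa)) := by
    have := ((tM.const_mul 2).add (tS.mul tn)).div (tS.pow 2) (by positivity)
    have e : (2 * (√2 / 2 * hilbertKappa) + hilbertKappa * 0) / hilbertKappa ^ 2
        = √2 / hilbertKappa := by field_simp; ring
    rwa [e] at this
  have hEpos : ∀ n : ℕ, 0 < n → 0 < E n := by
    intro n hn
    have : 0 < √(n : ℝ) := Real.sqrt_pos.2 (by exact_mod_cast hn)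
    positivity
  have hSpos : ∀ n : ℕ, 0 < n → 0 < S n := fun n hn =>
    Finset.sum_pos (fun i _ => pow_pos (hilbertWeight_pos n i) 2) (by simpa using hn.ne')
  have hTpos : ∀ n : ℕ, 0 < n → 0 < T n := fun n hn =>
    Finset.sum_pos (fun i _ => div_pos (pow_pos (hilbertWeight_pos n i) 2) (by positivity))
      (by simpa using hn.ne')
  have hr : Tendsto (fun N : ℕ => lam N * E (N + 1) / (N + 1 : ℕ)) atTop
      (nhds (√2 / hilbertKappa)) := by
    refine tendsto_of_tendsto_of_tendsto_of_le_of_le (tlow.comp (tendsto_add_atTop_nat 1))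
      (tup.comp (tendsto_add_atTop_nat 1)) (fun N => ?_) (fun N => ?_)
    all_goals
      obtain ⟨b1, b2⟩ := hilbert_least_eigenvalue_bounds (H N) (hH N) (lam N) (hmem N) (hmin N)
      have hn : (0 : ℝ) < (N + 1 : ℕ) := by positivity
      have hE1 := hEpos (N + 1) N.succ_pos
      have hS1 := hSpos (N + 1) N.succ_pos
      have hT1 := hTpos (N + 1) N.succ_pos
      simp only [Function.comp_apply]
    · change 1 ≤ lam N * T (N + 1) at b1
      generalize T (N + 1) = t at *
      generalize E (N + 1) = e at *
      rw [inv_div, div_le_div_iff₀ (by positivity) hn]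
      calc _ ≤ (e * (N + 1 : ℕ)) * (lam N * t) := le_mul_of_one_le_right (by positivity) b1
        _ = _ := by ring
    · change lam N * S (N + 1) ^ 2 ≤ 2 * M (N + 1) + S (N + 1) at b2
      generalize M (N + 1) = m at *
      generalize S (N + 1) = s at *
      generalize E (N + 1) = e at *
      generalize ((N + 1 : ℕ) : ℝ) = n at *
      have e1 : (2 * (m / n / e) + s / e * n⁻¹) / (s / e) ^ 2 = (2 * m + s) / s ^ 2 * (e / n) := by
        field_simp
      rw [e1, mul_div_assoc]
      gcongr
      rw [le_div_iff₀ (by positivity)]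
      exact b2
  have hq : Tendsto (fun N : ℕ => √(1 + (N : ℝ)⁻¹)) atTop (nhds 1) := by
    have := (tn.const_add 1).sqrt
    simpa using this
  set c : ℝ := 2 ^ ((15 : ℝ) / 4) * Real.pi ^ ((3 : ℝ) / 2) with hc
  have hc0 : 0 < c := by have := Real.pi_pos; positivity
  have hcκ : c * hilbertKappa = √2 := hilbertKappa_mul
  have hfin := (hr.mul hq).div_const c
  have e1 : √2 / hilbertKappa * 1 / c = 1 := by
    rw [← hcκ]; field_simp
  rw [e1] at hfin
  refine hfin.congr' ?_
  filter_upwards [eventually_gt_atTop 0] with N hN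
  have hN' : (0 : ℝ) < N := by exact_mod_cast hN
  have hprod : (1 + √2) ^ (4 * (N + 1)) * (√2 - 1) ^ (4 * N + 4) = 1 := by
    rw [show 4 * N + 4 = 4 * (N + 1) by ring, ← mul_pow,
      show (1 + √2) * (√2 - 1) = 1 by nlinarith, one_pow]
  have hδ : (√2 - 1) ^ (4 * N + 4) ≠ 0 := right_ne_zero_of_mul_eq_one hprod
  rw [← Real.sqrt_eq_rpow, hE]
  simp only
  have e2 : 1 + (N : ℝ)⁻¹ = ((N + 1 : ℕ) : ℝ) / N := by push_cast; field_simp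
  rw [e2, Real.sqrt_div (by positivity), eq_inv_of_mul_eq_one_left hprod]
  have hm : (0 : ℝ) < (N + 1 : ℕ) := by positivity
  generalize ((N + 1 : ℕ) : ℝ) = m at *
  have q1 := Real.sq_sqrt hm.le
  have p1 : 0 < √m := Real.sqrt_pos.2 hm
  have p2 : 0 < √(N : ℝ) := Real.sqrt_pos.2 hN'
  generalize (√2 - 1) ^ (4 * N + 4) = δ at *
  field_simp
  rw [q1]
end
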